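/- Let R be a local Cohen–Macaulay ring with infinite residue field, and let I be an R-ideal of height g and analytic spread ℓ which satisfies condition G_ℓ and is universally weakly (ℓ−1)-residually S₂. Then the following are equivalent: (a) (J : I)·I ⊆ core(I) for some minimal reduction J of I; (b) (J : I)·J = (J : I)·I = core(I) for every minimal reduction J of I; (c) J : I does not depend on the minimal reduction J of I. Moreover, if these hold then γ(I) ≤ ℓ · max({ type((R/(J : I))_𝔭) : 𝔭 ∈ Q(I) } ∪ {0}) + 1, where J is any minimal reduction of I. -/

import Mathlib

open IsLocalRing

universe u v

namespace CPU

section Defs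

variable {R : Type u} [CommRing R]

/-- The minimal number of generators of a submodule, as an extended natural number. -/
noncomputable def muE {M : Type v} [AddCommGroup M] [Module R M] (N : Submodule R M) : ℕ∞ :=
  sInf {n : ℕ∞ | ∃ s : Finset M, (s.card : ℕ∞) = n ∧ Submodule.span R (s : Set M) = N}

/-- The Krull dimension of a ring, valued in `WithBot ℕ∞`. -/
noncomputable def rDim (S : Type v) [CommRing S] : WithBot ℕ∞ :=
  ringKrullDim S

/-- `J` is a reduction of `I`. -/
def IsReduction (J I : Ideal R) : Prop :=
  J ≤ I ∧ ∃ r : ℕ, I ^ (r + 1) = J * I ^ r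

/-- `J` is a minimal reduction of `I`. -/
def IsMinimalReduction (J I : Ideal R) : Prop :=
  IsReduction J I ∧ ∀ J' : Ideal R, IsReduction J' I → J' ≤ J → J' = J

/-- The core of an ideal: the intersection of all of its minimal reductions. -/
noncomputable def core (I : Ideal R) : Ideal R :=
  sInf {J : Ideal R | IsMinimalReduction J I}

/-- The reduction number of `I`. -/
noncomputable def reductionNumber (I : Ideal R) : ℕ∞ :=
  sInf {n : ℕ∞ | ∃ r : ℕ, (r : ℕ∞) = n ∧ ∃ J : Ideal R,
    IsMinimalReduction J I ∧ I ^ (r + 1) = J * I ^ r}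

/-- `γ(I)`: the least number of minimal reductions whose intersection is the core. -/
noncomputable def gamma (I : Ideal R) : ℕ∞ :=
  sInf {n : ℕ∞ | ∃ t : ℕ, (t : ℕ∞) = n ∧ ∃ Js : Fin t → Ideal R,
    (∀ i, IsMinimalReduction (Js i) I) ∧ core I = ⨅ i, Js i}

/-- The height of an ideal. -/
noncomputable def ht (I : Ideal R) : WithBot ℕ∞ :=
  ⨅ (p : PrimeSpectrum R) (_ : I ≤ p.asIdeal),
    rDim (Localization.AtPrime p.asIdeal)

/-- The Krull dimension of the special fiber ring of `I`,
i.e. the analytic spread of `I`. -/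
noncomputable def fiberDim [IsLocalRing R] (I : Ideal R) : WithBot ℕ∞ :=
  rDim (↥(reesAlgebra I) ⧸
    (Ideal.map (algebraMap R ↥(reesAlgebra I)) (maximalIdeal R)))

/-- The condition `G_s`. -/
def Gcond (I : Ideal R) (s : ℕ) : Prop :=
  ∀ p : PrimeSpectrum R, I ≤ p.asIdeal →
    rDim (Localization.AtPrime p.asIdeal) < (s : WithBot ℕ∞) →
    (muE (Ideal.map (algebraMap R (Localization.AtPrime p.asIdeal)) I) : WithBot ℕ∞) ≤
      rDim (Localization.AtPrime p.asIdeal)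

/-- Depth of a module over a local ring, via lengths of regular sequences in the
maximal ideal. -/
noncomputable def mDepth (R : Type u) [CommRing R] [IsLocalRing R]
    (M : Type v) [AddCommGroup M] [Module R M] : ℕ∞ :=
  sSup {n : ℕ∞ | ∃ rs : List R, (∀ x ∈ rs, x ∈ maximalIdeal R) ∧
    RingTheory.Sequence.IsRegular M rs ∧ (rs.length : ℕ∞) = n}

/-- Depth of the quotient `R/K` of a local ring `R`. -/
noncomputable def qDepth (R : Type u) [CommRing R] [IsLocalRing R] (K : Ideal R) : ℕ∞ :=
  mDepth R (R ⧸ K)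

/-- The socle of `R/K`, for `R` local. -/
noncomputable def socle (R : Type u) [CommRing R] [IsLocalRing R] (K : Ideal R) :
    Ideal (R ⧸ K) :=
  Submodule.colon (⊥ : Ideal (R ⧸ K)) (Ideal.map (Ideal.Quotient.mk K) (maximalIdeal R))

/-- The Cohen–Macaulay type of the quotient `R/K` of a local ring `R`. -/
noncomputable def qType (R : Type u) [CommRing R] [IsLocalRing R] (K : Ideal R) : ℕ∞ :=
  sInf {n : ℕ∞ | ∃ rs : List R, (∀ x ∈ rs, x ∈ maximalIdeal R) ∧
    RingTheory.Sequence.IsRegular (R ⧸ K) rs ∧ (rs.length : ℕ∞) = qDepth R K ∧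
    muE (socle R (K ⊔ Ideal.ofList rs)) = n}

/-- Cohen–Macaulayness for a quotient `R/K` of a local ring `R`. -/
def IsCMQuot (R : Type u) [CommRing R] [IsLocalRing R] (K : Ideal R) : Prop :=
  rDim (R ⧸ K) = (qDepth R K : WithBot ℕ∞)

/-- A Cohen–Macaulay local ring: depth equals Krull dimension. -/
def IsCMLocalRing (R : Type u) [CommRing R] [IsLocalRing R] : Prop :=
  rDim R = (qDepth R (⊥ : Ideal R) : WithBot ℕ∞)

/-- A Gorenstein local ring: Cohen–Macaulay of type one. -/
def IsGorensteinLocalRing (R : Type u) [CommRing R] [IsLocalRing R] : Prop :=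
  IsCMLocalRing R ∧ qType R (⊥ : Ideal R) = 1

/-- Gorensteinness of the quotient ring `R/K` of a local ring. -/
def IsGorQuot (R : Type u) [CommRing R] [IsLocalRing R] (K : Ideal R) : Prop :=
  IsCMQuot R K ∧ qType R K = 1

/-- A regular local ring: the maximal ideal is generated by `dim R` elements. -/
def IsRegularLocal (R : Type u) [CommRing R] [IsLocalRing R] : Prop :=
  IsNoetherianRing R ∧ (muE (maximalIdeal R) : WithBot ℕ∞) = rDim R

/-- Serre's condition `S₂` for the quotient ring `R/K`. -/
def QuotS2 (K : Ideal R) : Prop :=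
  ∀ (q : Ideal R) (hq : q.IsPrime), K ≤ q →
    letI := hq
    min 2 (rDim ((Localization.AtPrime q) ⧸
        (Ideal.map (algebraMap R (Localization.AtPrime q)) K)))
      ≤ (qDepth (Localization.AtPrime q)
          (Ideal.map (algebraMap R (Localization.AtPrime q)) K) : WithBot ℕ∞)

/-- `K` is an `s`-residual intersection of `I`. -/
def IsResidualIntersection (I K : Ideal R) (s : ℕ) : Prop :=
  K ≠ ⊤ ∧ ht I ≤ (s : WithBot ℕ∞) ∧ (s : WithBot ℕ∞) ≤ ht K ∧
    ∃ a : Ideal R, a ≤ I ∧ (∃ f : Finset R, f.card ≤ s ∧ Ideal.span (f : Set R) = a) ∧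
      K = Submodule.colon a I

/-- `K` is a geometric `s`-residual intersection of `I`. -/
def IsGeometricRI (I K : Ideal R) (s : ℕ) : Prop :=
  IsResidualIntersection I K s ∧ (s : WithBot ℕ∞) + 1 ≤ ht (I ⊔ K)

/-- `I` is weakly `s`-residually `S₂`. -/
def WeaklyResS2 (I : Ideal R) (s : ℕ) : Prop :=
  ∀ i ≤ s, ∀ K : Ideal R, IsGeometricRI I K i → QuotS2 K

/-- The condition `AN_s` for `I`. -/
def ANcond [IsLocalRing R] (I : Ideal R) (s : ℕ) : Prop :=
  ∀ i ≤ s, ∀ K : Ideal R, IsResidualIntersection I K i → IsCMQuot R K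

/-- The condition `AN_s⁻` for `I`. -/
def ANminus [IsLocalRing R] (I : Ideal R) (s : ℕ) : Prop :=
  ∀ i ≤ s, ∀ K : Ideal R, IsGeometricRI I K i → IsCMQuot R K

/-- `I` is universally weakly `s`-residually `S₂`: for every finite set of
variables, the extension of `I` to `R(x₁, …, x_n)` is weakly `s`-residually `S₂`. -/
def UnivWeaklyResS2 [IsLocalRing R] (I : Ideal R) (s : ℕ) : Prop :=
  ∀ (n : ℕ)
    (hP : (Ideal.map (MvPolynomial.C (σ := Fin n)) (maximalIdeal R)).IsPrime),
    letI := hP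
    WeaklyResS2 (Ideal.map
      ((algebraMap (MvPolynomial (Fin n) R)
        (Localization.AtPrime
          (Ideal.map (MvPolynomial.C (σ := Fin n)) (maximalIdeal R)))).comp
        (MvPolynomial.C)) I) s

/-- The `j`-th Fitting ideal of (the module) `I`. -/
noncomputable def fittingIdeal (I : Ideal R) (j : ℕ) : Ideal R :=
  ⨆ (n : ℕ) (π : (Fin n → R) →ₗ[R] R) (_ : LinearMap.range π = I),
    Ideal.span {d : R | ∃ (v : Fin (n - j) → (Fin n → R)) (r : Fin (n - j) → Fin n),
      (∀ k, π (v k) = 0) ∧ d = Matrix.det (Matrix.of fun i k => v k (r i))}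

/-- The set `Q(I)` of primes containing `Fitt_ℓ(I)` at which `R` has dimension `ℓ`
and `I` has analytic spread `ℓ`. -/
def QSet [IsLocalRing R] (I : Ideal R) (l : ℕ) : Set (PrimeSpectrum R) :=
  {p | fittingIdeal I l ≤ p.asIdeal ∧
    rDim (Localization.AtPrime p.asIdeal) = (l : WithBot ℕ∞) ∧
    fiberDim (Ideal.map (algebraMap R (Localization.AtPrime p.asIdeal)) I)
      = (l : WithBot ℕ∞)}

/-- An ideal is integrally closed if it admits no larger ideal of which it is a
reduction. -/
def IsIntClosedIdeal (I : Ideal R) : Prop :=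
  ∀ J : Ideal R, IsReduction I J → J = I

/-- A normal ideal: all powers are integrally closed. -/
def IsNormalIdeal (I : Ideal R) : Prop :=
  ∀ j : ℕ, IsIntClosedIdeal (I ^ j)

/-- `φ` is a presentation matrix of the ideal `I` (with `n = μ(I)` rows). -/
def Presents {n m : ℕ} (φ : Matrix (Fin n) (Fin m) R) (I : Ideal R) : Prop :=
  muE I = (n : ℕ∞) ∧ ∃ π : (Fin n → R) →ₗ[R] R, LinearMap.range π = I ∧
    LinearMap.range (Matrix.toLin' φ) = LinearMap.ker π

/-- The ideal of `t × t` minors of a matrix. -/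
noncomputable def minorsIdeal {n m : ℕ} (t : ℕ) (φ : Matrix (Fin n) (Fin m) R) : Ideal R :=
  Ideal.span {d : R | ∃ (r : Fin t → Fin n) (c : Fin t → Fin m),
    d = (φ.submatrix r c).det}

/-- The grade of an ideal: the supremum of lengths of regular sequences contained
in it. -/
noncomputable def grade (I : Ideal R) : ℕ∞ :=
  sSup {n : ℕ∞ | ∃ rs : List R, (∀ x ∈ rs, x ∈ I) ∧
    RingTheory.Sequence.IsRegular R rs ∧ (rs.length : ℕ∞) = n}

end Defs

/-- `M` has projective dimension at most `n` over `R`. -/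
def ProjDimLE (R : Type u) [CommRing R] :
    (n : ℕ) → (M : Type u) → [AddCommGroup M] → [Module R M] → Prop
  | 0, M, _, _ => Module.Projective R M
  | n + 1, M, _, _ => ∃ (k : ℕ) (f : (Fin k → R) →ₗ[R] M), Function.Surjective f ∧
      ProjDimLE R n ↥(LinearMap.ker f)

section Defs2

variable {R : Type u} [CommRing R]

/-- `M` has projective dimension exactly `n` over `R`. -/
def ProjDimEq (R : Type u) [CommRing R] (M : Type u) [AddCommGroup M] [Module R M]
    (n : ℕ) : Prop :=
  ProjDimLE R n M ∧ ∀ m : ℕ, ProjDimLE R m M → n ≤ m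

/-- A perfect ideal: the projective dimension of `R/I` equals the grade of `I`. -/
def IsPerfectIdeal (I : Ideal R) : Prop :=
  ∃ g : ℕ, grade I = (g : ℕ∞) ∧ ProjDimEq R (R ⧸ I) g

/-- The multiplicative set which is the complement of the union of the associated
primes of `R/H`. -/
def assComplement (H : Ideal R) : Submonoid R where
  carrier := {r : R | ∀ p ∈ associatedPrimes R (R ⧸ H), r ∉ p}
  one_mem' := fun p hp => (Ideal.ne_top_iff_one p).mp hp.1.ne_top
  mul_mem' := fun {a b} ha hb p hp hab =>
    (hp.1.mem_or_mem hab).elim (ha p hp) (hb p hp)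

/-- The `j`-th symbolic power of `H`. -/
noncomputable def symbolicPower (H : Ideal R) (j : ℕ) : Ideal R :=
  Ideal.comap (algebraMap R (Localization (assComplement H)))
    (Ideal.map (algebraMap R (Localization (assComplement H))) (H ^ j))

/-- Serre's condition `S₂` for a module. -/
def ModuleS2 (S : Type u) [CommRing S] (M : Type v) [AddCommGroup M] [Module S M] : Prop :=
  ∀ (q : Ideal S) (hq : q.IsPrime),
    letI := hq
    min 2 (rDim ((Localization.AtPrime q) ⧸
        (Module.annihilator (Localization.AtPrime q) (LocalizedModule q.primeCompl M))))
      ≤ (mDepth (Localization.AtPrime q) (LocalizedModule q.primeCompl M) : WithBot ℕ∞)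

/-- `M` is a maximal Cohen–Macaulay `S`-module. -/
def IsMCM (S : Type u) [CommRing S] (M : Type v) [AddCommGroup M] [Module S M] : Prop :=
  ∀ (q : Ideal S) (hq : q.IsMaximal),
    letI := hq.isPrime
    (mDepth (Localization.AtPrime q) (LocalizedModule q.primeCompl M) : WithBot ℕ∞) =
      rDim (Localization.AtPrime q)

end Defs2

/-!
A minimal reduction of `I` is generated by `l` elements which can be taken so general that any
`l - 1` of them, say those of a list `L`, define a residual intersection `H = (L) : I`. The
Cohen–Macaulay property, `G_l` and `S₂` make `H` unmixed: no associated prime of `H` contains `I`,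
and `H ∩ I = (L)`. If `(L, a)` is a reduction, then so is `(L, a + u y)` for `y ∈ I` and units `u`
with all but finitely many residues.

The pencil of the `a + u y` separates elements: if `c y` is not in `(L, a)`, then `c a` lies in
`(L, a + u y)` for only finitely many residues of `u`. Otherwise `c` times a product of many members
of the pencil could be computed in two ways, using `I ^ (r + 1) = (L, a) I ^ r`, and the product,
being regular modulo `H`, could be cancelled. Hence an element `c a + b` of the core with
`b ∈ (L)` has `c ∈ (L, a) : I`. Applied to each generator of `J` this gives `core(I) ⊆ (J : I) J`.
Applied while the generators of `J` are exchanged one by one for those of another minimal reduction,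
it shows that `J : I` does not change as long as `(J : I) I ⊆ core(I)`.

All associated primes of `J : I` lie in `Q(I)`, so locally at them `R / (J : I)` is Artinian and its
type is the number of generators of its socle. Among the `c` with `c a ∈ (L, a + u y)` for the
members chosen so far, a further general member of a suitable pencil cuts down the socle at all
associated primes simultaneously. Thus for each of the `l` generators of `J` as many reductions as
the largest of the types are enough, and these together with `J` cut out the core.
-/

section Saturation

variable {R : Type u} [CommRing R]

/-- The contraction to `R` of the extension of `N` to the localization at `q`. It is meant for
prime `q`, when the multiplicative set generated by the complement of `q` is the complement itself;
writing it this way keeps primality out of the definition. -/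
noncomputable def saturationAt (q N : Ideal R) : Ideal R :=
  (N.map (algebraMap R (Localization (Submonoid.closure (q : Set R)ᶜ)))).comap
    (algebraMap R (Localization (Submonoid.closure (q : Set R)ᶜ)))

variable {q p N N' : Ideal R}

theorem mem_saturationAt_iff_exists_mem_closure {x : R} :
    x ∈ saturationAt q N ↔ ∃ s ∈ Submonoid.closure (q : Set R)ᶜ, s * x ∈ N :=
  IsLocalization.algebraMap_mem_map_algebraMap_iff (Submonoid.closure (q : Set R)ᶜ) _ _ _

theorem mem_saturationAt (hq : q.IsPrime) {x : R} :
    x ∈ saturationAt q N ↔ ∃ s ∉ q, s * x ∈ N := by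
  have hclosure : Submonoid.closure (q : Set R)ᶜ = q.primeCompl := Submonoid.closure_eq q.primeCompl
  rw [mem_saturationAt_iff_exists_mem_closure, hclosure]
  rfl

theorem le_saturationAt (q N : Ideal R) : N ≤ saturationAt q N := Ideal.le_comap_map

theorem saturationAt_mono (q : Ideal R) (h : N ≤ N') : saturationAt q N ≤ saturationAt q N' :=
  Ideal.comap_mono (Ideal.map_mono h)

theorem saturationAt_le_saturationAt (h : N ≤ saturationAt q N') :
    saturationAt q N ≤ saturationAt q N' :=
  Ideal.comap_mono (Ideal.map_le_iff_le_comap.2 h)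

theorem saturationAt_le_of_le_prime (hq : q.IsPrime) (h : N ≤ q) : saturationAt q N ≤ q := by
  intro x hx
  obtain ⟨s, hs, hx⟩ := (mem_saturationAt hq).1 hx
  exact (hq.mem_or_mem (h hx)).resolve_left hs

theorem saturationAt_mul_le (q N M : Ideal R) :
    saturationAt q N * M ≤ saturationAt q (N * M) := by
  rw [Ideal.mul_le]
  intro a ha b hb
  obtain ⟨s, hs, ha⟩ := mem_saturationAt_iff_exists_mem_closure.1 ha
  refine mem_saturationAt_iff_exists_mem_closure.2 ⟨s, hs, ?_⟩
  rw [← mul_assoc]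
  exact Ideal.mul_mem_mul ha hb

theorem saturationAt_anti (hqp : q ≤ p) : saturationAt p N ≤ saturationAt q N := by
  intro x hx
  obtain ⟨s, hs, hx⟩ := mem_saturationAt_iff_exists_mem_closure.1 hx
  exact mem_saturationAt_iff_exists_mem_closure.2
    ⟨s, Submonoid.closure_mono (Set.compl_subset_compl.2 hqp) hs, hx⟩

theorem mem_saturationAt_iff_localization (hq : q.IsPrime) {x : R} :
    x ∈ saturationAt q N ↔ algebraMap R (Localization.AtPrime q) x ∈
      N.map (algebraMap R (Localization.AtPrime q)) := by
  rw [mem_saturationAt hq, IsLocalization.algebraMap_mem_map_algebraMap_iff q.primeCompl]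
  rfl

theorem le_saturationAt_iff_localization (hq : q.IsPrime) :
    N' ≤ saturationAt q N ↔ N'.map (algebraMap R (Localization.AtPrime q)) ≤
      N.map (algebraMap R (Localization.AtPrime q)) := by
  rw [Ideal.map_le_iff_le_comap]
  exact forall₂_congr fun _ _ => mem_saturationAt_iff_localization hq

theorem not_colon_singleton_le_iff (hq : q.IsPrime) {x : R} :
    ¬ N.colon {x} ≤ q ↔ x ∈ saturationAt q N := by
  rw [mem_saturationAt hq, SetLike.not_le_iff_exists]
  simp only [Submodule.mem_colon_singleton, smul_eq_mul, and_comm]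

/-- Finitely many generators of `N` have a common denominator. -/
theorem le_saturationAt_iff_not_colon_le (hq : q.IsPrime) (hN : N.FG) :
    N ≤ saturationAt q N' ↔ ¬ Submodule.colon N' (N : Set R) ≤ q := by
  obtain ⟨S, rfl⟩ := hN
  have hcolon : Submodule.colon N' (Submodule.span R (S : Set R) : Set R) =
      S.inf fun x => N'.colon {x} := by
    ext r
    simp [Submodule.colon_span, Submodule.mem_colon, Submodule.mem_finsetInf]
  rw [hcolon, Ideal.IsPrime.inf_le' hq, Submodule.span_le]
  push Not
  exact forall₂_congr fun x _ => (not_colon_singleton_le_iff hq).symm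

theorem le_saturationAt_iff_exists_mul (hq : q.IsPrime) (hN : N.FG) :
    N ≤ saturationAt q N' ↔ ∃ s ∉ q, ∀ x ∈ N, s * x ∈ N' := by
  rw [le_saturationAt_iff_not_colon_le hq hN, SetLike.not_le_iff_exists]
  simp only [Submodule.mem_colon, SetLike.mem_coe, smul_eq_mul, and_comm]

/-- Nakayama's lemma at `q`. -/
theorem le_saturationAt_of_le_sup_mul (hq : q.IsPrime) (hN : N.FG)
    (h : N ≤ saturationAt q (N' ⊔ q * N)) : N ≤ saturationAt q N' := by
  rw [le_saturationAt_iff_localization hq] at *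
  rw [Ideal.map_sup, Ideal.map_mul, Localization.AtPrime.map_eq_maximalIdeal] at h
  exact Submodule.le_of_le_smul_of_le_jacobson_bot (hN.map _)
    (IsLocalRing.maximalIdeal_le_jacobson _) h

end Saturation

section AssociatedPrimes

variable {R : Type u} [CommRing R]

theorem isSMulRegular_quotient_iff_mul {K : Ideal R} {x : R} :
    IsSMulRegular (R ⧸ K) x ↔ ∀ w, x * w ∈ K → w ∈ K :=
  isSMulRegular_quotient_iff_mem_of_smul_mem K x

variable {K p q : Ideal R}

theorem le_of_isAssociatedPrime (h : K.IsAssociatedPrime q) : K ≤ q := by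
  obtain ⟨-, w, rfl⟩ := h
  exact Ideal.le_colon.trans Ideal.le_radical

variable [IsNoetherianRing R]

theorem exists_isAssociatedPrime_of_colon_le (hp : p.IsPrime) {w : R} (h : K.colon {w} ≤ p) :
    ∃ q, K.IsAssociatedPrime q ∧ q ≤ p ∧ K.colon {w} ≤ q := by
  have := hp
  obtain ⟨q, hq, hqp⟩ := Ideal.exists_minimalPrimes_le h
  obtain ⟨w', hw'⟩ := Submodule.exists_eq_colon_of_mem_minimalPrimes hq
  exact ⟨q, Submodule.isAssociatedPrime_iff.2 ⟨hq.1.1, w', hw'⟩, hqp, hq.1.2⟩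

theorem isAssociatedPrime_of_mem_minimalPrimes (h : p ∈ K.minimalPrimes) :
    K.IsAssociatedPrime p := by
  have hcolon : K.colon {(1 : R)} = K := by
    ext; simp [Submodule.mem_colon_singleton]
  obtain ⟨w, hw⟩ := Submodule.exists_eq_colon_of_mem_minimalPrimes (N := K) (x := (1 : R))
    (hcolon.symm ▸ h)
  exact Submodule.isAssociatedPrime_iff.2 ⟨h.1.1, w, hw⟩

theorem exists_isAssociatedPrime_le (hp : p.IsPrime) (h : K ≤ p) :
    ∃ q, K.IsAssociatedPrime q ∧ q ≤ p :=
  have := hp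
  (Ideal.exists_minimalPrimes_le h).imp fun _ hq =>
    ⟨isAssociatedPrime_of_mem_minimalPrimes hq.1, hq.2⟩

theorem exists_isAssociatedPrime_of_notMem_saturationAt (hp : p.IsPrime) {w : R}
    (h : w ∉ saturationAt p K) : ∃ q, K.IsAssociatedPrime q ∧ q ≤ p ∧ K.colon {w} ≤ q :=
  exists_isAssociatedPrime_of_colon_le hp (not_not.1 (mt (not_colon_singleton_le_iff hp).1 h))

theorem exists_eq_colon_singleton (h : K.IsAssociatedPrime q) :
    ∃ w, q = K.colon {w} ∧ w ∉ saturationAt q K := by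
  obtain ⟨hq, w, hw⟩ := Submodule.isAssociatedPrime_iff.1 h
  exact ⟨w, hw, fun hc => (not_colon_singleton_le_iff hq).2 hc hw.ge⟩

theorem exists_isAssociatedPrime_of_notMem {w : R} (h : w ∉ K) :
    ∃ q, K.IsAssociatedPrime q ∧ K.colon {w} ≤ q := by
  have hne : K.colon {w} ≠ ⊤ := by
    rwa [Ne, Submodule.colon_eq_top_iff_subset, Set.singleton_subset_iff]
  obtain ⟨p, hp, hle⟩ := Ideal.exists_le_maximal _ hne
  obtain ⟨q, hq, -, hwq⟩ := exists_isAssociatedPrime_of_colon_le hp.isPrime hle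
  exact ⟨q, hq, hwq⟩

theorem isSMulRegular_quotient_of_forall_notMem {x : R}
    (h : ∀ q, K.IsAssociatedPrime q → x ∉ q) : IsSMulRegular (R ⧸ K) x := by
  rw [isSMulRegular_quotient_iff_mul]
  intro w hw
  by_contra hwK
  obtain ⟨q, hq, hle⟩ := exists_isAssociatedPrime_of_notMem hwK
  exact h q hq (hle (Submodule.mem_colon_singleton.2 hw))

theorem notMem_of_isSMulRegular_quotient {x : R} (h : IsSMulRegular (R ⧸ K) x)
    (hq : K.IsAssociatedPrime q) : x ∉ q := by
  obtain ⟨w, rfl, hw⟩ := exists_eq_colon_singleton hq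
  intro hx
  exact hw (le_saturationAt _ _
    (isSMulRegular_quotient_iff_mul.1 h w (Submodule.mem_colon_singleton.1 hx)))

theorem finite_setOf_isAssociatedPrime (K : Ideal R) : {q | K.IsAssociatedPrime q}.Finite := by
  refine (associatedPrimes.finite R (R ⧸ K)).subset ?_
  rintro q ⟨hq, w, rfl⟩
  refine ⟨hq, Ideal.Quotient.mk K w, ?_⟩
  congr 1
  ext r
  rw [Submodule.mem_colon_singleton, Submodule.mem_colon_singleton, Submodule.mem_bot,
    ← Ideal.Quotient.eq_zero_iff_mem]
  simp [Algebra.smul_def]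

end AssociatedPrimes

section GenericElements

variable {R : Type u} [CommRing R]

/-- `P` holds for all elements of `J` outside finitely many ideals not containing `J`. Over a local
ring with infinite residue field such elements exist, see `Generic.exists`. -/
def Generic (J : Ideal R) (P : R → Prop) : Prop :=
  ∃ S : Set (Ideal R), S.Finite ∧ (∀ V ∈ S, ¬ J ≤ V) ∧ ∀ z ∈ J, (∀ V ∈ S, z ∉ V) → P z

namespace Generic

variable {J V : Ideal R} {P Q : R → Prop}

theorem and (h : Generic J P) (h' : Generic J Q) : Generic J fun z => P z ∧ Q z := by
  obtain ⟨S, hS, hJS, hP⟩ := h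
  obtain ⟨S', hS', hJS', hQ⟩ := h'
  refine ⟨S ∪ S', hS.union hS', ?_, ?_⟩
  · rintro V (hV | hV)
    exacts [hJS V hV, hJS' V hV]
  · intro z hz h
    exact ⟨hP z hz fun V hV => h V (Or.inl hV), hQ z hz fun V hV => h V (Or.inr hV)⟩

theorem mono (h : Generic J P) (hPQ : ∀ z ∈ J, P z → Q z) : Generic J Q := by
  obtain ⟨S, hS, hJS, hP⟩ := h
  exact ⟨S, hS, hJS, fun z hz h => hPQ z hz (hP z hz h)⟩

theorem of_forall (h : ∀ z ∈ J, P z) : Generic J P :=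
  ⟨∅, Set.finite_empty, by simp, fun z hz _ => h z hz⟩

theorem notMem (h : ¬ J ≤ V) : Generic J fun z => z ∉ V :=
  ⟨{V}, Set.finite_singleton _, by simpa using h, fun _ _ h => h V rfl⟩

theorem forall_mem_finite {ι : Type*} {s : Set ι} (hs : s.Finite) {P : ι → R → Prop}
    (h : ∀ i ∈ s, Generic J (P i)) : Generic J fun z => ∀ i ∈ s, P i z := by
  induction s, hs using Set.Finite.induction_on with
  | empty => exact of_forall (by simp)
  | @insert a s _ _ ih =>
    refine ((h a (by simp)).and (ih fun i hi => h i (by simp [hi]))).mono ?_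
    rintro z _ ⟨hPa, hPs⟩ i (rfl | hi)
    exacts [hPa, hPs i hi]

theorem forall_notMem_of_finite {S : Set (Ideal R)} (hS : S.Finite) :
    Generic J fun z => ∀ V ∈ S, ¬ J ≤ V → z ∉ V := by
  refine forall_mem_finite hS fun V _ => ?_
  by_cases h : J ≤ V
  · exact of_forall fun z _ h' => absurd h h'
  · exact (notMem h).mono fun z _ h _ => h

end Generic

variable [IsLocalRing R]

/-- A set-theoretic section of the residue map. -/
noncomputable def residueLift (x : ResidueField R) : R :=
  Function.surjInv (residue_surjective (R := R)) x

theorem residue_residueLift (x : ResidueField R) : residue R (residueLift x) = x :=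
  Function.surjInv_eq _ x

theorem isUnit_residueLift_sub {x y : ResidueField R} (h : x ≠ y) :
    IsUnit (residueLift x - residueLift y : R) := by
  rw [← residue_ne_zero_iff_isUnit, map_sub, residue_residueLift, residue_residueLift]
  exact sub_ne_zero.2 h

theorem isUnit_residueLift {x : ResidueField R} (h : x ≠ 0) : IsUnit (residueLift x : R) := by
  rwa [← residue_ne_zero_iff_isUnit, residue_residueLift]

theorem finite_setOf_add_residueLift_mul_mem {V : Ideal R} {z : R} (hz : z ∉ V) (y : R) :
    {x : ResidueField R | z + residueLift x * y ∈ V}.Finite := by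
  apply Set.Subsingleton.finite
  intro a ha b hb
  by_contra hab
  have hsub : (residueLift a - residueLift b) * y ∈ V := by
    convert V.sub_mem ha hb using 1; ring
  have hy : y ∈ V := (Ideal.unit_mul_mem_iff_mem V (isUnit_residueLift_sub hab)).1 hsub
  exact hz ((Ideal.add_mem_iff_left V (V.mul_mem_left _ hy)).1 ha)

variable [Infinite (ResidueField R)]

theorem exists_mem_forall_notMem {J : Ideal R} {S : Set (Ideal R)} (hS : S.Finite)
    (h : ∀ V ∈ S, ¬ J ≤ V) : ∃ z ∈ J, ∀ V ∈ S, z ∉ V := by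
  induction S, hS using Set.Finite.induction_on with
  | empty => exact ⟨0, J.zero_mem, by simp⟩
  | @insert V S _ hS ih =>
    obtain ⟨z, hzJ, hz⟩ := ih fun W hW => h W (Set.mem_insert_of_mem V hW)
    by_cases hzV : z ∈ V
    · obtain ⟨y, hyJ, hyV⟩ := SetLike.not_le_iff_exists.1 (h V (Set.mem_insert V S))
      have hfin : (⋃ W ∈ S, {x : ResidueField R | z + residueLift x * y ∈ W}).Finite :=
        hS.biUnion fun W hW => finite_setOf_add_residueLift_mul_mem (hz W hW) y
      obtain ⟨x, hx⟩ := (hfin.union (Set.finite_singleton (0 : ResidueField R))).exists_notMem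
      simp only [Set.mem_union, Set.mem_iUnion, Set.mem_ofPred_eq, Set.mem_singleton_iff, not_or,
        not_exists] at hx
      refine ⟨z + residueLift x * y, J.add_mem hzJ (J.mul_mem_left _ hyJ), ?_⟩
      rintro W (rfl | hW)
      · intro hmem
        exact hyV ((Ideal.unit_mul_mem_iff_mem _ (isUnit_residueLift hx.2)).1
          ((Ideal.add_mem_iff_right _ hzV).1 hmem))
      · exact hx.1 W hW
    · refine ⟨z, hzJ, ?_⟩
      rintro W (rfl | hW)
      exacts [hzV, hz W hW]

theorem Generic.exists {J : Ideal R} {P : R → Prop} (h : Generic J P) : ∃ z ∈ J, P z := by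
  obtain ⟨S, hS, hJS, hP⟩ := h
  obtain ⟨z, hz, hzS⟩ := exists_mem_forall_notMem hS hJS
  exact ⟨z, hz, hP z hz hzS⟩

theorem exists_list_of_generic {J : Ideal R} (n : ℕ) (P : List R → Prop)
    (hnil : P []) (hcons : ∀ T, P T → T.length < n → (∀ x ∈ T, x ∈ J) →
      Generic J fun z => P (z :: T)) : ∃ T, P T ∧ T.length = n ∧ ∀ x ∈ T, x ∈ J := by
  have hstep (k : ℕ) (hk : k ≤ n) : ∃ T, P T ∧ T.length = k ∧ ∀ x ∈ T, x ∈ J := by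
    induction k with
    | zero => exact ⟨[], hnil, rfl, by simp⟩
    | succ k ih =>
      obtain ⟨T, hT, hlen, hTJ⟩ := ih (by omega)
      obtain ⟨z, hz, hP⟩ := (hcons T hT (by omega) hTJ).exists
      exact ⟨z :: T, hP, by rw [List.length_cons, hlen], List.forall_mem_cons.2 ⟨hz, hTJ⟩⟩
  exact hstep n le_rfl

end GenericElements

section Heights

variable {R : Type u} [CommRing R]

/-- The height of an ideal as a natural number, for proper ideals of Noetherian rings (it is `0`
when the height is infinite). -/
noncomputable def natHeight (q : Ideal R) : ℕ := q.height.toNat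

theorem exists_mem_forall_notMem_of_isPrime {J : Ideal R} {S : Set (Ideal R)} (hS : S.Finite)
    (hp : ∀ V ∈ S, V.IsPrime) (h : ∀ V ∈ S, ¬ J ≤ V) : ∃ z ∈ J, ∀ V ∈ S, z ∉ V := by
  by_contra! hcon
  have hsub : (J : Set R) ⊆ ⋃ V ∈ S, ((id V : Ideal R) : Set R) := fun z hz =>
    let ⟨V, hV, hzV⟩ := hcon z hz
    Set.mem_biUnion hV hzV
  obtain ⟨V, hV, hle⟩ := (Ideal.subset_union_prime_finite hS ⊤ ⊤ fun i hi _ _ => hp i hi).1 hsub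
  exact h V hV hle

variable [IsNoetherianRing R] {p q : Ideal R}

theorem coe_natHeight (hq : q.IsPrime) : (natHeight q : ℕ∞) = q.height :=
  ENat.natCast_toNat (Ideal.height_lt_top hq.ne_top).ne

theorem natHeight_mono (hp : p.IsPrime) (h : q ≤ p) : natHeight q ≤ natHeight p :=
  ENat.toNat_le_toNat (Ideal.height_mono h) (Ideal.height_lt_top hp.ne_top).ne

theorem natHeight_lt (hq : q.IsPrime) (hp : p.IsPrime) (h : q < p) :
    natHeight q < natHeight p := by
  have hlt := Ideal.height_strict_mono_of_isPrime_of_isPrime h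
  rw [← coe_natHeight hq, ← coe_natHeight hp] at hlt
  exact_mod_cast hlt

theorem natHeight_le_natHeight_maximalIdeal [IsLocalRing R] (hp : p.IsPrime) :
    natHeight p ≤ natHeight (maximalIdeal R) :=
  natHeight_mono (maximalIdeal.isMaximal R).isPrime (le_maximalIdeal hp.ne_top)

theorem rDim_localization (hq : q.IsPrime) :
    rDim (Localization.AtPrime q) = (natHeight q : WithBot ℕ∞) := by
  rw [rDim, IsLocalization.AtPrime.ringKrullDim_eq_height q, ← coe_natHeight hq]
  rfl

theorem ht_le_natHeight (hp : p.IsPrime) (h : q ≤ p) : ht q ≤ (natHeight p : WithBot ℕ∞) :=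
  (iInf₂_le (⟨p, hp⟩ : PrimeSpectrum R) h).trans_eq (rDim_localization hp)

theorem natCast_le_ht_iff {n : ℕ} :
    (n : WithBot ℕ∞) ≤ ht q ↔ ∀ p : Ideal R, p.IsPrime → q ≤ p → n ≤ natHeight p := by
  simp only [ht, le_iInf_iff]
  refine ⟨fun h p hp hqp => ?_, fun h p hqp => ?_⟩
  · have := h ⟨p, hp⟩ hqp
    rw [rDim_localization hp] at this
    exact_mod_cast this
  · rw [rDim_localization p.2]
    exact_mod_cast h p.asIdeal p.2 hqp

end Heights

section Depth

variable {R : Type u} [CommRing R]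

theorem mem_sup_span_singleton {K : Ideal R} {y x : R} :
    x ∈ K ⊔ Ideal.span {y} ↔ ∃ k ∈ K, ∃ t, x = k + y * t := by
  rw [sup_comm, Ideal.mem_span_singleton_sup]
  constructor
  · rintro ⟨t, k, hk, rfl⟩
    exact ⟨k, hk, t, by ring⟩
  · rintro ⟨k, hk, t, rfl⟩
    exact ⟨t, k, hk, by ring⟩

theorem mem_sup_span_singleton_self (K : Ideal R) (y : R) : y ∈ K ⊔ Ideal.span {y} :=
  Ideal.mem_sup_right (Ideal.mem_span_singleton_self y)

theorem isSMulRegular_quotient_sup_swap {K : Ideal R} {y z : R} (hy : IsSMulRegular (R ⧸ K) y)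
    (hz : IsSMulRegular (R ⧸ (K ⊔ Ideal.span {y})) z) :
    IsSMulRegular (R ⧸ (K ⊔ Ideal.span {z})) y := by
  rw [isSMulRegular_quotient_iff_mul] at *
  intro w hw
  obtain ⟨k, hk, t, hyw⟩ := mem_sup_span_singleton.1 hw
  have ht : t ∈ K ⊔ Ideal.span {y} :=
    hz _ (mem_sup_span_singleton.2 ⟨-k, K.neg_mem hk, w, by linear_combination -hyw⟩)
  obtain ⟨k', hk', t', rfl⟩ := mem_sup_span_singleton.1 ht
  have hmul : y * (w - z * t') = k + z * k' := by linear_combination hyw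
  have hmem : w - z * t' ∈ K := hy _ (hmul ▸ K.add_mem hk (K.mul_mem_left _ hk'))
  exact mem_sup_span_singleton.2 ⟨_, hmem, t', by ring⟩

/-- Depth of `R/K` at least `n`, for `R` local, by successively choosing regular elements in the
maximal ideal; the quotient is not required to be nonzero. -/
def DepthGE [IsLocalRing R] : ℕ → Ideal R → Prop
  | 0, _ => True
  | n + 1, K => ∃ y ∈ maximalIdeal R, IsSMulRegular (R ⧸ K) y ∧ DepthGE n (K ⊔ Ideal.span {y})

theorem not_maximalIdeal_le [IsLocalRing R] {K q : Ideal R}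
    (h : ¬ K.IsAssociatedPrime (maximalIdeal R)) (hq : K.IsAssociatedPrime q) :
    ¬ maximalIdeal R ≤ q := fun hle =>
  h (le_antisymm (le_maximalIdeal hq.1.ne_top) hle ▸ hq)

section Noetherian

variable [IsNoetherianRing R] {K p q : Ideal R}

/-- If `q` is the annihilator of `w` modulo `K`, then by Nakayama's lemma `K : q` is not contained
in `K + (y)` locally at `p`, and the annihilator of any further element of it contains `q`. -/
theorem exists_isAssociatedPrime_sup_span_singleton (hq : K.IsAssociatedPrime q) (hp : p.IsPrime)
    (hqp : q ≤ p) {y : R} (hyp : y ∈ p) (hy : IsSMulRegular (R ⧸ K) y) :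
    ∃ q', (K ⊔ Ideal.span {y}).IsAssociatedPrime q' ∧ q ≤ q' ∧ q' ≤ p ∧ y ∈ q' := by
  obtain ⟨w, hw, hws⟩ := exists_eq_colon_singleton hq
  have hmem {x : R} (hx : x ∈ Submodule.colon K (q : Set R)) {r : R} (hr : r ∈ q) : x * r ∈ K :=
    Submodule.mem_colon.1 hx r hr
  have hwq : w ∈ Submodule.colon K (q : Set R) := by
    refine Submodule.mem_colon.2 fun r hr => ?_
    rw [SetLike.mem_coe, hw, Submodule.mem_colon_singleton] at hr
    rwa [smul_eq_mul, mul_comm]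
  have hnot : ¬ Submodule.colon K (q : Set R) ≤ saturationAt p (K ⊔ Ideal.span {y}) := by
    intro hle
    refine hws (saturationAt_anti hqp ?_)
    refine le_saturationAt_of_le_sup_mul hp (IsNoetherian.noetherian _) (fun x hx => ?_) hwq
    obtain ⟨s, hs, hsx⟩ := (mem_saturationAt hp).1 (hle hx)
    obtain ⟨k, hk, v, hsx⟩ := mem_sup_span_singleton.1 hsx
    refine (mem_saturationAt hp).2 ⟨s, hs, ?_⟩
    rw [hsx]
    refine Ideal.add_mem _ (Ideal.mem_sup_left hk) (Ideal.mem_sup_right ?_)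
    refine Ideal.mul_mem_mul hyp (Submodule.mem_colon.2 fun r hr => ?_)
    refine isSMulRegular_quotient_iff_mul.1 hy _ ?_
    have hyvr : y * (v * r) = s * (x * r) - k * r := by linear_combination (-r) * hsx
    rw [smul_eq_mul, hyvr]
    exact K.sub_mem (K.mul_mem_left _ (hmem hx hr)) (K.mul_mem_right _ hk)
  obtain ⟨x, hxN, hx⟩ := SetLike.not_le_iff_exists.1 hnot
  obtain ⟨q', hq', hq'p, hle⟩ := exists_isAssociatedPrime_of_notMem_saturationAt hp hx
  refine ⟨q', hq', fun r hr => hle (Submodule.mem_colon_singleton.2 ?_), hq'p,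
    le_of_isAssociatedPrime hq' (mem_sup_span_singleton_self K y)⟩
  rw [smul_eq_mul, mul_comm]
  exact Ideal.mem_sup_left (hmem hxN hr)

variable [IsLocalRing R]

theorem isAssociatedPrime_maximalIdeal {w : R} (hw : w ∉ K)
    (h : ∀ r ∈ maximalIdeal R, r * w ∈ K) : K.IsAssociatedPrime (maximalIdeal R) := by
  obtain ⟨q, hq, hle⟩ := exists_isAssociatedPrime_of_notMem hw
  have hmax : maximalIdeal R ≤ q := fun r hr => hle (Submodule.mem_colon_singleton.2 (h r hr))
  rwa [le_antisymm hmax (le_maximalIdeal hq.1.ne_top)]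

theorem not_isAssociatedPrime_maximalIdeal_exchange {x y : R} (hx : IsSMulRegular (R ⧸ K) x)
    (hy : IsSMulRegular (R ⧸ K) y) (hym : y ∈ maximalIdeal R)
    (h : ¬ (K ⊔ Ideal.span {y}).IsAssociatedPrime (maximalIdeal R)) :
    ¬ (K ⊔ Ideal.span {x}).IsAssociatedPrime (maximalIdeal R) := by
  rw [isSMulRegular_quotient_iff_mul] at hx hy
  intro hass
  obtain ⟨w, hw, hws⟩ := exists_eq_colon_singleton hass
  have hmul {r : R} (hr : r ∈ maximalIdeal R) : ∃ k ∈ K, ∃ t, r * w = k + x * t := by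
    rw [hw, Submodule.mem_colon_singleton] at hr
    exact mem_sup_span_singleton.1 hr
  obtain ⟨k, hk, v, hyw⟩ := hmul hym
  have hv : v ∈ K ⊔ Ideal.span {y} := by
    by_contra hv
    refine h (isAssociatedPrime_maximalIdeal hv fun r hr => ?_)
    obtain ⟨k', hk', t, hrw⟩ := hmul hr
    have hcross : x * (r * v - y * t) = y * k' - r * k := by
      linear_combination (-r) * hyw + y * hrw
    have hmem : r * v - y * t ∈ K :=
      hx _ (hcross ▸ K.sub_mem (K.mul_mem_left _ hk') (K.mul_mem_left _ hk))
    exact mem_sup_span_singleton.2 ⟨_, hmem, t, by ring⟩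
  obtain ⟨k', hk', t, rfl⟩ := mem_sup_span_singleton.1 hv
  have hcross : y * (w - x * t) = x * k' + k := by linear_combination hyw
  have hmem : w - x * t ∈ K := hy _ (hcross ▸ K.add_mem (K.mul_mem_left _ hk') hk)
  exact hws (le_saturationAt _ _ (mem_sup_span_singleton.2 ⟨_, hmem, t, by ring⟩))

end Noetherian

namespace DepthGE

variable [IsLocalRing R] {n m : ℕ} {K : Ideal R}

theorem of_succ (h : DepthGE (n + 1) K) : DepthGE n K := by
  induction n generalizing K with
  | zero => trivial
  | succ n ih =>
    obtain ⟨y, hy, hr, h'⟩ := h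
    exact ⟨y, hy, hr, ih h'⟩

theorem mono (hnm : n ≤ m) (h : DepthGE m K) : DepthGE n K := by
  induction hnm with
  | refl => exact h
  | step _ ih => exact ih h.of_succ

open scoped Pointwise in
theorem of_isWeaklyRegular {M : Type v} [AddCommGroup M] [Module R M] (rs : List R)
    (hrs : ∀ x ∈ rs, x ∈ maximalIdeal R) (f : R →ₗ[R] M) (hf : Function.Surjective f)
    (hK : LinearMap.ker f = K) (h : RingTheory.Sequence.IsWeaklyRegular M rs) :
    DepthGE rs.length K := by
  induction rs generalizing M K with
  | nil => trivial
  | cons r rs ih =>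
    obtain ⟨hr, hrs'⟩ := (RingTheory.Sequence.isWeaklyRegular_cons_iff M r rs).1 h
    have hmemK {x : R} : x ∈ K ↔ f x = 0 := by rw [← hK, LinearMap.mem_ker]
    have hfmul (a b : R) : f (a * b) = a • f b := by rw [← smul_eq_mul, map_smul]
    refine ⟨r, hrs r (by simp), ?_, ?_⟩
    · refine isSMulRegular_quotient_iff_mul.2 fun w hw => ?_
      rw [hmemK, hfmul] at hw
      exact hmemK.2 (hr.right_eq_zero_of_smul hw)
    · refine ih (fun x hx => hrs x (by simp [hx]))
        ((Submodule.mkQ (r • (⊤ : Submodule R M))).comp f)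
        ((Submodule.mkQ_surjective _).comp hf) ?_ hrs'
      ext x
      rw [LinearMap.mem_ker, LinearMap.comp_apply, Submodule.mkQ_apply,
        Submodule.Quotient.mk_eq_zero, Submodule.mem_smul_pointwise_iff_exists,
        mem_sup_span_singleton]
      constructor
      · rintro ⟨b, -, hb⟩
        obtain ⟨t, rfl⟩ := hf b
        exact ⟨x - r * t, by rw [hmemK, map_sub, hfmul, hb, sub_self], t, by ring⟩
      · rintro ⟨k, hk, t, rfl⟩
        exact ⟨f t, trivial, by rw [map_add, hmemK.1 hk, hfmul, zero_add]⟩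

theorem of_le_qDepth (h : (n : ℕ∞) ≤ qDepth R K) : DepthGE n K := by
  rcases n with _ | n
  · trivial
  have hlt : (n : ℕ∞) < qDepth R K := lt_of_lt_of_le (by exact_mod_cast n.lt_succ_self) h
  obtain ⟨_, ⟨rs, hrs, hreg, rfl⟩, hlt⟩ := lt_sSup_iff.1 hlt
  have hdepth := of_isWeaklyRegular rs hrs (Submodule.mkQ K) (Submodule.mkQ_surjective _)
    (Submodule.ker_mkQ _) hreg.toIsWeaklyRegular
  exact hdepth.mono (by exact_mod_cast hlt)

variable [IsNoetherianRing R] {q : Ideal R}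

theorem of_isCMLocalRing (h : IsCMLocalRing R) :
    DepthGE (natHeight (maximalIdeal R)) (⊥ : Ideal R) := by
  refine of_le_qDepth ?_
  rw [IsCMLocalRing, rDim, ← IsLocalRing.maximalIdeal_height_eq_ringKrullDim] at h
  rw [coe_natHeight (maximalIdeal.isMaximal R).isPrime]
  exact (WithBot.coe_inj.1 h).le

theorem not_isAssociatedPrime_maximalIdeal (h : DepthGE (n + 1) K) :
    ¬ K.IsAssociatedPrime (maximalIdeal R) := by
  obtain ⟨y, hy, hr, -⟩ := h
  exact fun hass => notMem_of_isSMulRegular_quotient hr hass hy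

/-- Compare the two quotients through a third element that is regular modulo `K`, `K + (x)` and
`K + (y)` at once. -/
theorem exchange {x y : R} (hx : x ∈ maximalIdeal R) (hy : y ∈ maximalIdeal R)
    (hxK : IsSMulRegular (R ⧸ K) x) (hyK : IsSMulRegular (R ⧸ K) y)
    (h : DepthGE n (K ⊔ Ideal.span {y})) : DepthGE n (K ⊔ Ideal.span {x}) := by
  induction n generalizing K x y with
  | zero => trivial
  | succ n ih =>
    have hmy := h.not_isAssociatedPrime_maximalIdeal
    have hmx := not_isAssociatedPrime_maximalIdeal_exchange hxK hyK hy hmy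
    have hmK : ¬ K.IsAssociatedPrime (maximalIdeal R) := fun hass =>
      notMem_of_isSMulRegular_quotient hyK hass hy
    obtain ⟨z, hz, hzS⟩ := exists_mem_forall_notMem_of_isPrime (J := maximalIdeal R)
      (((finite_setOf_isAssociatedPrime K).union
        (finite_setOf_isAssociatedPrime (K ⊔ Ideal.span {x}))).union
        (finite_setOf_isAssociatedPrime (K ⊔ Ideal.span {y})))
      (by rintro V ((hV | hV) | hV) <;> exact hV.1)
      (by
        rintro V ((hV | hV) | hV)
        exacts [not_maximalIdeal_le hmK hV, not_maximalIdeal_le hmx hV,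
          not_maximalIdeal_le hmy hV])
    have hzx : IsSMulRegular (R ⧸ (K ⊔ Ideal.span {x})) z :=
      isSMulRegular_quotient_of_forall_notMem fun q hq => hzS q (Or.inl (Or.inr hq))
    have hzy : IsSMulRegular (R ⧸ (K ⊔ Ideal.span {y})) z :=
      isSMulRegular_quotient_of_forall_notMem fun q hq => hzS q (Or.inr hq)
    obtain ⟨y', hy', hreg, hdepth⟩ := h
    have hyz : DepthGE n (K ⊔ Ideal.span {y} ⊔ Ideal.span {z}) := ih hz hy' hzy hreg hdepth
    rw [sup_right_comm] at hyz
    have hxz := ih hx hy (isSMulRegular_quotient_sup_swap hxK hzx)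
      (isSMulRegular_quotient_sup_swap hyK hzy) hyz
    rw [sup_right_comm] at hxz
    exact ⟨z, hz, hzx, hxz⟩

theorem sup_span_singleton {x : R} (h : DepthGE (n + 1) K) (hx : x ∈ maximalIdeal R)
    (hxK : IsSMulRegular (R ⧸ K) x) : DepthGE n (K ⊔ Ideal.span {x}) := by
  obtain ⟨y, hy, hyK, h'⟩ := h
  exact h'.exchange hx hy hxK hyK

theorem natHeight_add_le (h : DepthGE n K) (hq : K.IsAssociatedPrime q) :
    natHeight q + n ≤ natHeight (maximalIdeal R) := by
  induction n generalizing K q with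
  | zero => exact natHeight_le_natHeight_maximalIdeal hq.1
  | succ n ih =>
    obtain ⟨y, hy, hyK, h'⟩ := h
    obtain ⟨q', hq', hle, -, hyq'⟩ := exists_isAssociatedPrime_sup_span_singleton hq
      (maximalIdeal.isMaximal R).isPrime (le_maximalIdeal hq.1.ne_top) hy hyK
    have hlt : q < q' :=
      lt_of_le_of_ne hle fun h => notMem_of_isSMulRegular_quotient hyK hq (h ▸ hyq')
    have := ih h' hq'
    have := natHeight_lt hq.1 hq'.1 hlt
    omega

theorem exists_mem_isSMulRegular_quotient (h : DepthGE n K)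
    (hlt : natHeight (maximalIdeal R) < natHeight q + n) :
    ∃ y ∈ q, IsSMulRegular (R ⧸ K) y := by
  obtain ⟨y, hy, hyK⟩ := exists_mem_forall_notMem_of_isPrime (J := q)
    (finite_setOf_isAssociatedPrime K) (fun V hV => hV.1) fun V hV hle => by
      have := h.natHeight_add_le hV
      have := natHeight_mono hV.1 hle
      omega
  exact ⟨y, hy, isSMulRegular_quotient_of_forall_notMem hyK⟩

end DepthGE

variable [IsLocalRing R] [IsNoetherianRing R] {p q q' : Ideal R}

theorem exists_le_depthGE (hD : DepthGE (natHeight (maximalIdeal R)) (⊥ : Ideal R))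
    (hp : p.IsPrime) {j : ℕ} (hj : j ≤ natHeight p) :
    ∃ X ≤ p, DepthGE (natHeight (maximalIdeal R) - j) X ∧
      ∀ P : Ideal R, P.IsPrime → X ≤ P → j ≤ natHeight P := by
  have hpm := natHeight_le_natHeight_maximalIdeal hp
  induction j with
  | zero => exact ⟨⊥, bot_le, hD, fun _ _ _ => Nat.zero_le _⟩
  | succ j ih =>
    obtain ⟨X, hXp, hX, hXh⟩ := ih (by omega)
    obtain ⟨y, hy, hyX⟩ := hX.exists_mem_isSMulRegular_quotient (q := p) (by omega)
    refine ⟨X ⊔ Ideal.span {y}, sup_le hXp (by simpa [Ideal.span_le] using hy), ?_, ?_⟩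
    · refine DepthGE.sup_span_singleton ?_ (le_maximalIdeal hp.ne_top hy) hyX
      convert hX using 1; omega
    · intro P hP hle
      obtain ⟨q, hq, hqP⟩ := exists_isAssociatedPrime_le hP (le_sup_left.trans hle)
      have hyP : y ∈ P := hle (mem_sup_span_singleton_self X y)
      have := hXh q hq.1 (le_of_isAssociatedPrime hq)
      have := natHeight_lt hq.1 hP
        (lt_of_le_of_ne hqP fun h => notMem_of_isSMulRegular_quotient hyX hq (h ▸ hyP))
      omega

theorem natHeight_le_add_one_of_adjacent
    (hD : DepthGE (natHeight (maximalIdeal R)) (⊥ : Ideal R)) (hq' : q'.IsPrime) (hq : q.IsPrime)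
    (hlt : q' < q) (hadj : ∀ P : Ideal R, P.IsPrime → q' < P → P ≤ q → P = q) :
    natHeight q ≤ natHeight q' + 1 := by
  have hqm := natHeight_le_natHeight_maximalIdeal hq
  have hheight := natHeight_lt hq' hq hlt
  obtain ⟨X, hXq', hX, hXh⟩ := exists_le_depthGE hD hq' le_rfl
  have hass : X.IsAssociatedPrime q' := by
    obtain ⟨q₀, hq₀, hle⟩ := exists_isAssociatedPrime_le hq' hXq'
    have := hXh q₀ hq₀.1 (le_of_isAssociatedPrime hq₀)
    rcases eq_or_lt_of_le hle with rfl | hlt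
    · exact hq₀
    · have := natHeight_lt hq₀.1 hq' hlt
      omega
  obtain ⟨y, hy, hyX⟩ := hX.exists_mem_isSMulRegular_quotient (q := q) (by omega)
  obtain ⟨P, hP, hq'P, hPq, hyP⟩ :=
    exists_isAssociatedPrime_sup_span_singleton hass hq hlt.le hy hyX
  obtain rfl : P = q := hadj P hP.1
    (lt_of_le_of_ne hq'P fun h => notMem_of_isSMulRegular_quotient hyX hass (h ▸ hyP)) hPq
  have hdepth : DepthGE (natHeight (maximalIdeal R) - natHeight q' - 1) (X ⊔ Ideal.span {y}) := by
    refine DepthGE.sup_span_singleton ?_ (le_maximalIdeal hq.ne_top hy) hyX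
    convert hX using 1; omega
  have := hdepth.natHeight_add_le hP
  omega

end Depth

section SerreS2

variable {R : Type u} [CommRing R] {K q : Ideal R}

theorem map_localization_lt_map {P P' : Ideal R} [q.IsPrime] (hP : P.IsPrime) (hP' : P'.IsPrime)
    (hlt : P < P') (hle : P' ≤ q) : P.map (algebraMap R (Localization.AtPrime q)) <
      P'.map (algebraMap R (Localization.AtPrime q)) := by
  have hdisj {P : Ideal R} (h : P ≤ q) : Disjoint (q.primeCompl : Set R) (P : Set R) :=
    Set.disjoint_left.2 fun _ ha haP => ha (h haP)
  refine lt_of_le_of_ne (Ideal.map_mono hlt.le) fun h => hlt.ne ?_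
  rw [← IsLocalization.under_map_of_isPrime_disjoint q.primeCompl (Localization.AtPrime q) hP
    (hdisj (hlt.le.trans hle)), h]
  exact IsLocalization.under_map_of_isPrime_disjoint q.primeCompl _ hP' (hdisj hle)

theorem two_le_rDim_localization_quotient [hq : q.IsPrime] {q' q'' : Ideal R} (hq' : q'.IsPrime)
    (hq'' : q''.IsPrime) (hK : K ≤ q') (hlt' : q' < q'') (hlt : q'' < q) :
    2 ≤ rDim (Localization.AtPrime q ⧸ K.map (algebraMap R (Localization.AtPrime q))) := by
  rw [rDim, ringKrullDim_quotient]
  have hprime {P : Ideal R} (hP : P.IsPrime) (hle : P ≤ q) :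
      (P.map (algebraMap R (Localization.AtPrime q))).IsPrime :=
    IsLocalization.isPrime_of_isPrime_disjoint q.primeCompl _ P hP
      (Set.disjoint_left.2 fun _ ha haP => ha (hle haP))
  let point (P : Ideal R) (hP : P.IsPrime) (hKP : K ≤ P) (hle : P ≤ q) :
      PrimeSpectrum.zeroLocus
        (K.map (algebraMap R (Localization.AtPrime q)) : Set (Localization.AtPrime q)) :=
    ⟨⟨_, hprime hP hle⟩, Ideal.map_mono hKP⟩
  have hchain' : point q' hq' hK (hlt'.trans hlt).le < point q'' hq'' (hK.trans hlt'.le) hlt.le :=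
    map_localization_lt_map hq' hq'' hlt' hlt.le
  have hchain : point q'' hq'' (hK.trans hlt'.le) hlt.le <
      point q hq (hK.trans (hlt'.trans hlt).le) le_rfl :=
    map_localization_lt_map hq'' hq hlt le_rfl
  exact Order.LTSeries.length_le_krullDim
    { length := 2
      toFun := ![_, _, _]
      step := by intro i; fin_cases i; exacts [hchain', hchain] }

theorem isSMulRegular_quotient_map_localization (hq : q.IsPrime) {x : R}
    (hx : IsSMulRegular (R ⧸ K) x) :
    IsSMulRegular (Localization.AtPrime q ⧸ K.map (algebraMap R (Localization.AtPrime q)))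
      (algebraMap R (Localization.AtPrime q) x) := by
  refine isSMulRegular_quotient_iff_mul.2 fun w hw => ?_
  obtain ⟨a, s, rfl⟩ := IsLocalization.exists_mk'_eq q.primeCompl w
  rw [IsLocalization.mul_mk'_eq_mk'_of_mul, IsLocalization.mk'_mem_map_algebraMap_iff] at hw
  rw [IsLocalization.mk'_mem_map_algebraMap_iff]
  obtain ⟨t, ht, hmem⟩ := hw
  refine ⟨t, ht, isSMulRegular_quotient_iff_mul.1 hx _ ?_⟩
  rwa [mul_left_comm]

variable [IsNoetherianRing R]

theorem isAssociatedPrime_map_localization [q.IsPrime] (hq : K.IsAssociatedPrime q) :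
    (K.map (algebraMap R (Localization.AtPrime q))).IsAssociatedPrime
      (maximalIdeal (Localization.AtPrime q)) := by
  obtain ⟨w, hw, hws⟩ := exists_eq_colon_singleton hq
  refine isAssociatedPrime_maximalIdeal
    (mt (mem_saturationAt_iff_localization hq.1).2 hws) fun r hr => ?_
  rw [← Localization.AtPrime.map_eq_maximalIdeal] at hr
  refine Submodule.mem_colon_singleton.1 (Ideal.map_le_iff_le_comap.2 (fun a ha => ?_) hr)
  rw [hw, Submodule.mem_colon_singleton, smul_eq_mul] at ha
  rw [Ideal.mem_comap, Submodule.mem_colon_singleton, smul_eq_mul, ← map_mul]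
  exact Ideal.mem_map_of_mem _ ha

theorem not_lt_of_quotS2 (hK : QuotS2 K) {x : R} (hx : IsSMulRegular (R ⧸ K) x)
    (hq : (K ⊔ Ideal.span {x}).IsAssociatedPrime q) {q' q'' : Ideal R} (hq' : q'.IsPrime)
    (hq'' : q''.IsPrime) (hKq' : K ≤ q') (hlt' : q' < q'') : ¬ q'' < q := by
  intro hlt
  have := hq.1
  have hdepth := hK q hq.1 (hKq'.trans (hlt'.trans hlt).le)
  rw [min_eq_left (two_le_rDim_localization_quotient hq' hq'' hKq' hlt' hlt)] at hdepth
  have hxq : algebraMap R (Localization.AtPrime q) x ∈ maximalIdeal (Localization.AtPrime q) := by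
    rw [← Localization.AtPrime.map_eq_maximalIdeal]
    exact Ideal.mem_map_of_mem _ (le_of_isAssociatedPrime hq (mem_sup_span_singleton_self K x))
  have hdepth₂ : DepthGE 2 (K.map (algebraMap R (Localization.AtPrime q))) :=
    DepthGE.of_le_qDepth (WithBot.coe_le_coe.1 hdepth)
  have hdepth₁ := hdepth₂.sup_span_singleton hxq (isSMulRegular_quotient_map_localization hq.1 hx)
  refine hdepth₁.not_isAssociatedPrime_maximalIdeal ?_
  have hmap : K.map (algebraMap R (Localization.AtPrime q)) ⊔
      Ideal.span {algebraMap R (Localization.AtPrime q) x} =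
        (K ⊔ Ideal.span {x}).map (algebraMap R (Localization.AtPrime q)) := by
    rw [Ideal.map_sup, Ideal.map_span, Set.image_singleton]
  rw [hmap]
  exact isAssociatedPrime_map_localization hq

end SerreS2

section LocalGenerators

variable {R : Type u} [CommRing R] {A A' I q : Ideal R} {n n' : ℕ}

theorem ofList_cons_eq_sup (x : R) (T : List R) :
    Ideal.ofList (x :: T) = Ideal.ofList T ⊔ Ideal.span {x} := by
  rw [Ideal.ofList_cons, sup_comm]

theorem ofList_le_iff {T : List R} : Ideal.ofList T ≤ I ↔ ∀ x ∈ T, x ∈ I := Ideal.span_le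

theorem mem_ofList {T : List R} {x : R} (h : x ∈ T) : x ∈ Ideal.ofList T := Ideal.subset_span h

theorem ofList_mono {T T' : List R} (h : T ⊆ T') : Ideal.ofList T ≤ Ideal.ofList T' :=
  Ideal.span_mono h

theorem ofList_congr_perm {T T' : List R} (h : T.Perm T') : Ideal.ofList T = Ideal.ofList T' :=
  (ofList_mono h.subset).antisymm (ofList_mono h.symm.subset)

theorem mem_mul_ofList_or_exists_perm_cons {v : List R} {y : R} (hy : y ∈ Ideal.ofList v) :
    y ∈ q * Ideal.ofList v ∨
      ∃ w v' c, v.Perm (w :: v') ∧ c ∉ q ∧ ∃ r ∈ Ideal.ofList v', y = r + w * c := by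
  induction v generalizing y with
  | nil => left; simpa using hy
  | cons w v ih =>
    rw [ofList_cons_eq_sup] at hy
    obtain ⟨r, hr, c, rfl⟩ := mem_sup_span_singleton.1 hy
    by_cases hc : c ∈ q
    · rcases ih hr with h | ⟨w', v', c', hperm, hc', r', hr', rfl⟩
      · refine Or.inl (Ideal.add_mem _ ?_ ?_)
        · exact Ideal.mul_mono_right (ofList_mono (List.subset_cons_self _ _)) h
        · rw [mul_comm w c]
          exact Ideal.mul_mem_mul hc (mem_ofList List.mem_cons_self)
      · refine Or.inr ⟨w', w :: v', c', (hperm.cons w).trans (.swap _ _ _), hc', r' + w * c, ?_,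
          by ring⟩
        rw [ofList_cons_eq_sup]
        exact mem_sup_span_singleton.2 ⟨r', hr', c, rfl⟩
    · exact Or.inr ⟨w, v, c, .refl _, hc, r, hr, rfl⟩

/-- `I` is generated modulo `A` by at most `n` elements locally at `q`. -/
def GeneratedAt (A I q : Ideal R) (n : ℕ) : Prop :=
  ∃ v : List R, (∀ x ∈ v, x ∈ I) ∧ v.length ≤ n ∧ I ≤ saturationAt q (A ⊔ Ideal.ofList v)

namespace GeneratedAt

theorem mono (h : GeneratedAt A I q n) (hA : A ≤ A') (hn : n ≤ n') : GeneratedAt A' I q n' := by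
  obtain ⟨v, hvI, hlen, hle⟩ := h
  exact ⟨v, hvI, hlen.trans hn, hle.trans (saturationAt_mono _ (sup_le_sup_right hA _))⟩

theorem zero_iff : GeneratedAt A I q 0 ↔ I ≤ saturationAt q A := by
  constructor
  · rintro ⟨v, -, hlen, hle⟩
    obtain rfl : v = [] := List.length_eq_zero_iff.1 (Nat.le_zero.1 hlen)
    simpa using hle
  · exact fun h => ⟨[], by simp, by simp, by simpa using h⟩

theorem exchange (hq : q.IsPrime) (h : GeneratedAt A I q n) {x : R} (hxI : x ∈ I)
    (hx : x ∉ saturationAt q (A ⊔ q * I)) : GeneratedAt (A ⊔ Ideal.span {x}) I q (n - 1) := by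
  obtain ⟨v, hvI, hlen, hle⟩ := h
  obtain ⟨s, hs, hsx⟩ := (mem_saturationAt hq).1 (hle hxI)
  obtain ⟨a, ha, y, hy, hay⟩ := Submodule.mem_sup.1 hsx
  rcases mem_mul_ofList_or_exists_perm_cons (q := q) hy with hyq | ⟨w, v', c, hperm, hc, r, hr, hyr⟩
  · refine absurd ((mem_saturationAt hq).2 ⟨s, hs, ?_⟩) hx
    rw [← hay]
    exact Ideal.add_mem _ (Ideal.mem_sup_left ha)
      (Ideal.mem_sup_right (Ideal.mul_mono_right (ofList_le_iff.2 hvI) hyq))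
  · have hlen' := hperm.length_eq
    rw [List.length_cons] at hlen'
    refine ⟨v', fun z hz => hvI z (hperm.mem_iff.2 (List.mem_cons_of_mem _ hz)), by omega,
      hle.trans (saturationAt_le_saturationAt ?_)⟩
    have hw : c * w ∈ A ⊔ Ideal.span {x} ⊔ Ideal.ofList v' := by
      have hcw : c * w = s * x - a - r := by linear_combination hay - hyr
      rw [hcw]
      exact Ideal.sub_mem _ (Ideal.mem_sup_left (Ideal.sub_mem _
        (Ideal.mul_mem_left _ _ (mem_sup_span_singleton_self A x)) (Ideal.mem_sup_left ha)))
        (Ideal.mem_sup_right hr)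
    rw [ofList_congr_perm hperm, ofList_cons_eq_sup]
    refine sup_le ((le_sup_left.trans le_sup_left).trans (le_saturationAt _ _))
      (sup_le (le_sup_right.trans (le_saturationAt _ _)) ?_)
    rw [Ideal.span_singleton_le_iff_mem]
    exact (mem_saturationAt hq).2 ⟨c, hc, hw⟩

/-- Exchange the generators of `I` one by one for elements of `N`: the process stops when the
elements found so far generate `N`, or else when they generate `I`. -/
theorem exists_generators_or_le (hq : q.IsPrime) {N : Ideal R} (h : GeneratedAt A I q n)
    (hN : N ≤ I) :
    (∃ w : List R, (∀ x ∈ w, x ∈ N) ∧ w.length < n ∧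
      N ≤ saturationAt q (A ⊔ Ideal.ofList w ⊔ q * I)) ∨ I ≤ saturationAt q (A ⊔ N) := by
  induction n generalizing A with
  | zero => exact Or.inr ((zero_iff.1 h).trans (saturationAt_mono _ le_sup_left))
  | succ n ih =>
    by_cases hNq : N ≤ saturationAt q (A ⊔ q * I)
    · exact Or.inl ⟨[], by simp, by simp, by simpa using hNq⟩
    · obtain ⟨x, hxN, hx⟩ := SetLike.not_le_iff_exists.1 hNq
      rcases ih (h.exchange hq (hN hxN) hx) with ⟨w, hwN, hlen, hle⟩ | hle
      · refine Or.inl ⟨x :: w, List.forall_mem_cons.2 ⟨hxN, hwN⟩, by simpa using hlen, ?_⟩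
        rwa [Ideal.ofList_cons, ← sup_assoc]
      · rw [sup_assoc, sup_eq_right.2 ((Ideal.span_singleton_le_iff_mem _).2 hxN)] at hle
        exact Or.inr hle

theorem pred_of_not_le (hq : q.IsPrime) {N : Ideal R} (h : GeneratedAt A I q n)
    (hqI : q * I ≤ A) (hN : N ≤ I) (hIN : ¬ I ≤ saturationAt q (A ⊔ N)) :
    GeneratedAt A N q (n - 1) := by
  obtain ⟨w, hwN, hlen, hle⟩ := (h.exists_generators_or_le hq hN).resolve_right hIN
  refine ⟨w, hwN, by omega, ?_⟩
  rwa [sup_eq_left.2 (hqI.trans le_sup_left)] at hle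

end GeneratedAt

theorem not_generatedAt_iff_iSup_colon_le [IsNoetherianRing R] (hq : q.IsPrime) :
    ¬ GeneratedAt A I q n ↔ (⨆ (v : List R) (_ : (∀ x ∈ v, x ∈ I) ∧ v.length ≤ n),
      (A ⊔ Ideal.ofList v).colon (I : Set R)) ≤ q := by
  have hiff (v : List R) : I ≤ saturationAt q (A ⊔ Ideal.ofList v) ↔
      ¬ (A ⊔ Ideal.ofList v).colon (I : Set R) ≤ q :=
    le_saturationAt_iff_not_colon_le hq (IsNoetherian.noetherian _)
  simp only [GeneratedAt, hiff, iSup_le_iff, not_exists, not_and, not_not, and_imp]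

end LocalGenerators

section ResidualIntersections

variable {R : Type u} [CommRing R] {A B I J q : Ideal R} {T : List R} {l s : ℕ}

theorem le_of_isReduction (hq : q.IsPrime) (hJ : IsReduction J I) (h : J ≤ q) : I ≤ q := by
  obtain ⟨-, r, hr⟩ := hJ
  refine hq.le_of_pow_le (n := r + 1) ?_
  rw [hr]
  exact Ideal.mul_le_left.trans h

/-- The ideal `(T) : I`. -/
abbrev residual (I : Ideal R) (T : List R) : Ideal R := (Ideal.ofList T).colon (I : Set R)

theorem mem_colon_iff {x : R} : x ∈ A.colon (I : Set R) ↔ ∀ y ∈ I, x * y ∈ A :=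
  Submodule.mem_colon

theorem le_colon (A I : Ideal R) : A ≤ A.colon (I : Set R) := fun _ hx =>
  mem_colon_iff.2 fun _ _ => A.mul_mem_right _ hx

theorem ofList_cons_le_residual_sup (I : Ideal R) (x : R) (T : List R) :
    Ideal.ofList (x :: T) ≤ residual I T ⊔ Ideal.span {x} := by
  rw [ofList_cons_eq_sup]
  exact sup_le_sup_right (le_colon _ I) _

theorem colon_eq_colon_of_inf_le (hAB : A ≤ B) (h : B ⊓ I ≤ A) :
    A.colon (I : Set R) = B.colon (I : Set R) := by
  ext x
  rw [mem_colon_iff, mem_colon_iff]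
  exact ⟨fun hx y hy => hAB (hx y hy), fun hx y hy => h ⟨hx y hy, I.mul_mem_left _ hy⟩⟩

/-- `T` is a candidate for the beginning of a sequence of `s` elements generating `I` locally at all
primes of height less than `s`. -/
structure IsPartialResidual (I : Ideal R) (s : ℕ) (T : List R) : Prop where
  mem : ∀ x ∈ T, x ∈ I
  generatedAt : ∀ q : Ideal R, q.IsPrime → I ≤ q → natHeight q < s →
    GeneratedAt (Ideal.ofList T) I q (natHeight q - T.length)
  length_le : ∀ P : Ideal R, P.IsPrime → residual I T ≤ P → T.length ≤ natHeight P

/-- A list all of whose beginnings are partial residuals. Lists are extended at the front, so the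
suffixes of `T` are its beginnings. -/
def IsResidualSequence (I : Ideal R) (s : ℕ) (T : List R) : Prop :=
  ∀ T', T' <:+ T → IsPartialResidual I s T'

namespace IsResidualSequence

theorem isPartialResidual (h : IsResidualSequence I s T) : IsPartialResidual I s T :=
  h T (List.suffix_refl T)

theorem tail {x : R} (h : IsResidualSequence I s (x :: T)) : IsResidualSequence I s T :=
  fun T' hT' => h T' (hT'.trans (List.suffix_cons x T))

theorem cons {x : R} (h : IsResidualSequence I s T) (hx : IsPartialResidual I s (x :: T)) :
    IsResidualSequence I s (x :: T) := by
  intro T' hT'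
  rcases List.suffix_cons_iff.1 hT' with rfl | hT'
  exacts [hx, h T' hT']

end IsResidualSequence

/-- The hypotheses of the theorem: `R` is Cohen–Macaulay, `I` is proper, satisfies `G_l` and is
weakly `(l - 1)`-residually `S₂`. The first and third are in the form in which they are applied. -/
structure StandingHypotheses [IsLocalRing R] (I : Ideal R) (l : ℕ) : Prop where
  depthGE : DepthGE (natHeight (maximalIdeal R)) (⊥ : Ideal R)
  ne_top : I ≠ ⊤
  generatedAt : ∀ q : Ideal R, q.IsPrime → I ≤ q → natHeight q < l →
    GeneratedAt ⊥ I q (natHeight q)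
  weaklyResS2 : WeaklyResS2 I (l - 1)

theorem StandingHypotheses.isResidualSequence_nil [IsLocalRing R]
    (h : StandingHypotheses I l) (hs : s ≤ l) : IsResidualSequence I s [] := by
  intro T' hT'
  obtain rfl : T' = [] := List.suffix_nil.1 hT'
  refine ⟨by simp, fun q hq hI hlt => ?_, fun _ _ _ => by simp⟩
  simpa using h.generatedAt q hq hI (by omega)

/-- The properties of the residual intersection `(T) : I` that make generic constructions work: its
associated primes do not contain `I` and have height at most `T.length`, it meets `I` in `(T)`, its
hypersurface sections are unmixed as well, and it equals `(T)`, a complete intersection, as long as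
`T` is shorter than the height of `I`. -/
structure IsUnmixedResidual [IsLocalRing R] (I : Ideal R) (T : List R) : Prop where
  not_le : ∀ q, (residual I T).IsAssociatedPrime q → ¬ I ≤ q
  natHeight_le : ∀ q, (residual I T).IsAssociatedPrime q → natHeight q ≤ T.length
  inf_le : residual I T ⊓ I ≤ Ideal.ofList T
  natHeight_le_of_sup : ∀ x q, IsSMulRegular (R ⧸ residual I T) x →
    (residual I T ⊔ Ideal.span {x}).IsAssociatedPrime q → natHeight q ≤ T.length + 1
  eq_ofList : (∀ p : Ideal R, p.IsPrime → I ≤ p → T.length < natHeight p) →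
    residual I T = Ideal.ofList T
  depthGE : (∀ p : Ideal R, p.IsPrime → I ≤ p → T.length < natHeight p) →
    DepthGE (natHeight (maximalIdeal R) - T.length) (Ideal.ofList T)

theorem IsUnmixedResidual.sup_inf_le [IsLocalRing R] {x : R} (hT : IsUnmixedResidual I T)
    (hx : x ∈ I) : (residual I T ⊔ Ideal.span {x}) ⊓ I ≤ Ideal.ofList (x :: T) := by
  rintro y ⟨hy, hyI⟩
  obtain ⟨k, hk, t, rfl⟩ := mem_sup_span_singleton.1 hy
  have hkI : k ∈ I := (Ideal.add_mem_iff_left I (I.mul_mem_right _ hx)).1 hyI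
  rw [ofList_cons_eq_sup]
  exact mem_sup_span_singleton.2 ⟨k, hT.inf_le ⟨hk, hkI⟩, t, rfl⟩

variable [IsNoetherianRing R]

theorem mem_saturationAt_colon {c : R} (hq : q.IsPrime) :
    c ∈ saturationAt q (A.colon (I : Set R)) ↔ ∀ y ∈ I, c * y ∈ saturationAt q A := by
  refine ⟨fun hc y hy => ?_, fun h => ?_⟩
  · obtain ⟨s, hs, hsc⟩ := (mem_saturationAt hq).1 hc
    exact (mem_saturationAt hq).2 ⟨s, hs, mul_assoc s c y ▸ mem_colon_iff.1 hsc y hy⟩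
  · have hle : Ideal.span {c} * I ≤ saturationAt q A := Ideal.span_singleton_mul_le_iff.2 h
    obtain ⟨s, hs, hsc⟩ := (le_saturationAt_iff_exists_mul hq (IsNoetherian.noetherian _)).1 hle
    refine (mem_saturationAt hq).2 ⟨s, hs, mem_colon_iff.2 fun y hy => ?_⟩
    rw [mul_assoc]
    exact hsc _ (Ideal.mul_mem_mul (Ideal.mem_span_singleton_self c) hy)

theorem isAssociatedPrime_of_colon (h : (B.colon (I : Set R)).IsAssociatedPrime q) :
    B.IsAssociatedPrime q := by
  obtain ⟨w, hw, hws⟩ := exists_eq_colon_singleton h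
  have hnot := mt (mem_saturationAt_colon h.1).2 hws
  push Not at hnot
  obtain ⟨y, hy, hys⟩ := hnot
  obtain ⟨q₀, hq₀, hle, hcolon⟩ := exists_isAssociatedPrime_of_notMem_saturationAt h.1 hys
  have hqq₀ : q ≤ q₀ := by
    intro r hr
    rw [hw, Submodule.mem_colon_singleton, smul_eq_mul, mem_colon_iff] at hr
    refine hcolon (Submodule.mem_colon_singleton.2 ?_)
    rw [smul_eq_mul, ← mul_assoc]
    exact hr y hy
  rwa [le_antisymm hqq₀ hle]

theorem GeneratedAt.not_residual_le (hq : q.IsPrime)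
    (h : GeneratedAt (Ideal.ofList T) I q 0) : ¬ residual I T ≤ q :=
  (le_saturationAt_iff_not_colon_le hq (IsNoetherian.noetherian _)).1 (zero_iff.1 h)

theorem IsPartialResidual.length_lt (h : IsPartialResidual I s T) (hs : T.length < s)
    (hq : q.IsPrime) (hI : I ≤ q) (hK : residual I T ≤ q) : T.length < natHeight q := by
  by_contra! hle
  have hgen := h.generatedAt q hq hI (by omega)
  rw [Nat.sub_eq_zero_of_le hle] at hgen
  exact hgen.not_residual_le hq hK

namespace IsPartialResidual

theorem inf_le_of_natHeight_le (h : IsPartialResidual I s T) (hT : T.length < s)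
    (hTB : Ideal.ofList T ≤ B) (hBI : B ⊓ I ≤ Ideal.ofList T)
    (hB : ∀ q, B.IsAssociatedPrime q → natHeight q ≤ T.length) :
    residual I T ⊓ I ≤ Ideal.ofList T := by
  rintro x ⟨hxK, hxI⟩
  by_contra hxT
  obtain ⟨q, hq, hle⟩ := exists_isAssociatedPrime_of_notMem fun hxB => hxT (hBI ⟨hxB, hxI⟩)
  have hIq : I ≤ q := fun y hy => hle <| Submodule.mem_colon_singleton.2 <| by
    rw [smul_eq_mul, mul_comm]
    exact hTB (mem_colon_iff.1 hxK y hy)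
  have hKq : residual I T ≤ q := fun y hy => hle <| Submodule.mem_colon_singleton.2 <|
    hTB (mem_colon_iff.1 hy x hxI)
  exact (hB q hq).not_gt (h.length_lt hT hq.1 hIq hKq)

theorem isGeometricRI (h : IsPartialResidual I s T) (hT : T.length < s) (hne : residual I T ≠ ⊤)
    (hq : q.IsPrime) (hIq : I ≤ q) (hqT : natHeight q ≤ T.length) :
    IsGeometricRI I (residual I T) T.length := by
  classical
  refine ⟨⟨hne, (ht_le_natHeight hq hIq).trans (by exact_mod_cast hqT),
    natCast_le_ht_iff.2 h.length_le, Ideal.ofList T, ofList_le_iff.2 h.mem,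
    ⟨T.toFinset, T.toFinset_card_le, by simp [Ideal.ofList]⟩, rfl⟩, ?_⟩
  exact_mod_cast natCast_le_ht_iff.2 fun P hP hle =>
    h.length_lt hT hP (le_sup_left.trans hle) (le_sup_right.trans hle)

variable [IsLocalRing R]

/-- If `I` has height at most `T.length`, condition `S₂` applies; otherwise `(T) : I = (T)` is a
complete intersection. -/
theorem natHeight_le_of_isAssociatedPrime_sup (h : IsPartialResidual I s T)
    (hI : StandingHypotheses I l) (hsl : s ≤ l) (hT : T.length < s)
    (hK : ∀ q, (residual I T).IsAssociatedPrime q → natHeight q ≤ T.length)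
    (hdepth : (∀ p : Ideal R, p.IsPrime → I ≤ p → T.length < natHeight p) →
      DepthGE (natHeight (maximalIdeal R) - T.length) (residual I T)) {x : R}
    (hx : IsSMulRegular (R ⧸ residual I T) x)
    (hq : (residual I T ⊔ Ideal.span {x}).IsAssociatedPrime q) : natHeight q ≤ T.length + 1 := by
  have hKq : residual I T ≤ q := le_sup_left.trans (le_of_isAssociatedPrime hq)
  have hxq : x ∈ q := le_of_isAssociatedPrime hq (mem_sup_span_singleton_self _ x)
  by_cases hheight : ∃ p : Ideal R, p.IsPrime ∧ I ≤ p ∧ natHeight p ≤ T.length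
  · obtain ⟨p, hp, hIp, hpT⟩ := hheight
    have hne : residual I T ≠ ⊤ := fun htop => hq.1.ne_top (top_le_iff.1 (htop ▸ hKq))
    have hS2 := hI.weaklyResS2 _ (by omega) _ (h.isGeometricRI hT hne hp hIp hpT)
    obtain ⟨q₀, hq₀, hle⟩ := exists_isAssociatedPrime_le hq.1 hKq
    have hlt : q₀ < q :=
      lt_of_le_of_ne hle fun heq => notMem_of_isSMulRegular_quotient hx hq₀ (heq ▸ hxq)
    have hadj := natHeight_le_add_one_of_adjacent hI.depthGE hq₀.1 hq.1 hlt
      fun P hP hq₀P hPq => by_contra fun hne =>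
        not_lt_of_quotS2 hS2 hx hq hq₀.1 hP (le_of_isAssociatedPrime hq₀) hq₀P
          (lt_of_le_of_ne hPq hne)
    have := hK q₀ hq₀
    omega
  · push Not at hheight
    have hm := hheight _ (maximalIdeal.isMaximal R).isPrime (le_maximalIdeal hI.ne_top)
    have hsup : DepthGE (natHeight (maximalIdeal R) - T.length - 1)
        (residual I T ⊔ Ideal.span {x}) := by
      refine DepthGE.sup_span_singleton ?_ (le_maximalIdeal hq.1.ne_top hxq) hx
      convert hdepth hheight using 1; omega
    have := hsup.natHeight_add_le hq
    omega

/-- One step of the induction on the length of `T`: for `T = x :: T'`, the ideal `B` is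
`((T') : I) + (x)`. -/
theorem isUnmixedResidual (h : IsPartialResidual I s T) (hI : StandingHypotheses I l)
    (hsl : s ≤ l) (hT : T.length < s) (hTB : Ideal.ofList T ≤ B) (hBI : B ⊓ I ≤ Ideal.ofList T)
    (hB : ∀ q, B.IsAssociatedPrime q → natHeight q ≤ T.length)
    (hBT : (∀ p : Ideal R, p.IsPrime → I ≤ p → T.length < natHeight p) →
      B = Ideal.ofList T ∧ DepthGE (natHeight (maximalIdeal R) - T.length) (Ideal.ofList T)) :
    IsUnmixedResidual I T := by
  have hK (q) (hq : (residual I T).IsAssociatedPrime q) : natHeight q ≤ T.length := by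
    rw [residual, colon_eq_colon_of_inf_le hTB hBI] at hq
    exact hB q (isAssociatedPrime_of_colon hq)
  have heq (hheight : ∀ p : Ideal R, p.IsPrime → I ≤ p → T.length < natHeight p) :
      residual I T = Ideal.ofList T := by
    refine le_antisymm (fun w hw => ?_) (le_colon _ _)
    by_contra hwT
    rw [← (hBT hheight).1] at hwT
    obtain ⟨q, hq, hle⟩ := exists_isAssociatedPrime_of_notMem hwT
    refine (hB q hq).not_gt (hheight q hq.1 fun y hy => hle ?_)
    rw [Submodule.mem_colon_singleton, smul_eq_mul, mul_comm]
    exact hTB (mem_colon_iff.1 hw y hy)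
  exact
    { not_le := fun q hq hIq =>
        (hK q hq).not_gt (h.length_lt hT hq.1 hIq (le_of_isAssociatedPrime hq))
      natHeight_le := hK
      inf_le := h.inf_le_of_natHeight_le hT hTB hBI hB
      natHeight_le_of_sup := fun x q => h.natHeight_le_of_isAssociatedPrime_sup hI hsl hT hK
        fun hheight => heq hheight ▸ (hBT hheight).2
      eq_ofList := heq
      depthGE := fun hheight => (hBT hheight).2 }

end IsPartialResidual

/-- The primes at which a generic extension of `T` has to contain a minimal generator of `I`. -/
def deficientPrimes (I : Ideal R) (s : ℕ) (T : List R) : Set (Ideal R) :=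
  {q | q.IsPrime ∧ I ≤ q ∧ natHeight q < s ∧ T.length < natHeight q ∧
    ¬ GeneratedAt (Ideal.ofList T) I q (natHeight q - T.length - 1)}

theorem IsPartialResidual.finite_deficientPrimes (h : IsPartialResidual I s T) :
    (deficientPrimes I s T).Finite := by
  have hsub : deficientPrimes I s T ⊆ ⋃ e ∈ Finset.range (s + 1),
      (I ⊔ ⨆ (v : List R) (_ : (∀ x ∈ v, x ∈ I) ∧ v.length ≤ e),
        (Ideal.ofList T ⊔ Ideal.ofList v).colon (I : Set R)).minimalPrimes := by
    rintro q ⟨hq, hI, hs, hTq, hgen⟩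
    refine Set.mem_biUnion (x := natHeight q - T.length - 1) (Finset.mem_range.2 (by omega))
      ⟨⟨hq, sup_le hI ((not_generatedAt_iff_iSup_colon_le hq).1 hgen)⟩, ?_⟩
    rintro P ⟨hP, hle⟩ hPq
    rcases eq_or_lt_of_le hPq with rfl | hlt
    · exact le_rfl
    · have := natHeight_lt hP hq hlt
      have hgenP := h.generatedAt P hP (le_sup_left.trans hle) (by omega)
      exact absurd (hgenP.mono le_rfl (by omega))
        ((not_generatedAt_iff_iSup_colon_le hP).2 (le_sup_right.trans hle))
  exact (Set.Finite.biUnion (Finset.finite_toSet _) fun _ _ =>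
    Ideal.finite_minimalPrimes_of_isNoetherianRing R _).subset hsub

theorem IsPartialResidual.cons {z : R} (h : IsPartialResidual I s T) (hzI : z ∈ I)
    (hT : T.length + 1 < s)
    (hdef : ∀ q ∈ deficientPrimes I s T, z ∉ saturationAt q (Ideal.ofList T ⊔ q * I))
    (hass : ∀ q, (residual I T).IsAssociatedPrime q → z ∉ q) : IsPartialResidual I s (z :: T) := by
  have hgen (q : Ideal R) (hq : q.IsPrime) (hI : I ≤ q) (hs : natHeight q < s) :
      GeneratedAt (Ideal.ofList (z :: T)) I q (natHeight q - (z :: T).length) := by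
    have hgen := h.generatedAt q hq hI hs
    rw [ofList_cons_eq_sup, List.length_cons, ← Nat.sub_sub]
    by_cases hTq : T.length < natHeight q
    · by_cases hgen' : GeneratedAt (Ideal.ofList T) I q (natHeight q - T.length - 1)
      · exact hgen'.mono le_sup_left le_rfl
      · exact hgen.exchange hq hzI (hdef q ⟨hq, hI, hs, hTq, hgen'⟩)
    · exact hgen.mono le_sup_left (by omega)
  refine ⟨List.forall_mem_cons.2 ⟨hzI, h.mem⟩, hgen, fun P hP hle => ?_⟩
  have hKP : residual I T ≤ P :=
    (Submodule.colon_mono (ofList_mono (List.subset_cons_self _ _)) le_rfl).trans hle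
  by_cases hI : I ≤ P
  · by_contra! hlen
    have hgenP := hgen P hP hI (by rw [List.length_cons] at hlen; omega)
    rw [Nat.sub_eq_zero_of_le hlen.le] at hgenP
    exact hgenP.not_residual_le hP hle
  · obtain ⟨q₀, hq₀, hq₀P⟩ := exists_isAssociatedPrime_le hP hKP
    have hzP : z ∈ P := hle (le_colon _ _ (mem_ofList List.mem_cons_self))
    have hlt := natHeight_lt hq₀.1 hP (lt_of_le_of_ne hq₀P fun heq => hass q₀ hq₀ (heq ▸ hzP))
    have := h.length_le q₀ hq₀.1 (le_of_isAssociatedPrime hq₀)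
    rw [List.length_cons]
    omega

theorem pow_le_saturationAt_of_le_sup_mul (hq : q.IsPrime) {r : ℕ} (hr : I ^ (r + 1) = J * I ^ r)
    (h : J ≤ saturationAt q (A ⊔ q * I)) : I ^ (r + 1) ≤ saturationAt q A := by
  have hle : I ^ (r + 1) ≤ saturationAt q (A * I ^ r ⊔ q * I ^ (r + 1)) :=
    calc I ^ (r + 1) = J * I ^ r := hr
      _ ≤ saturationAt q (A ⊔ q * I) * I ^ r := Ideal.mul_mono_left h
      _ ≤ saturationAt q ((A ⊔ q * I) * I ^ r) := saturationAt_mul_le _ _ _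
      _ = saturationAt q (A * I ^ r ⊔ q * I ^ (r + 1)) := by
        rw [Ideal.sup_mul, mul_assoc, ← pow_succ']
  exact (le_saturationAt_of_le_sup_mul hq (IsNoetherian.noetherian _) hle).trans
    (saturationAt_mono _ Ideal.mul_le_left)

variable [IsLocalRing R]

theorem IsUnmixedResidual.isSMulRegular {x : R} (hT : IsUnmixedResidual I T)
    (h : IsPartialResidual I s (x :: T)) : IsSMulRegular (R ⧸ residual I T) x := by
  refine isSMulRegular_quotient_of_forall_notMem fun q hq hxq => ?_
  have hle : Ideal.ofList (x :: T) ≤ q := by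
    rw [ofList_cons_eq_sup, sup_le_iff, Ideal.span_singleton_le_iff_mem]
    exact ⟨(le_colon _ I).trans (le_of_isAssociatedPrime hq), hxq⟩
  by_cases hK : residual I (x :: T) ≤ q
  · exact (h.length_le q hq.1 hK).not_gt (Nat.lt_succ_of_le (hT.natHeight_le q hq))
  · rw [residual, ← le_saturationAt_iff_not_colon_le hq.1 (IsNoetherian.noetherian _)] at hK
    exact hT.not_le q hq (hK.trans (saturationAt_le_of_le_prime hq.1 hle))

theorem IsResidualSequence.isUnmixedResidual (h : IsResidualSequence I s T)
    (hI : StandingHypotheses I l) (hsl : s ≤ l) (hT : T.length < s) : IsUnmixedResidual I T := by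
  induction T with
  | nil =>
    refine h.isPartialResidual.isUnmixedResidual hI hsl hT (B := ⊥) (by simp) (by simp) ?_ ?_
    · intro q hq
      have := hI.depthGE.natHeight_add_le hq
      rw [List.length_nil]
      omega
    · exact fun _ => ⟨by simp, by simpa using hI.depthGE⟩
  | cons x T ih =>
    rw [List.length_cons] at hT
    have hunmixed := ih h.tail (by omega)
    have hreg := hunmixed.isSMulRegular h.isPartialResidual
    have hxI : x ∈ I := h.isPartialResidual.mem x List.mem_cons_self
    refine h.isPartialResidual.isUnmixedResidual hI hsl hT (B := residual I T ⊔ Ideal.span {x})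
      (ofList_cons_le_residual_sup I x T) (hunmixed.sup_inf_le hxI)
      (fun q => hunmixed.natHeight_le_of_sup x q hreg) fun hheight => ?_
    · have hheight' (p : Ideal R) (hp : p.IsPrime) (hIp : I ≤ p) : T.length < natHeight p :=
        (Nat.lt_succ_self _).trans (hheight p hp hIp)
      have heq := hunmixed.eq_ofList hheight'
      have hm := hheight _ (maximalIdeal.isMaximal R).isPrime (le_maximalIdeal hI.ne_top)
      rw [List.length_cons] at hm ⊢
      rw [heq] at hreg
      rw [ofList_cons_eq_sup, heq]
      refine ⟨rfl, DepthGE.sup_span_singleton ?_ (le_maximalIdeal hI.ne_top hxI) hreg⟩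
      convert hunmixed.depthGE hheight' using 1; omega

theorem IsResidualSequence.generic_cons (h : IsResidualSequence I s T)
    (hI : StandingHypotheses I l) (hsl : s ≤ l) (hJ : IsReduction J I)
    (hJs : ∀ q : Ideal R, q.IsPrime → I ≤ q → natHeight q < s → ¬ J.colon (I : Set R) ≤ q)
    (hT : T.length + 1 < s) : Generic J fun z => IsResidualSequence I s (z :: T) := by
  have hunmixed := h.isUnmixedResidual hI hsl (by omega)
  have hdef : Generic J fun z => ∀ q ∈ deficientPrimes I s T,
      z ∉ saturationAt q (Ideal.ofList T ⊔ q * I) := by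
    refine Generic.forall_mem_finite h.isPartialResidual.finite_deficientPrimes ?_
    rintro q ⟨hq, hIq, hs, -, hgen⟩
    refine Generic.notMem fun hle => hgen ?_
    have hIJ : I ≤ saturationAt q J :=
      (le_saturationAt_iff_not_colon_le hq (IsNoetherian.noetherian _)).2 (hJs q hq hIq hs)
    have hIT : I ≤ saturationAt q (Ideal.ofList T) :=
      le_saturationAt_of_le_sup_mul hq (IsNoetherian.noetherian _)
        (hIJ.trans (saturationAt_le_saturationAt hle))
    exact (GeneratedAt.zero_iff.2 hIT).mono le_rfl (Nat.zero_le _)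
  have hass : Generic J fun z => ∀ q ∈ {q | (residual I T).IsAssociatedPrime q}, z ∉ q :=
    Generic.forall_mem_finite (finite_setOf_isAssociatedPrime _) fun q hq =>
      Generic.notMem fun hle => hunmixed.not_le q hq (le_of_isReduction hq.1 hJ hle)
  exact (hdef.and hass).mono fun z hz hgen =>
    h.cons (h.isPartialResidual.cons (hJ.1 hz) hT hgen.1 hgen.2)

theorem IsUnmixedResidual.not_residual_le (hT : IsUnmixedResidual I T) (hq : q.IsPrime) {n : ℕ}
    (h : I ^ n ≤ saturationAt q (residual I T)) : ¬ residual I T ≤ q := by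
  intro hle
  obtain ⟨q₀, hq₀, hq₀q⟩ := exists_isAssociatedPrime_le hq hle
  exact hT.not_le q₀ hq₀ (hq₀.1.le_of_pow_le (h.trans ((saturationAt_anti hq₀q).trans
    (saturationAt_le_of_le_prime hq₀.1 (le_of_isAssociatedPrime hq₀)))))

theorem IsUnmixedResidual.not_colon_le (hT : IsUnmixedResidual I T) (hq : q.IsPrime)
    (hJ : IsReduction J I) (hTJ : ∀ x ∈ T, x ∈ J)
    (h : J ≤ saturationAt q (Ideal.ofList T ⊔ q * I)) : ¬ J.colon (I : Set R) ≤ q := by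
  obtain ⟨-, r, hr⟩ := hJ
  have hpow := pow_le_saturationAt_of_le_sup_mul hq hr h
  refine mt (Submodule.colon_mono (ofList_le_iff.2 hTJ) le_rfl).trans ?_
  exact hT.not_residual_le hq (hpow.trans (saturationAt_mono _ (le_colon _ _)))

theorem StandingHypotheses.exists_isResidualSequence [Infinite (ResidueField R)]
    (hI : StandingHypotheses I l) (hJ : IsReduction J I) (hsl : s + 1 ≤ l)
    (hJs : ∀ q : Ideal R, q.IsPrime → I ≤ q → natHeight q < s + 1 → ¬ J.colon (I : Set R) ≤ q)
    (hq : q.IsPrime) (hgen : GeneratedAt ⊥ I q (s + 1)) :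
    ∃ T, IsResidualSequence I (s + 1) T ∧ T.length = s ∧ (∀ x ∈ T, x ∈ J) ∧
      (J ≤ saturationAt q (Ideal.ofList T ⊔ q * I) ∨ GeneratedAt (Ideal.ofList T) I q 1) := by
  have hcons (T : List R) (hT : IsResidualSequence I (s + 1) T ∧
      (J ≤ saturationAt q (Ideal.ofList T ⊔ q * I) ∨
        GeneratedAt (Ideal.ofList T) I q (s + 1 - T.length))) (hlen : T.length < s) :
      Generic J fun z => IsResidualSequence I (s + 1) (z :: T) ∧
        (J ≤ saturationAt q (Ideal.ofList (z :: T) ⊔ q * I) ∨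
          GeneratedAt (Ideal.ofList (z :: T)) I q (s + 1 - (z :: T).length)) := by
    refine ((hT.1.generic_cons hI hsl hJ hJs (by omega)).and (Generic.forall_notMem_of_finite
      (Set.finite_singleton (saturationAt q (Ideal.ofList T ⊔ q * I))))).mono ?_
    rintro z hz ⟨hzT, hzq⟩
    refine ⟨hzT, ?_⟩
    by_cases hJq : J ≤ saturationAt q (Ideal.ofList T ⊔ q * I)
    · exact Or.inl (hJq.trans (saturationAt_mono _
        (sup_le_sup_right (ofList_mono (List.subset_cons_self _ _)) _)))
    · right
      rw [ofList_cons_eq_sup, List.length_cons, ← Nat.sub_sub]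
      exact (hT.2.resolve_left hJq).exchange hq (hJ.1 hz) (hzq _ rfl hJq)
  obtain ⟨T, ⟨hT, hTq⟩, hlen, hTJ⟩ := exists_list_of_generic (J := J) s _
    ⟨hI.isResidualSequence_nil hsl, Or.inr (by simpa using hgen)⟩ fun T hT hlen _ => hcons T hT hlen
  rw [hlen, Nat.add_sub_cancel_left] at hTq
  exact ⟨T, hT, hlen, hTJ, hTq⟩

theorem StandingHypotheses.not_colon_le [Infinite (ResidueField R)]
    (hI : StandingHypotheses I l) (hJ : IsReduction J I) (hsl : s ≤ l) (hq : q.IsPrime)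
    (hIq : I ≤ q) (hs : natHeight q = s) (hgen : GeneratedAt ⊥ I q s) :
    ¬ J.colon (I : Set R) ≤ q := by
  induction s using Nat.strong_induction_on generalizing q with
  | _ s ih =>
  have hJs (P : Ideal R) (hP : P.IsPrime) (hIP : I ≤ P) (hlt : natHeight P < s) :
      ¬ J.colon (I : Set R) ≤ P :=
    ih (natHeight P) hlt (by omega) hP hIP rfl (hI.generatedAt P hP hIP (by omega))
  have hcolon (h : I ≤ saturationAt q J) : ¬ J.colon (I : Set R) ≤ q :=
    (le_saturationAt_iff_not_colon_le hq (IsNoetherian.noetherian _)).1 h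
  rcases s with _ | s
  · exact hcolon ((GeneratedAt.zero_iff.1 hgen).trans (saturationAt_mono _ bot_le))
  obtain ⟨T, hT, hlen, hTJ, hTq⟩ := hI.exists_isResidualSequence hJ hsl hJs hq hgen
  by_cases hJq : J ≤ saturationAt q (Ideal.ofList T ⊔ q * I)
  · exact (hT.isUnmixedResidual hI hsl (by omega)).not_colon_le hq hJ hTJ hJq
  · obtain ⟨z, hz, hz'⟩ := SetLike.not_le_iff_exists.1 hJq
    have hgen' := (hTq.resolve_left hJq).exchange hq (hJ.1 hz) hz'
    refine hcolon ((GeneratedAt.zero_iff.1 hgen').trans (saturationAt_mono _ ?_))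
    exact sup_le (ofList_le_iff.2 hTJ) ((Ideal.span_singleton_le_iff_mem _).2 hz)

end ResidualIntersections

section ReesAlgebra

open Polynomial

variable {S : Type u} [CommRing S] {I N : Ideal S}

/-- The homogeneous element `x tⁿ` of the Rees algebra, as a linear function of `x ∈ Iⁿ`. -/
noncomputable def reesMonomial (I : Ideal S) (n : ℕ) : (I ^ n : Ideal S) →ₗ[S] reesAlgebra I :=
  ((monomial n).comp (I ^ n).subtype).codRestrict (Subalgebra.toSubmodule (reesAlgebra I))
    fun x => reesAlgebra.monomial_mem.2 x.2

theorem coe_reesMonomial (n : ℕ) (x : (I ^ n : Ideal S)) :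
    (reesMonomial I n x : S[X]) = monomial n (x : S) := rfl

theorem reesMonomial_mul {n m : ℕ} (x : (I ^ n : Ideal S)) (y : (I ^ m : Ideal S)) :
    reesMonomial I n x * reesMonomial I m y =
      reesMonomial I (n + m) ⟨x * y, pow_add I n m ▸ Ideal.mul_mem_mul x.2 y.2⟩ :=
  Subtype.ext (monomial_mul_monomial n m (x : S) y)

theorem reesMonomial_one_pow {x : S} (hx : x ∈ I ^ 1) (n : ℕ) :
    reesMonomial I 1 ⟨x, hx⟩ ^ n =
      reesMonomial I n ⟨x ^ n, Ideal.pow_mem_pow (pow_one I ▸ hx) n⟩ :=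
  Subtype.ext ((monomial_pow 1 x n).trans (by rw [one_mul]; rfl))

/-- The homogeneous component of degree `n` of an element of the Rees algebra. -/
noncomputable def reesComponent (n : ℕ) (f : reesAlgebra I) : reesAlgebra I :=
  reesMonomial I n ⟨(f : S[X]).coeff n, f.2 n⟩

theorem coe_reesComponent (n : ℕ) (f : reesAlgebra I) :
    (reesComponent n f : S[X]) = monomial n ((f : S[X]).coeff n) := rfl

theorem sum_reesComponent (f : reesAlgebra I) :
    ∑ n ∈ (f : S[X]).support, reesComponent n f = f :=
  Subtype.ext ((AddSubmonoidClass.coe_finsetSum _ _).trans (f : S[X]).as_sum_support.symm)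

/-- The standard grading of the Rees algebra. -/
noncomputable def reesGrading (I : Ideal S) (n : ℕ) : Submodule S (reesAlgebra I) :=
  LinearMap.range (reesMonomial I n)

theorem coeff_coeAddMonoidHom (x : DirectSum ℕ fun n => reesGrading I n) (n : ℕ) :
    (DirectSum.coeAddMonoidHom (reesGrading I) x : S[X]).coeff n =
      ((x n : reesAlgebra I) : S[X]).coeff n := by
  induction x using DirectSum.induction_on with
  | zero => simp
  | of m y =>
    obtain ⟨_, z, rfl⟩ := y
    rw [DirectSum.coeAddMonoidHom_of]
    by_cases h : m = n
    · subst h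
      rw [DirectSum.of_eq_same]
    · rw [DirectSum.of_eq_of_ne _ _ _ (Ne.symm h), coe_reesMonomial, coeff_monomial, if_neg h]
      simp
  | add x y hx hy =>
    simp only [map_add, Subalgebra.coe_add, coeff_add, hx, hy, DirectSum.add_apply,
      Submodule.coe_add]

/-- The family of homogeneous components, as an element of the direct sum. -/
noncomputable def reesDecompose (f : reesAlgebra I) : DirectSum ℕ fun n => reesGrading I n :=
  DirectSum.mk _ (f : S[X]).support fun n => ⟨reesComponent n f, _, rfl⟩

theorem coe_reesDecompose (f : reesAlgebra I) (n : ℕ) :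
    (reesDecompose f n : reesAlgebra I) = reesComponent n f := by
  by_cases hn : n ∈ (f : S[X]).support
  · rw [reesDecompose, DirectSum.mk_apply_of_mem hn]
  · rw [reesDecompose, DirectSum.mk_apply_of_notMem hn]
    refine Subtype.ext ?_
    rw [coe_reesComponent]
    simp [notMem_support_iff.1 hn]

noncomputable instance : GradedAlgebra (reesGrading I) where
  one_mem := ⟨⟨1, by simp⟩, rfl⟩
  mul_mem := by
    rintro n m _ _ ⟨x, rfl⟩ ⟨y, rfl⟩
    exact ⟨_, (reesMonomial_mul x y).symm⟩
  decompose' := reesDecompose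
  left_inv f := by
    ext n
    rw [coeff_coeAddMonoidHom, coe_reesDecompose, coe_reesComponent, coeff_monomial_same]
  right_inv x := by
    ext n k
    obtain ⟨y, hy⟩ := (x n).2
    rw [coe_reesDecompose, coe_reesComponent, coeff_coeAddMonoidHom, ← hy, coe_reesMonomial,
      coeff_monomial_same]

theorem isHomogeneousElem_reesMonomial (n : ℕ) (x : (I ^ n : Ideal S)) :
    SetLike.IsHomogeneousElem (reesGrading I) (reesMonomial I n x) :=
  ⟨n, x, rfl⟩

/-- The coefficient ideal of degree `n` of an ideal `P` of the Rees algebra: all `x ∈ Iⁿ` such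
that `x tⁿ ∈ P`. -/
noncomputable def coeffIdeal (n : ℕ) (P : Ideal (reesAlgebra I)) : Ideal S :=
  ((P.restrictScalars S).comap (reesMonomial I n)).map (I ^ n).subtype

theorem mem_coeffIdeal {n : ℕ} {P : Ideal (reesAlgebra I)} {x : S} :
    x ∈ coeffIdeal n P ↔ ∃ h : x ∈ I ^ n, reesMonomial I n ⟨x, h⟩ ∈ P := by
  simp [coeffIdeal]

theorem coeffIdeal_mono (n : ℕ) {P Q : Ideal (reesAlgebra I)} (h : P ≤ Q) :
    coeffIdeal n P ≤ coeffIdeal n Q :=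
  Submodule.map_mono fun _ hx => h hx

theorem coeffIdeal_mul_le (n m : ℕ) (P Q : Ideal (reesAlgebra I)) :
    coeffIdeal n P * coeffIdeal m Q ≤ coeffIdeal (n + m) (P * Q) := by
  rw [Ideal.mul_le]
  intro x hx y hy
  obtain ⟨hxI, hxP⟩ := mem_coeffIdeal.1 hx
  obtain ⟨hyI, hyQ⟩ := mem_coeffIdeal.1 hy
  exact mem_coeffIdeal.2 ⟨pow_add I n m ▸ Ideal.mul_mem_mul hxI hyI,
    reesMonomial_mul ⟨x, hxI⟩ ⟨y, hyI⟩ ▸ Ideal.mul_mem_mul hxP hyQ⟩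

theorem coeffIdeal_top (n : ℕ) : coeffIdeal n (⊤ : Ideal (reesAlgebra I)) = I ^ n := by
  ext x
  simp [mem_coeffIdeal]

theorem pow_le_coeffIdeal_pow {P : Ideal (reesAlgebra I)} (h : I ≤ coeffIdeal 1 P) (n : ℕ) :
    I ^ n ≤ coeffIdeal n (P ^ n) := by
  induction n with
  | zero => rw [pow_zero P, Ideal.one_eq_top, coeffIdeal_top]
  | succ n ih =>
    rw [pow_succ, pow_succ]
    exact (Ideal.mul_mono ih h).trans (coeffIdeal_mul_le _ _ _ _)

theorem coeffIdeal_homogeneousCore (n : ℕ) (P : Ideal (reesAlgebra I)) :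
    coeffIdeal n (P.homogeneousCore (reesGrading I)).toIdeal = coeffIdeal n P := by
  refine le_antisymm (coeffIdeal_mono n (Ideal.toIdeal_homogeneousCore_le _ P)) fun x hx => ?_
  obtain ⟨hxI, hxP⟩ := mem_coeffIdeal.1 hx
  exact mem_coeffIdeal.2 ⟨hxI, Ideal.mem_homogeneousCore_of_homogeneous_of_mem
    (isHomogeneousElem_reesMonomial n _) hxP⟩

/-- The ideal of the Rees algebra generated by the degree-one elements `x t` with
`x ∈ N ∩ I`. -/
noncomputable def linearIdeal (I N : Ideal S) : Ideal (reesAlgebra I) :=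
  Ideal.span (reesMonomial I 1 '' {x | (x : S) ∈ N})

theorem linearIdeal_le_iff (hN : N ≤ I) {P : Ideal (reesAlgebra I)} :
    linearIdeal I N ≤ P ↔ N ≤ coeffIdeal 1 P := by
  rw [linearIdeal, Ideal.span_le, Set.image_subset_iff]
  constructor
  · intro h x hx
    have hxI : x ∈ I ^ 1 := (pow_one I).symm ▸ hN hx
    exact mem_coeffIdeal.2 ⟨hxI, h (a := ⟨x, hxI⟩) hx⟩
  · intro h x hx
    exact (mem_coeffIdeal.1 (h hx)).2

/-- The ideal of the Rees algebra defining the special fiber ring. -/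
noncomputable abbrev fiberIdeal [IsLocalRing S] (I : Ideal S) : Ideal (reesAlgebra I) :=
  (maximalIdeal S).map (algebraMap S (reesAlgebra I))

theorem coeff_mem_of_mem_span {G : Set (reesAlgebra I)} {W : Ideal S} {n : ℕ}
    (h : ∀ (c : reesAlgebra I), ∀ g ∈ G, (c * g : S[X]).coeff n ∈ W) {f : reesAlgebra I}
    (hf : f ∈ Ideal.span G) : (f : S[X]).coeff n ∈ W := by
  suffices ∀ c : reesAlgebra I, (c * f : S[X]).coeff n ∈ W by simpa using this 1
  induction hf using Submodule.span_induction with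
  | mem g hg => exact fun c => h c g hg
  | zero => simp
  | add f g _ _ hf hg =>
    intro c
    rw [Subalgebra.coe_add, mul_add, coeff_add]
    exact add_mem (hf c) (hg c)
  | smul a f _ hf =>
    intro c
    rw [smul_eq_mul, Subalgebra.coe_mul, ← mul_assoc]
    exact hf (c * a)

theorem coeff_succ_mem_of_mem_fiberIdeal_sup_linearIdeal [IsLocalRing S] {f : reesAlgebra I}
    (hf : f ∈ fiberIdeal I ⊔ linearIdeal I N) (n : ℕ) :
    (f : S[X]).coeff (n + 1) ∈ N * I ^ n ⊔ maximalIdeal S * I ^ (n + 1) := by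
  rw [fiberIdeal, linearIdeal, Ideal.map, ← Ideal.span_union] at hf
  refine coeff_mem_of_mem_span ?_ hf
  rintro c _ (⟨x, hx, rfl⟩ | ⟨x, hx, rfl⟩)
  · refine Ideal.mem_sup_right ?_
    change ((c : S[X]) * C x).coeff (n + 1) ∈ _
    rw [coeff_mul_C, mul_comm _ x]
    exact Ideal.mul_mem_mul hx (c.2 _)
  · refine Ideal.mem_sup_left ?_
    rw [coe_reesMonomial, coeff_mul_monomial, mul_comm _ (x : S)]
    exact Ideal.mul_mem_mul hx (c.2 _)

theorem isReduction_of_forall_isPrime [IsNoetherianRing S] [IsLocalRing S] (hN : N ≤ I)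
    (h : ∀ P : Ideal (reesAlgebra I), P.IsPrime → fiberIdeal I ≤ P → N ≤ coeffIdeal 1 P →
      I ≤ coeffIdeal 1 P) : IsReduction N I := by
  have hrad : linearIdeal I I ≤ (fiberIdeal I ⊔ linearIdeal I N).radical := by
    rw [Ideal.radical_eq_sInf]
    rintro f hf
    refine Submodule.mem_sInf.2 fun P ⟨hQP, hP⟩ => ?_
    obtain ⟨hmP, hNP⟩ := sup_le_iff.1 hQP
    exact (linearIdeal_le_iff le_rfl).2 (h P hP hmP ((linearIdeal_le_iff hN).1 hNP)) hf
  obtain ⟨n, hn⟩ := Ideal.exists_pow_le_of_le_radical_of_fg hrad (IsNoetherian.noetherian _)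
  have hle : I ^ (n + 1) ≤ N * I ^ n ⊔ maximalIdeal S • I ^ (n + 1) := by
    intro x hx
    obtain ⟨hxI, hxQ⟩ := mem_coeffIdeal.1
      (pow_le_coeffIdeal_pow ((linearIdeal_le_iff le_rfl).1 le_rfl) (n + 1) hx)
    have := coeff_succ_mem_of_mem_fiberIdeal_sup_linearIdeal
      (hn (Ideal.pow_le_pow_right n.le_succ hxQ)) n
    rwa [coe_reesMonomial, coeff_monomial_same] at this
  refine ⟨hN, n, le_antisymm (Submodule.le_of_le_smul_of_le_jacobson_bot
    (IsNoetherian.noetherian _) (maximalIdeal_le_jacobson _) hle) ?_⟩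
  rw [pow_succ']
  exact Ideal.mul_mono_left hN

theorem le_coeffIdeal_one_of_isReduction (h : IsReduction N I) {P : Ideal (reesAlgebra I)}
    (hP : P.IsPrime) (hN : N ≤ coeffIdeal 1 P) : I ≤ coeffIdeal 1 P := by
  obtain ⟨-, r, hr⟩ := h
  intro x hx
  have hx1 : x ∈ I ^ 1 := (pow_one I).symm ▸ hx
  have hIr : I ^ (r + 1) ≤ coeffIdeal (r + 1) P := by
    rw [hr, mul_comm, ← coeffIdeal_top r]
    exact (Ideal.mul_mono_right hN).trans
      ((coeffIdeal_mul_le r 1 ⊤ P).trans (coeffIdeal_mono _ Ideal.mul_le_right))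
  obtain ⟨_, hmem⟩ := mem_coeffIdeal.1 (hIr (Ideal.pow_mem_pow hx (r + 1)))
  exact mem_coeffIdeal.2 ⟨hx1, hP.mem_of_pow_mem (r + 1) (reesMonomial_one_pow hx1 _ ▸ hmem)⟩

/-- The ideal of all elements of the Rees algebra with constant term in the maximal ideal. -/
noncomputable def irrelevantIdeal [IsLocalRing S] (I : Ideal S) : Ideal (reesAlgebra I) :=
  (maximalIdeal S).comap ((constantCoeff : S[X] →+* S).comp (reesAlgebra I).val.toRingHom)

theorem homogeneousCore_lt_irrelevantIdeal [IsLocalRing S] {P : Ideal (reesAlgebra I)}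
    (hP : P.IsPrime) (h : ¬ I ≤ coeffIdeal 1 P) :
    (P.homogeneousCore (reesGrading I)).toIdeal < irrelevantIdeal I := by
  refine lt_of_le_of_ne (fun f hf => ?_) fun heq => h ?_
  · have hf0 : reesComponent 0 f ∈ P := by
      rw [← coe_reesDecompose]
      exact Ideal.toIdeal_homogeneousCore_le _ P
        ((P.homogeneousCore (reesGrading I)).isHomogeneous 0 hf)
    intro hunit
    exact hP.ne_top (Ideal.eq_top_of_isUnit_mem _ hf0 (hunit.map (algebraMap S (reesAlgebra I))))
  · rw [← coeffIdeal_homogeneousCore, heq]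
    refine fun x hx => mem_coeffIdeal.2 ⟨(pow_one I).symm ▸ hx, ?_⟩
    change constantCoeff (monomial 1 x) ∈ maximalIdeal S
    rw [constantCoeff_apply, coeff_monomial, if_neg one_ne_zero]
    exact zero_mem _

end ReesAlgebra

section Reductions

variable {R S : Type u} [CommRing R] [CommRing S] {I J : Ideal R}

theorem isReduction_self (I : Ideal R) : IsReduction I I :=
  ⟨le_rfl, 0, by simp⟩

theorem IsReduction.map (f : R →+* S) (h : IsReduction J I) :
    IsReduction (J.map f) (I.map f) := by
  obtain ⟨hJI, r, hr⟩ := h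
  refine ⟨Ideal.map_mono hJI, r, ?_⟩
  rw [← Ideal.map_pow, hr, Ideal.map_mul, Ideal.map_pow]

theorem isReduction_of_le_sup_maximalIdeal_mul [IsNoetherianRing R] [IsLocalRing R]
    {A : Ideal R} (hJ : IsReduction J I) (hA : A ≤ I) (h : J ≤ A ⊔ maximalIdeal R * I) :
    IsReduction A I := by
  obtain ⟨-, r, hr⟩ := hJ
  have hle : I ^ (r + 1) ≤ A * I ^ r ⊔ maximalIdeal R • I ^ (r + 1) :=
    calc I ^ (r + 1) = J * I ^ r := hr
      _ ≤ (A ⊔ maximalIdeal R * I) * I ^ r := Ideal.mul_mono_left h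
      _ = _ := by rw [Ideal.sup_mul, mul_assoc, ← pow_succ', smul_eq_mul]
  refine ⟨hA, r, le_antisymm (Submodule.le_of_le_smul_of_le_jacobson_bot
    (IsNoetherian.noetherian _) (maximalIdeal_le_jacobson _) hle) ?_⟩
  rw [pow_succ']
  exact Ideal.mul_mono_left hA

theorem sup_span_singleton_pow_succ_le (J : Ideal R) (y : R) (n : ℕ) :
    (J ⊔ Ideal.span {y}) ^ (n + 1) ≤
      J * (J ⊔ Ideal.span {y}) ^ n ⊔ Ideal.span {y ^ (n + 1)} := by
  induction n with
  | zero => simp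
  | succ n ih =>
    set K := J ⊔ Ideal.span {y} with hK
    have hy : Ideal.span {y ^ (n + 1)} ≤ K ^ (n + 1) := by
      rw [← Ideal.span_singleton_pow]
      exact Ideal.pow_right_mono le_sup_right _
    calc K ^ (n + 1 + 1) ≤ (J * K ^ n ⊔ Ideal.span {y ^ (n + 1)}) * K := by
          rw [pow_succ]
          exact Ideal.mul_mono_left ih
      _ = J * K ^ (n + 1) ⊔ (Ideal.span {y ^ (n + 1)} * J ⊔ Ideal.span {y ^ (n + 1 + 1)}) := by
          rw [Ideal.sup_mul, mul_assoc, ← pow_succ, hK, Ideal.mul_sup,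
            Ideal.span_singleton_mul_span_singleton, ← pow_succ]
      _ ≤ J * K ^ (n + 1) ⊔ Ideal.span {y ^ (n + 1 + 1)} := by
          rw [← sup_assoc]
          refine sup_le_sup_right (sup_le le_rfl ?_) _
          rw [mul_comm]
          exact Ideal.mul_mono_right hy

/-- The determinant trick for multiplication by `x` on `I ^ r`, where `x I ^ r ⊆ J I ^ r`. -/
theorem IsReduction.exists_monic_eval_eq_zero [IsNoetherianRing R] (hJ : IsReduction J I) {x : R}
    (hx : x ∈ I) : ∃ p : Polynomial R, p.Monic ∧
      (∀ k, p.coeff k ∈ J ^ (p.natDegree - k)) ∧ p.eval x = 0 := by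
  obtain ⟨-, r, hr⟩ := hJ
  let g : Module.End R (I ^ r : Ideal R) := algebraMap R _ x
  have hg : LinearMap.range g ≤ J • ⊤ := by
    rintro _ ⟨y, rfl⟩
    have hxy : x * y ∈ (J • (⊤ : Submodule R (I ^ r : Ideal R))).map (I ^ r).subtype := by
      rw [Submodule.map_smul'', Submodule.map_top, Submodule.range_subtype, smul_eq_mul, ← hr,
        pow_succ']
      exact Ideal.mul_mem_mul hx y.2
    obtain ⟨z, hz, hzy⟩ := hxy
    rwa [← show z = g y from Subtype.ext hzy]
  obtain ⟨p, hp, -, hcoeff, hpg⟩ :=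
    LinearMap.exists_monic_and_natDegree_eq_and_coeff_mem_pow_and_aeval_eq_zero R g J hg
  have heval : ∀ y ∈ I ^ r, p.eval x * y = 0 := by
    intro y hy
    rw [show Polynomial.aeval g p = algebraMap R _ (p.eval x) by
      rw [Polynomial.aeval_algebraMap_apply, Polynomial.coe_aeval_eq_eval]] at hpg
    exact congrArg Subtype.val (LinearMap.congr_fun hpg ⟨y, hy⟩)
  nontriviality R
  refine ⟨p * Polynomial.X ^ r, hp.mul (Polynomial.monic_X_pow r), fun k => ?_, ?_⟩
  · rw [hp.natDegree_mul (Polynomial.monic_X_pow r), Polynomial.natDegree_X_pow,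
      Polynomial.coeff_mul_X_pow']
    split_ifs with hk
    · rw [show p.natDegree + r - k = p.natDegree - (k - r) by omega]
      exact hcoeff (k - r)
    · exact zero_mem _
  · rw [Polynomial.eval_mul, Polynomial.eval_pow, Polynomial.eval_X]
    exact heval _ (Ideal.pow_mem_pow hx r)

theorem IsReduction.sup_span_singleton [IsNoetherianRing R] (hJ : IsReduction J I) {y : R}
    (hy : y ∈ I) : IsReduction J (J ⊔ Ideal.span {y}) := by
  set K := J ⊔ Ideal.span {y}
  have hJK : J ≤ K := le_sup_left
  obtain ⟨p, hp, hcoeff, hpy⟩ := hJ.exists_monic_eval_eq_zero hy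
  set n := p.natDegree with hn
  have hterm (k : ℕ) (hk : k < n) : p.coeff k * y ^ (k + 1) ∈ J * K ^ n := by
    have hyK : y ^ (k + 1) ∈ K ^ (k + 1) := Ideal.pow_mem_pow (Ideal.mem_sup_right
      (Ideal.mem_span_singleton_self y)) _
    refine (?_ : J ^ (n - k) * K ^ (k + 1) ≤ J * K ^ n) (Ideal.mul_mem_mul (hcoeff k) hyK)
    rw [show n - k = n - (k + 1) + 1 by omega, pow_succ', mul_assoc]
    refine Ideal.mul_mono_right ((Ideal.mul_mono_left (Ideal.pow_right_mono hJK _)).trans ?_)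
    rw [← pow_add, Nat.sub_add_cancel hk]
  have hsum : y ^ (n + 1) = -∑ k ∈ Finset.range n, p.coeff k * y ^ (k + 1) := by
    rw [Polynomial.eval_eq_sum_range, Finset.sum_range_succ, hp.coeff_natDegree, one_mul,
      ← hn] at hpy
    rw [eq_neg_iff_add_eq_zero, ← mul_zero y, ← hpy, mul_add, Finset.mul_sum, add_comm, pow_succ']
    exact congrArg (· + _) (Finset.sum_congr rfl fun k _ => by ring)
  refine ⟨hJK, n, le_antisymm ?_ ?_⟩
  · refine (sup_span_singleton_pow_succ_le J y n).trans (sup_le le_rfl ?_)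
    rw [Ideal.span_singleton_le_iff_mem, hsum, neg_mem_iff]
    exact Ideal.sum_mem _ fun k hk => hterm k (Finset.mem_range.1 hk)
  · rw [pow_succ']
    exact Ideal.mul_mono_left hJK

end Reductions

section FiberGeneric

variable {R S : Type u} [CommRing R] [CommRing S] [IsLocalRing S] {f : R →+* S} {I : Ideal R}
  {T : List R} {e : ℕ}

/-- The list `T` of elements of `R` is generic in the special fiber of the ideal `I` of `S` with
respect to the dimension bound `e`: in the projective special fiber of `I`, every point `P` at which
all elements of `T` vanish (as linear forms) has closure of dimension less than `e - T.length`.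
The coheight is taken in the spectrum of the Rees algebra, that is, on the affine cone. -/
def IsFiberGeneric (f : R →+* S) (I : Ideal S) (T : List R) (e : ℕ) : Prop :=
  ∀ P : PrimeSpectrum (reesAlgebra I), fiberIdeal I ≤ P.asIdeal →
    Ideal.ofList T ≤ (coeffIdeal 1 P.asIdeal).comap f → ¬ I ≤ coeffIdeal 1 P.asIdeal →
    Order.coheight P + (T.length : ℕ∞) ≤ (e : ℕ∞)

theorem isFiberGeneric_nil (f : R →+* S) {I : Ideal S}
    (h : fiberDim I ≤ ((e : ℕ∞) : WithBot ℕ∞)) : IsFiberGeneric f I [] e := by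
  intro P hP _ _
  have hdim : ((Order.coheight P : ℕ∞) : WithBot ℕ∞) ≤ fiberDim I := by
    rw [Order.coheight_eq_krullDim_Ici, fiberDim, rDim, ringKrullDim_quotient]
    exact Order.krullDim_le_of_strictMono
      (fun x : Set.Ici P => ⟨x.1, (PrimeSpectrum.mem_zeroLocus _ _).2 (hP.trans x.2)⟩)
      fun _ _ hab => hab
  simpa using WithBot.coe_le_coe.1 (hdim.trans h)

/-- The linear forms vanishing at some generic point of the closed subscheme of the projective
special fiber of `I S` that is defined by `T`, as ideals of `R`. -/
def fiberPrimes (f : R →+* S) (I : Ideal R) (T : List R) : Set (Ideal R) :=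
  (fun P => (coeffIdeal 1 P).comap f) ''
    {P | P ∈ (fiberIdeal (I.map f) ⊔ linearIdeal (I.map f) ((Ideal.ofList T).map f)).minimalPrimes ∧
      ¬ I.map f ≤ coeffIdeal 1 P}

theorem finite_fiberPrimes [IsNoetherianRing S] (f : R →+* S) (I : Ideal R) (T : List R) :
    (fiberPrimes f I T).Finite :=
  ((Ideal.finite_minimalPrimes_of_isNoetherianRing _ _).subset fun _ hP => hP.1).image _

theorem not_le_of_mem_fiberPrimes {J V : Ideal R} (hV : V ∈ fiberPrimes f I T)
    (hJ : IsReduction J I) : ¬ J ≤ V := by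
  obtain ⟨P, ⟨hP, hIP⟩, rfl⟩ := hV
  exact fun hle => hIP
    (le_coeffIdeal_one_of_isReduction (hJ.map f) hP.1.1 (Ideal.map_le_iff_le_comap.2 hle))

theorem fiberIdeal_sup_linearIdeal_le_iff (hT : ∀ x ∈ T, x ∈ I)
    {P : Ideal (reesAlgebra (I.map f))} :
    fiberIdeal (I.map f) ⊔ linearIdeal (I.map f) ((Ideal.ofList T).map f) ≤ P ↔
      fiberIdeal (I.map f) ≤ P ∧ Ideal.ofList T ≤ (coeffIdeal 1 P).comap f := by
  rw [sup_le_iff, linearIdeal_le_iff (Ideal.map_mono (ofList_le_iff.2 hT)),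
    Ideal.map_le_iff_le_comap (K := coeffIdeal 1 P)]

theorem ofList_le_of_mem_fiberPrimes {V : Ideal R} (hT : ∀ x ∈ T, x ∈ I)
    (hV : V ∈ fiberPrimes f I T) : Ideal.ofList T ≤ V := by
  obtain ⟨P, ⟨hP, -⟩, rfl⟩ := hV
  exact ((fiberIdeal_sup_linearIdeal_le_iff hT).1 hP.1.2).2

namespace IsFiberGeneric

theorem cons (h : IsFiberGeneric f (I.map f) T e) (hT : ∀ x ∈ T, x ∈ I) {z : R}
    (hzV : ∀ V ∈ fiberPrimes f I T, z ∉ V) : IsFiberGeneric f (I.map f) (z :: T) e := by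
  intro P hmP hTP hIP
  obtain ⟨hzP, hTP⟩ : z ∈ _ ∧ Ideal.ofList T ≤ _ :=
    ⟨hTP (mem_ofList List.mem_cons_self), (ofList_mono (List.subset_cons_self z T)).trans hTP⟩
  obtain ⟨P₀, hP₀, hP₀P⟩ :=
    Ideal.exists_minimalPrimes_le ((fiberIdeal_sup_linearIdeal_le_iff hT).2 ⟨hmP, hTP⟩)
  have hIP₀ : ¬ I.map f ≤ coeffIdeal 1 P₀ := fun hle => hIP (hle.trans (coeffIdeal_mono 1 hP₀P))
  have hlt : (⟨P₀, hP₀.1.1⟩ : PrimeSpectrum (reesAlgebra (I.map f))) < P := by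
    refine lt_of_le_of_ne hP₀P ?_
    rintro rfl
    exact hzV _ ⟨P₀, ⟨hP₀, hIP₀⟩, rfl⟩ hzP
  obtain ⟨hmP₀, hTP₀⟩ := (fiberIdeal_sup_linearIdeal_le_iff hT).1 hP₀.1.2
  calc Order.coheight P + ((z :: T).length : ℕ∞)
      = Order.coheight P + 1 + (T.length : ℕ∞) := by
        rw [List.length_cons, Nat.cast_add, Nat.cast_one, add_assoc, add_comm (1 : ℕ∞)]
    _ ≤ _ := add_le_add_left (Order.coheight_add_one_le hlt) _
    _ ≤ e := h ⟨P₀, hP₀.1.1⟩ hmP₀ hTP₀ hIP₀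

theorem generic_cons [IsNoetherianRing S] (h : IsFiberGeneric f (I.map f) T e)
    (hT : ∀ x ∈ T, x ∈ I) {J : Ideal R} (hJ : IsReduction J I) :
    Generic J fun z => IsFiberGeneric f (I.map f) (z :: T) e :=
  ⟨fiberPrimes f I T, finite_fiberPrimes f I T, fun _ hV => not_le_of_mem_fiberPrimes hV hJ,
    fun _ _ hzV => h.cons hT hzV⟩

theorem isReduction [IsNoetherianRing S] (h : IsFiberGeneric f (I.map f) T e)
    (hT : ∀ x ∈ T, x ∈ I) (he : e ≤ T.length) :
    IsReduction ((Ideal.ofList T).map f) (I.map f) := by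
  refine isReduction_of_forall_isPrime (Ideal.map_mono (ofList_le_iff.2 hT)) fun P hP hmP hTP => ?_
  by_contra hIP
  have hprime : (irrelevantIdeal (I.map f)).IsPrime := Ideal.comap_isPrime _ _
  let P' : PrimeSpectrum (reesAlgebra (I.map f)) :=
    ⟨(P.homogeneousCore (reesGrading (I.map f))).toIdeal, Ideal.IsPrime.homogeneousCore hP⟩
  have hlt : P' < ⟨_, hprime⟩ := homogeneousCore_lt_irrelevantIdeal hP hIP
  have hmP' : fiberIdeal (I.map f) ≤ P'.asIdeal := by
    rw [fiberIdeal, Ideal.map_le_iff_le_comap] at hmP ⊢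
    exact fun x hx => Ideal.mem_homogeneousCore_of_homogeneous_of_mem
      (isHomogeneousElem_reesMonomial 0 ⟨x, by simp⟩) (hmP hx)
  have hcoeff : coeffIdeal 1 P'.asIdeal = coeffIdeal 1 P := coeffIdeal_homogeneousCore 1 P
  have hdim := h P' hmP' (hcoeff ▸ Ideal.map_le_iff_le_comap.1 hTP) (hcoeff ▸ hIP)
  have hone : (1 : ℕ∞) ≤ Order.coheight P' := le_add_self.trans (Order.coheight_add_one_le hlt)
  have : 1 + T.length ≤ e := by exact_mod_cast (add_le_add_left hone _).trans hdim
  omega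

end IsFiberGeneric

end FiberGeneric

section FiberDimension

variable {S : Type u} [CommRing S] {I J : Ideal S} {d : ℕ}

theorem IsReduction.exists_pow_succ_eq (h : IsReduction J I) :
    ∃ r, ∀ n, r ≤ n → I ^ (n + 1) = J * I ^ n := by
  obtain ⟨-, r, hr⟩ := h
  refine ⟨r, fun n hn => ?_⟩
  obtain ⟨k, rfl⟩ := Nat.exists_eq_add_of_le hn
  rw [add_right_comm, pow_add, hr, mul_assoc, ← pow_add]

/-- The map to the Rees algebra of `I` from the polynomial ring that sends the variables to given
elements of `I` in degree one. -/
noncomputable def reesAeval (a : Fin d → (I ^ 1 : Ideal S)) :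
    MvPolynomial (Fin d) S →ₐ[S] reesAlgebra I :=
  MvPolynomial.aeval fun i => reesMonomial I 1 (a i)

theorem reesMonomial_succ_mem {a : Fin d → (I ^ 1 : Ideal S)} {n : ℕ}
    {M : Submodule S (reesAlgebra I)}
    (hn : I ^ (n + 1) = Ideal.span (Set.range fun i => (a i : S)) * I ^ n)
    (hM : ∀ i, ∀ x : (I ^ n : Ideal S), reesMonomial I 1 (a i) * reesMonomial I n x ∈ M)
    (x : (I ^ (n + 1) : Ideal S)) : reesMonomial I (n + 1) x ∈ M := by
  let N : Ideal S := (M.comap (reesMonomial I (n + 1))).map (I ^ (n + 1)).subtype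
  have hle : Ideal.span (Set.range fun i => (a i : S)) ≤ N.colon (I ^ n : Ideal S) := by
    rw [Ideal.span_le]
    rintro _ ⟨i, rfl⟩
    refine mem_colon_iff.2 fun y hy => ?_
    have hay : (a i : S) * y ∈ I ^ (n + 1) := by
      rw [pow_succ']
      exact Ideal.mul_mem_mul ((pow_one I).le (a i).2) hy
    have hmul : reesMonomial I (n + 1) ⟨a i * y, hay⟩ =
        reesMonomial I 1 (a i) * reesMonomial I n ⟨y, hy⟩ := by
      rw [reesMonomial_mul]
      exact Subtype.ext (congrArg (Polynomial.monomial · ((a i : S) * y)) (add_comm n 1))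
    exact ⟨⟨a i * y, hay⟩, show reesMonomial I (n + 1) _ ∈ M from hmul ▸ hM i ⟨y, hy⟩, rfl⟩
  have hxN : (x : S) ∈ N := Ideal.mul_le.2 (fun b hb y hy => mem_colon_iff.1 (hle hb) y hy)
    (hn ▸ x.2)
  obtain ⟨x', hx', hxx'⟩ := hxN
  rwa [← show x' = x from Subtype.ext hxx']

theorem finite_reesAeval [IsNoetherianRing S] {a : Fin d → (I ^ 1 : Ideal S)}
    (h : IsReduction (Ideal.span (Set.range fun i => (a i : S))) I) :
    (reesAeval a).toRingHom.Finite := by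
  let : Algebra (MvPolynomial (Fin d) S) (reesAlgebra I) := (reesAeval a).toAlgebra
  have : IsScalarTower S (MvPolynomial (Fin d) S) (reesAlgebra I) :=
    .of_algebraMap_eq' (reesAeval a).comp_algebraMap.symm
  obtain ⟨r, hr⟩ := h.exists_pow_succ_eq
  let M : Submodule (MvPolynomial (Fin d) S) (reesAlgebra I) :=
    ⨆ n ∈ Finset.range (r + 1), Submodule.span _ (reesGrading I n)
  have hfg : M.FG := by
    refine Submodule.fg_biSup _ _ fun n _ => ?_
    obtain ⟨s, hs⟩ := (IsNoetherian.noetherian (⊤ : Submodule S (I ^ n : Ideal S))).map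
      (reesMonomial I n)
    refine ⟨s, ?_⟩
    rw [reesGrading, LinearMap.range_eq_map, ← hs, Submodule.span_span_of_tower]
  have hsmall (n : ℕ) (hn : n < r + 1) (x) : reesMonomial I n x ∈ M :=
    Submodule.mem_iSup_of_mem n (Submodule.mem_iSup_of_mem (Finset.mem_range.2 hn)
      (Submodule.subset_span ⟨x, rfl⟩))
  have hmem (n : ℕ) : ∀ x, reesMonomial I n x ∈ M.restrictScalars S := by
    induction n with
    | zero => exact hsmall 0 r.succ_pos
    | succ n ih =>
      intro x
      rcases le_or_gt r n with hn | hn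
      · refine reesMonomial_succ_mem (hr n hn) (fun i y => ?_) x
        have : reesMonomial I 1 (a i) =
            algebraMap (MvPolynomial (Fin d) S) (reesAlgebra I) (.X i) :=
          (MvPolynomial.aeval_X (fun i => reesMonomial I 1 (a i)) i).symm
        rw [this, ← Algebra.smul_def]
        exact M.smul_mem _ (ih y)
      · exact hsmall _ (Nat.succ_lt_succ hn) x
  suffices hM : M = ⊤ from ⟨hM ▸ hfg⟩
  refine eq_top_iff.2 fun f _ => ?_
  rw [← sum_reesComponent f]
  exact M.sum_mem fun n _ => hmem n _

theorem ringKrullDim_quotient_map_maximalIdeal [IsLocalRing S] (d : ℕ) :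
    ringKrullDim (MvPolynomial (Fin d) S ⧸ (maximalIdeal S).map MvPolynomial.C) = d := by
  let := Ideal.Quotient.field (maximalIdeal S)
  rw [ringKrullDim_eq_of_ringEquiv (MvPolynomial.quotientEquivQuotientMvPolynomial
      (σ := Fin d) (maximalIdeal S)).symm.toRingEquiv,
    MvPolynomial.ringKrullDim_of_isNoetherianRing, ringKrullDim_eq_zero_of_field, zero_add,
    Nat.card_fin]

theorem ringKrullDim_quotient_le_of_isIntegral {A B : Type*} [CommRing A] [CommRing B] {f : A →+* B}
    (hf : f.IsIntegral) {K : Ideal A} {L : Ideal B} (h : K ≤ L.comap f) :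
    ringKrullDim (B ⧸ L) ≤ ringKrullDim (A ⧸ K) := by
  algebraize [f]
  rw [ringKrullDim_quotient, ringKrullDim_quotient]
  refine Order.krullDim_le_of_strictMono (fun P => ⟨PrimeSpectrum.comap f P.1, ?_⟩) ?_
  · exact (PrimeSpectrum.mem_zeroLocus _ _).2
      (h.trans (Ideal.comap_mono ((PrimeSpectrum.mem_zeroLocus _ _).1 P.2)))
  · rintro ⟨P, -⟩ ⟨Q, -⟩ (hPQ : P.asIdeal < Q.asIdeal)
    exact Ideal.IsIntegral.comap_lt_comap (R := A) hPQ

theorem fiberDim_le [IsLocalRing S] [IsNoetherianRing S] {T : List S}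
    (h : IsReduction (Ideal.ofList T) I) : fiberDim I ≤ ((T.length : ℕ∞) : WithBot ℕ∞) := by
  let a (i : Fin T.length) : (I ^ 1 : Ideal S) :=
    ⟨T.get i, (pow_one I).symm ▸ h.1 (mem_ofList (T.get_mem i))⟩
  have hspan : Ideal.span (Set.range fun i => (a i : S)) = Ideal.ofList T :=
    congrArg Ideal.span (Set.range_list_get T)
  rw [← hspan] at h
  have hle : (maximalIdeal S).map MvPolynomial.C ≤
      (fiberIdeal I).comap (reesAeval a).toRingHom := by
    rw [Ideal.map_le_iff_le_comap]
    intro y hy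
    change reesAeval a (algebraMap S _ y) ∈ fiberIdeal I
    rw [AlgHom.commutes]
    exact Ideal.mem_map_of_mem _ hy
  refine (ringKrullDim_quotient_le_of_isIntegral (finite_reesAeval h).to_isIntegral hle).trans_eq ?_
  rw [ringKrullDim_quotient_map_maximalIdeal]
  rfl

end FiberDimension

section MinimalReductions

variable {R : Type u} [CommRing R] [IsLocalRing R]

theorem saturationAt_maximalIdeal (N : Ideal R) : saturationAt (maximalIdeal R) N = N := by
  refine le_antisymm (fun x hx => ?_) (le_saturationAt _ _)
  obtain ⟨s, hs, hsx⟩ := (mem_saturationAt (maximalIdeal.isMaximal R).isPrime).1 hx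
  exact (Ideal.unit_mul_mem_iff_mem _ (notMem_maximalIdeal.1 hs)).1 hsx

variable [IsNoetherianRing R] {I J K : Ideal R}

/-- A reduction generated by as few elements as possible is minimal. -/
theorem exists_isMinimalReduction_le (hJ : IsReduction J I) :
    ∃ J₀ ≤ J, IsMinimalReduction J₀ I := by
  classical
  have hex : ∃ n, ∃ T : List R, T.length = n ∧ Ideal.ofList T ≤ J ∧
      IsReduction (Ideal.ofList T) I := by
    obtain ⟨s, rfl⟩ := IsNoetherian.noetherian J
    have hs : Ideal.ofList s.toList = Ideal.span (s : Set R) := by simp [Ideal.ofList]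
    exact ⟨_, s.toList, rfl, hs.le, hs ▸ hJ⟩
  obtain ⟨T, hlen, hTJ, hT⟩ := Nat.find_spec hex
  refine ⟨Ideal.ofList T, hTJ, hT, fun J' hJ' hJ'T => le_antisymm hJ'T ?_⟩
  have hgen : GeneratedAt ⊥ (Ideal.ofList T) (maximalIdeal R) (Nat.find hex) :=
    ⟨T, fun _ => mem_ofList, hlen.le, by simpa using le_saturationAt _ _⟩
  rcases hgen.exists_generators_or_le (maximalIdeal.isMaximal R).isPrime hJ'T with
    ⟨w, hwJ', hlt, hle⟩ | hle
  · rw [saturationAt_maximalIdeal, bot_sup_eq] at hle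
    have hw := ofList_le_iff.2 hwJ'
    refine absurd ⟨w, rfl, hw.trans (hJ'T.trans hTJ), ?_⟩ (Nat.find_min hex hlt)
    exact isReduction_of_le_sup_maximalIdeal_mul hJ' (hw.trans hJ'.1)
      (hle.trans (sup_le_sup_left (Ideal.mul_mono_right hT.1) _))
  · rwa [saturationAt_maximalIdeal, bot_sup_eq] at hle

theorem core_le_of_isReduction (hJ : IsReduction J I) : core I ≤ J := by
  obtain ⟨J₀, hJ₀J, hJ₀⟩ := exists_isMinimalReduction_le hJ
  exact (sInf_le hJ₀ : core I ≤ J₀).trans hJ₀J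

theorem le_colon_of_mul_le_core (hK : K * I ≤ core I) (hJ : IsReduction J I) :
    K ≤ J.colon (I : Set R) := fun _ hx =>
  mem_colon_iff.2 fun _ hy => core_le_of_isReduction hJ (hK (Ideal.mul_mem_mul hx hy))

end MinimalReductions

section GenericSequences

variable {R : Type u} [CommRing R] [IsLocalRing R] {I J J' : Ideal R} {T : List R} {l : ℕ}

/-- A sequence in `I` that is general enough for the arguments below: its beginnings define
residual intersections as long as there are fewer than `l` elements, and `l` elements generate a
reduction. -/
structure IsGenericSequence (I : Ideal R) (l : ℕ) (T : List R) : Prop where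
  mem : ∀ x ∈ T, x ∈ I
  isResidualSequence : T.length < l → IsResidualSequence I l T
  isFiberGeneric : IsFiberGeneric (RingHom.id R) I T l

theorem IsGenericSequence.isReduction [IsNoetherianRing R] (h : IsGenericSequence I l T)
    (hT : T.length = l) : IsReduction (Ideal.ofList T) I := by
  have hfib : IsFiberGeneric (RingHom.id R) (I.map (RingHom.id R)) T l :=
    (Ideal.map_id I).symm ▸ h.isFiberGeneric
  simpa only [Ideal.map_id] using hfib.isReduction h.mem hT.ge

theorem StandingHypotheses.isGenericSequence_nil (hI : StandingHypotheses I l)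
    (hl : fiberDim I = ((l : ℕ∞) : WithBot ℕ∞)) : IsGenericSequence I l [] :=
  ⟨by simp, fun _ => hI.isResidualSequence_nil le_rfl, isFiberGeneric_nil _ hl.le⟩

variable [IsNoetherianRing R]

theorem IsGenericSequence.isUnmixedResidual (h : IsGenericSequence I l T)
    (hI : StandingHypotheses I l) (hT : T.length < l) : IsUnmixedResidual I T :=
  (h.isResidualSequence hT).isUnmixedResidual hI le_rfl hT

variable [Infinite (ResidueField R)]

theorem IsGenericSequence.generic_cons (h : IsGenericSequence I l T) (hI : StandingHypotheses I l)
    (hJ : IsReduction J I) (hT : T.length < l) :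
    Generic J fun z => IsGenericSequence I l (z :: T) := by
  have hres : Generic J fun z => (z :: T).length < l → IsResidualSequence I l (z :: T) := by
    by_cases hlt : T.length + 1 < l
    · refine ((h.isResidualSequence hT).generic_cons hI le_rfl hJ (fun q hq hIq hq' => ?_)
        hlt).mono fun _ _ hz _ => hz
      exact hI.not_colon_le hJ hq'.le hq hIq rfl (hI.generatedAt q hq hIq hq')
    · exact Generic.of_forall fun _ _ hz => absurd hz hlt
  have hfib : Generic J fun z => IsFiberGeneric (RingHom.id R) I (z :: T) l := by
    have hfibT : IsFiberGeneric (RingHom.id R) (I.map (RingHom.id R)) T l :=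
      (Ideal.map_id I).symm ▸ h.isFiberGeneric
    simpa only [Ideal.map_id] using hfibT.generic_cons h.mem hJ
  exact (hres.and hfib).mono fun z hz hgen =>
    ⟨List.forall_mem_cons.2 ⟨hJ.1 hz, h.mem⟩, hgen.1, hgen.2⟩

theorem StandingHypotheses.exists_sublists_isGenericSequence (hI : StandingHypotheses I l)
    (hl : fiberDim I = ((l : ℕ∞) : WithBot ℕ∞)) (hJ : IsReduction J I) :
    ∃ A : List R, (∀ S, S.Sublist A → IsGenericSequence I l S) ∧ A.length = l ∧
      ∀ x ∈ A, x ∈ J := by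
  refine exists_list_of_generic l (fun A => ∀ S, S.Sublist A → IsGenericSequence I l S) ?_ ?_
  · intro S hS
    rw [List.sublist_nil.1 hS]
    exact hI.isGenericSequence_nil hl
  · intro T hT hlt _
    have hfin : {S : List R | S.Sublist T}.Finite :=
      (List.finite_toSet T.sublists).subset fun S hS => List.mem_sublists.2 hS
    refine (Generic.forall_mem_finite hfin fun S hS =>
      (hT S hS).generic_cons hI hJ (lt_of_le_of_lt hS.length_le hlt)).mono ?_
    intro z _ hz S hS
    rcases List.sublist_cons_iff.1 hS with hST | ⟨S', rfl, hS'⟩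
    exacts [hT S hST, hz S' hS']

theorem StandingHypotheses.exists_append_isGenericSequence (hI : StandingHypotheses I l)
    (hJ' : IsReduction J' I) {A : List R} (hA : ∀ S, S.Sublist A → IsGenericSequence I l S) :
    ∃ B : List R, (∀ B' S, B' <:+ B → S <:+ A → B'.length + S.length ≤ l →
      IsGenericSequence I l (B' ++ S)) ∧ B.length = l ∧ ∀ x ∈ B, x ∈ J' := by
  refine exists_list_of_generic l (fun B => ∀ B' S, B' <:+ B → S <:+ A →
    B'.length + S.length ≤ l → IsGenericSequence I l (B' ++ S)) ?_ ?_
  · intro B' S hB' hS _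
    rw [List.suffix_nil.1 hB']
    exact hA S hS.sublist
  · intro T hT _ _
    have hfin : {S : List R | S <:+ A ∧ T.length + 1 + S.length ≤ l}.Finite :=
      (List.finite_toSet A.sublists).subset fun S hS => List.mem_sublists.2 hS.1.sublist
    refine (Generic.forall_mem_finite hfin fun S hS => (hT T S List.suffix_rfl hS.1 (by
      have := hS.2; omega)).generic_cons hI hJ' (by
      have := hS.2; rw [List.length_append]; omega)).mono ?_
    intro z _ hz B' S hB' hS hle
    rcases List.suffix_cons_iff.1 hB' with rfl | hB'T
    exacts [hz S ⟨hS, hle⟩, hT B' S hB'T hS hle]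

theorem IsMinimalReduction.exists_eq_ofList (hJ : IsMinimalReduction J I)
    (hI : StandingHypotheses I l) (hl : fiberDim I = ((l : ℕ∞) : WithBot ℕ∞)) :
    ∃ A : List R, (∀ S, S.Sublist A → IsGenericSequence I l S) ∧ A.length = l ∧
      Ideal.ofList A = J := by
  obtain ⟨A, hA, hlen, hAJ⟩ := hI.exists_sublists_isGenericSequence hl hJ.1
  exact ⟨A, hA, hlen, hJ.2 _ ((hA A (List.Sublist.refl A)).isReduction hlen) (ofList_le_iff.2 hAJ)⟩

end GenericSequences

section Pencils

variable {R : Type u} [CommRing R] {ι : Type v} {H K p : Ideal R} {b : ι → R} {c : R}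

theorem span_singleton_sup_le_of_isUnit_sub {s t : R} (h : IsUnit (s - t)) (a y : R) :
    Ideal.span {a} ⊔ Ideal.span {y} ≤ Ideal.span {a + s * y} ⊔ Ideal.span {a + t * y} := by
  have hs : a + s * y ∈ Ideal.span {a + s * y} ⊔ Ideal.span {a + t * y} :=
    Ideal.mem_sup_left (Ideal.mem_span_singleton_self _)
  have ht : a + t * y ∈ Ideal.span {a + s * y} ⊔ Ideal.span {a + t * y} :=
    Ideal.mem_sup_right (Ideal.mem_span_singleton_self _)
  have hy : y ∈ Ideal.span {a + s * y} ⊔ Ideal.span {a + t * y} := by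
    refine (Ideal.unit_mul_mem_iff_mem _ h).1 ?_
    convert Ideal.sub_mem _ hs ht using 1; ring
  refine sup_le ?_ ?_ <;> rw [Ideal.span_singleton_le_iff_mem]
  · exact (Ideal.add_mem_iff_left _ (Ideal.mul_mem_left _ s hy)).1 hs
  · exact hy

theorem span_mul_pow_le_saturationAt_prod (hb : ∀ i j, i ≠ j →
    K ≤ H ⊔ (Ideal.span {b i} ⊔ Ideal.span {b j}))
    (hc : ∀ i, c ∈ saturationAt p (H ⊔ Ideal.span {b i})) {k : ℕ} {F : Finset ι}
    (hF : F.card = k + 1) :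
    Ideal.span {c} * K ^ k ≤ saturationAt p (H ⊔ Ideal.span {∏ i ∈ F, b i}) := by
  classical
  induction k generalizing F with
  | zero =>
    obtain ⟨i, rfl⟩ := Finset.card_eq_one.1 hF
    simpa [Ideal.span_singleton_le_iff_mem] using hc i
  | succ k ih =>
    obtain ⟨i, hi, j, hj, hij⟩ := Finset.one_lt_card.1 (by omega : 1 < F.card)
    have hmul (m : ι) (hm : m ∈ F) : Ideal.span {b m} * (Ideal.span {c} * K ^ k) ≤
        saturationAt p (H ⊔ Ideal.span {∏ i ∈ F, b i}) := by
      rw [mul_comm, ← Finset.mul_prod_erase F b hm]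
      refine (Ideal.mul_mono_left (ih (F := F.erase m) ?_)).trans
        ((saturationAt_mul_le _ _ _).trans (saturationAt_mono _ ?_))
      · rw [Finset.card_erase_of_mem hm]; omega
      · rw [Ideal.sup_mul, mul_comm (b m), ← Ideal.span_singleton_mul_span_singleton]
        exact sup_le_sup_right Ideal.mul_le_left _
    calc Ideal.span {c} * K ^ (k + 1) = K * (Ideal.span {c} * K ^ k) := by ring
      _ ≤ (H ⊔ (Ideal.span {b i} ⊔ Ideal.span {b j})) * (Ideal.span {c} * K ^ k) :=
          Ideal.mul_mono_left (hb i j hij)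
      _ ≤ _ := by
          rw [Ideal.sup_mul, Ideal.sup_mul]
          exact sup_le (Ideal.mul_le_left.trans (le_sup_left.trans (le_saturationAt _ _)))
            (sup_le (hmul i hi) (hmul j hj))

theorem isSMulRegular_quotient_prod (hb : ∀ i, IsSMulRegular (R ⧸ H) (b i)) (F : Finset ι) :
    IsSMulRegular (R ⧸ H) (∏ i ∈ F, b i) := by
  classical
  induction F using Finset.induction_on with
  | empty => simp [IsSMulRegular.one]
  | insert i F hi ih =>
    rw [Finset.prod_insert hi]
    exact (hb i).mul ih

/-- Write `D` for a product of `n + 1` of the elements `b i`. Then `y * D` lies in `K ^ (n + 2)`,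
hence in `a ^ 2 * K ^ n`, and multiplication by `c` takes it to `a * D`, locally at `p` and modulo
`H`; the regular element `D` can be cancelled. -/
theorem mul_mem_saturationAt_of_pencil [Infinite ι] (hp : p.IsPrime) (hb : ∀ i j, i ≠ j →
    K ≤ H ⊔ (Ideal.span {b i} ⊔ Ideal.span {b j})) (hbK : ∀ i, b i ∈ K)
    (hreg : ∀ i, IsSMulRegular (R ⧸ H) (b i)) {a y : R} {n : ℕ}
    (hK : K ^ (n + 1) ≤ H ⊔ Ideal.span {a} * K ^ n) (hy : y ∈ K)
    (hc : ∀ i, c * a ∈ saturationAt p (H ⊔ Ideal.span {b i})) :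
    c * y ∈ saturationAt p (H ⊔ Ideal.span {a}) := by
  obtain ⟨F, hF⟩ := Infinite.exists_subset_card_eq ι (n + 1)
  set D := ∏ i ∈ F, b i
  have hDK : D ∈ K ^ (n + 1) := by
    rw [← hF, ← Finset.prod_const]
    exact Ideal.prod_mem_prod fun i _ => hbK i
  have hK₂ : K ^ (n + 2) ≤ H ⊔ Ideal.span {a * a} * K ^ n :=
    calc K ^ (n + 2) = K * K ^ (n + 1) := pow_succ' _ _
      _ ≤ K * (H ⊔ Ideal.span {a} * K ^ n) := Ideal.mul_mono_right hK
      _ = K * H ⊔ Ideal.span {a} * K ^ (n + 1) := by rw [Ideal.mul_sup]; ring_nf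
      _ ≤ H ⊔ Ideal.span {a} * (H ⊔ Ideal.span {a} * K ^ n) :=
        sup_le_sup Ideal.mul_le_right (Ideal.mul_mono_right hK)
      _ ≤ H ⊔ Ideal.span {a * a} * K ^ n := by
        rw [Ideal.mul_sup, ← mul_assoc, Ideal.span_singleton_mul_span_singleton]
        exact sup_le le_sup_left (sup_le_sup_right Ideal.mul_le_right _)
  have hyDK : y * D ∈ K ^ (n + 2) := by
    rw [pow_succ']
    exact Ideal.mul_mem_mul hy hDK
  obtain ⟨h, hh, z, hz, hyD⟩ := Submodule.mem_sup.1 (hK₂ hyDK)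
  obtain ⟨e, he, rfl⟩ := Ideal.mem_span_singleton_mul.1 hz
  obtain ⟨s, hs, hse⟩ := (mem_saturationAt hp).1 (span_mul_pow_le_saturationAt_prod hb hc hF
    (Ideal.mul_mem_mul (Ideal.mem_span_singleton_self _) he))
  obtain ⟨h', hh', f, hf⟩ := mem_sup_span_singleton.1 hse
  have hD : D * (s * (c * y) - a * f) ∈ H := by
    have : D * (s * (c * y) - a * f) = s * c * h + a * h' := by
      linear_combination (-(s * c)) * hyD + a * hf
    rw [this]
    exact H.add_mem (H.mul_mem_left _ hh) (H.mul_mem_left _ hh')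
  refine (mem_saturationAt hp).2 ⟨s, hs, mem_sup_span_singleton.2 ⟨_, ?_, f, (by ring :
    s * (c * y) = s * (c * y) - a * f + a * f)⟩⟩
  exact isSMulRegular_quotient_iff_mul.1 (isSMulRegular_quotient_prod hreg F) _ hD

end Pencils

section ReductionPencils

variable {R : Type u} [CommRing R] [IsLocalRing R] {I p : Ideal R} {L : List R} {a b c k x y : R}
  {l : ℕ}

namespace IsUnmixedResidual

theorem mem_saturationAt_ofList_cons (hL : IsUnmixedResidual I L) (hp : p.IsPrime) (ha : a ∈ I)
    (hx : x ∈ I) (h : x ∈ saturationAt p (residual I L ⊔ Ideal.span {a})) :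
    x ∈ saturationAt p (Ideal.ofList (a :: L)) := by
  obtain ⟨s, hs, hsx⟩ := (mem_saturationAt hp).1 h
  obtain ⟨k, hk, t, hkt⟩ := mem_sup_span_singleton.1 hsx
  refine (mem_saturationAt hp).2 ⟨s, hs, ?_⟩
  have hkI : k ∈ I := (Ideal.add_mem_iff_left I (I.mul_mem_right t ha)).1
    (hkt ▸ I.mul_mem_left s hx)
  rw [ofList_cons_eq_sup, hkt]
  exact mem_sup_span_singleton.2 ⟨k, hL.inf_le ⟨hk, hkI⟩, t, rfl⟩

variable [IsNoetherianRing R]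

theorem isSMulRegular_of_isReduction (hL : IsUnmixedResidual I L)
    (hb : IsReduction (Ideal.ofList (b :: L)) I) : IsSMulRegular (R ⧸ residual I L) b := by
  refine isSMulRegular_quotient_of_forall_notMem fun q hq hbq => hL.not_le q hq ?_
  refine le_of_isReduction hq.1 hb ?_
  rw [ofList_cons_eq_sup, sup_le_iff, Ideal.span_singleton_le_iff_mem]
  exact ⟨(le_colon _ _).trans (le_of_isAssociatedPrime hq), hbq⟩

theorem finite_setOf_mul_mem_saturationAt (hL : IsUnmixedResidual I L)
    (ha : IsReduction (Ideal.ofList (a :: L)) I) (hy : y ∈ I) (hp : p.IsPrime)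
    (hc : c * y ∉ saturationAt p (Ideal.ofList (a :: L))) :
    {u : ResidueField R | IsReduction (Ideal.ofList ((a + residueLift u * y) :: L)) I ∧
      c * a ∈ saturationAt p (Ideal.ofList ((a + residueLift u * y) :: L))}.Finite := by
  by_contra hinf
  set U := {u : ResidueField R | IsReduction (Ideal.ofList ((a + residueLift u * y) :: L)) I ∧
    c * a ∈ saturationAt p (Ideal.ofList ((a + residueLift u * y) :: L))}
  have : Infinite U := Set.infinite_coe_iff.2 hinf
  have haI : a ∈ I := ha.1 (mem_ofList List.mem_cons_self)
  set H := residual I L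
  have hLH : Ideal.ofList L ≤ H := le_colon _ _
  set K := Ideal.ofList (a :: L) ⊔ Ideal.span {y} with hK
  have hcons (z : R) : Ideal.ofList (z :: L) ≤ H ⊔ Ideal.span {z} := by
    rw [ofList_cons_eq_sup]
    exact sup_le_sup_right hLH _
  obtain ⟨-, n, hn⟩ := ha.sup_span_singleton hy
  have hKn : K ^ (n + 1) ≤ H ⊔ Ideal.span {a} * K ^ n := by
    rw [hn, ← hK, ofList_cons_eq_sup, Ideal.sup_mul]
    exact sup_le_sup_right (Ideal.mul_le_left.trans hLH) _
  have haK : a ∈ K := Ideal.mem_sup_left (mem_ofList List.mem_cons_self)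
  have hyK : y ∈ K := mem_sup_span_singleton_self _ y
  refine hc (hL.mem_saturationAt_ofList_cons hp haI (I.mul_mem_left c hy)
    (mul_mem_saturationAt_of_pencil hp (b := fun u : U => a + residueLift u.1 * y) ?_
      (fun u => K.add_mem haK (K.mul_mem_left _ hyK))
      (fun u => hL.isSMulRegular_of_isReduction u.2.1) hKn hyK
      (fun u => saturationAt_mono p (hcons _) u.2.2)))
  intro u w huw
  rw [hK, ofList_cons_eq_sup, sup_assoc]
  exact sup_le_sup hLH (span_singleton_sup_le_of_isUnit_sub
    (isUnit_residueLift_sub fun h => huw (Subtype.ext h)) a y)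

theorem mem_residual_of_sub_mem (hL : IsUnmixedResidual I L) (ha : a ∈ I)
    (hb : IsReduction (Ideal.ofList (b :: L)) I) (hc : c ∈ residual I (b :: L))
    (hck : c * a - k * b ∈ Ideal.ofList L) : k ∈ residual I (a :: L) := by
  refine mem_colon_iff.2 fun y hy => ?_
  have hcy := mem_colon_iff.1 hc y hy
  rw [ofList_cons_eq_sup] at hcy ⊢
  obtain ⟨m, hm, w, hmw⟩ := mem_sup_span_singleton.1 hcy
  have hreg : b * (k * y - a * w) ∈ residual I L := by
    have : b * (k * y - a * w) = a * m - y * (c * a - k * b) := by linear_combination a * hmw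
    rw [this]
    exact le_colon _ _ (Ideal.sub_mem _ (Ideal.mul_mem_left _ _ hm) (Ideal.mul_mem_left _ _ hck))
  have hmem : k * y - a * w ∈ Ideal.ofList L := hL.inf_le
    ⟨isSMulRegular_quotient_iff_mul.1 (hL.isSMulRegular_of_isReduction hb) _ hreg,
      I.sub_mem (I.mul_mem_left _ hy) (I.mul_mem_right _ ha)⟩
  exact mem_sup_span_singleton.2 ⟨_, hmem, w, by ring⟩

end IsUnmixedResidual

theorem exists_cons_isSuffix {α : Type*} {S A : List α} (h : S <:+ A) (hlt : S.length < A.length) :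
    ∃ a, a :: S <:+ A := by
  obtain ⟨W, rfl⟩ := h
  rcases List.eq_nil_or_concat W with rfl | ⟨W, a, rfl⟩
  · simp at hlt
  · exact ⟨a, W, by simp⟩

variable [IsNoetherianRing R]

namespace IsGenericSequence

theorem finite_setOf_not_isReduction (hL : IsGenericSequence I l L) (hlen : L.length + 1 = l)
    (ha : IsReduction (Ideal.ofList (a :: L)) I) (hy : y ∈ I) :
    {u : ResidueField R |
      ¬ IsReduction (Ideal.ofList ((a + residueLift u * y) :: L)) I}.Finite := by
  have hfib : IsFiberGeneric (RingHom.id R) (I.map (RingHom.id R)) L l :=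
    (Ideal.map_id I).symm ▸ hL.isFiberGeneric
  have haI : a ∈ I := ha.1 (mem_ofList List.mem_cons_self)
  have haV (V) (hV : V ∈ fiberPrimes (RingHom.id R) I L) : a ∉ V := by
    refine fun haV => not_le_of_mem_fiberPrimes hV ha ?_
    rw [ofList_cons_eq_sup, sup_le_iff, Ideal.span_singleton_le_iff_mem]
    exact ⟨ofList_le_of_mem_fiberPrimes hL.mem hV, haV⟩
  refine ((finite_fiberPrimes (RingHom.id R) I L).biUnion fun V hV =>
    finite_setOf_add_residueLift_mul_mem (haV V hV) y).subset fun u hu => ?_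
  by_contra hmem
  simp only [Set.mem_iUnion, Set.mem_ofPred_eq, not_exists] at hmem
  have hzI : a + residueLift u * y ∈ I := I.add_mem haI (I.mul_mem_left _ hy)
  have hred := (hfib.cons hL.mem hmem).isReduction (List.forall_mem_cons.2 ⟨hzI, hL.mem⟩) hlen.ge
  rw [Ideal.map_id, Ideal.map_id] at hred
  exact hu hred

variable [Infinite (ResidueField R)]

/-- Otherwise a member of the pencil `a + u * y` would give a reduction not containing `x`. -/
theorem mem_residual_of_mem_core (hL : IsGenericSequence I l L) (hI : StandingHypotheses I l)
    (hlen : L.length + 1 = l) (ha : IsReduction (Ideal.ofList (a :: L)) I) (hx : x ∈ core I)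
    (hxc : x - c * a ∈ Ideal.ofList L) : c ∈ residual I (a :: L) := by
  by_contra hc
  rw [mem_colon_iff] at hc
  push Not at hc
  obtain ⟨y, hy, hcy⟩ := hc
  rw [← saturationAt_maximalIdeal (Ideal.ofList (a :: L))] at hcy
  have hfin := (hL.isUnmixedResidual hI (by omega)).finite_setOf_mul_mem_saturationAt ha hy
    (maximalIdeal.isMaximal R).isPrime hcy
  obtain ⟨u, hu⟩ := (hfin.union (hL.finite_setOf_not_isReduction hlen ha hy)).exists_notMem
  rw [Set.mem_union, not_or, Set.mem_ofPred_eq, Set.mem_ofPred_eq, not_not] at hu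
  refine hu.1 ⟨hu.2, le_saturationAt _ _ ?_⟩
  convert Ideal.sub_mem _ (core_le_of_isReduction hu.2 hx)
    (ofList_mono (List.subset_cons_self _ _) hxc) using 1
  ring

theorem residual_eq_of_mul_le_core (hL : IsGenericSequence I l L) (hI : StandingHypotheses I l)
    (hlen : L.length + 1 = l) (ha : IsReduction (Ideal.ofList (a :: L)) I)
    (hb : IsReduction (Ideal.ofList (b :: L)) I) (hK : residual I (a :: L) * I ≤ core I) :
    residual I (b :: L) = residual I (a :: L) := by
  have haI : a ∈ I := ha.1 (mem_ofList List.mem_cons_self)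
  have hbI : b ∈ I := hb.1 (mem_ofList List.mem_cons_self)
  refine le_antisymm (fun c hc => ?_) (le_colon_of_mul_le_core hK hb)
  have hca := mem_colon_iff.1 hc a haI
  rw [ofList_cons_eq_sup] at hca
  obtain ⟨m, hm, k, hmk⟩ := mem_sup_span_singleton.1 hca
  have hsub : c * a - k * b ∈ Ideal.ofList L := by
    convert hm using 1
    rw [hmk]
    ring
  have hk := (hL.isUnmixedResidual hI (by omega)).mem_residual_of_sub_mem haI hb hc hsub
  refine hL.mem_residual_of_mem_core hI hlen ha (hK (Ideal.mul_mem_mul hk hbI)) ?_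
  convert Ideal.neg_mem_iff _ |>.2 hm using 1
  rw [hmk]; ring

end IsGenericSequence

variable [Infinite (ResidueField R)]

/-- The generators of a reduction are exchanged for those of another one, one at a time. -/
theorem colon_eq_of_mul_le_core {J J' : Ideal R} (hI : StandingHypotheses I l)
    (hl : fiberDim I = ((l : ℕ∞) : WithBot ℕ∞)) (hJ : IsMinimalReduction J I)
    (hJ' : IsMinimalReduction J' I) (hK : J.colon (I : Set R) * I ≤ core I) :
    J'.colon (I : Set R) = J.colon (I : Set R) := by
  obtain ⟨A, hA, hAlen, rfl⟩ := hJ.exists_eq_ofList hI hl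
  obtain ⟨B, hB, hBlen, hBJ'⟩ := hI.exists_append_isGenericSequence hJ'.1 hA
  have hBgen : IsGenericSequence I l B := by
    simpa using hB B [] List.suffix_rfl List.nil_suffix (by simp [hBlen])
  obtain rfl : Ideal.ofList B = J' := hJ'.2 _ (hBgen.isReduction hBlen) (ofList_le_iff.2 hBJ')
  have hexchange (B' : List R) (hB' : B' <:+ B) : ∀ S, S <:+ A → B'.length + S.length = l →
      residual I (B' ++ S) = residual I A := by
    induction B' with
    | nil =>
      intro S hS hlen
      rw [List.nil_append, hS.eq_of_length (by simpa [hAlen] using hlen)]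
    | cons b B' ih =>
      intro S hS hlen
      rw [List.length_cons] at hlen
      obtain ⟨a, ha⟩ := exists_cons_isSuffix hS (by omega)
      have hB'' := (List.suffix_cons b B').trans hB'
      have hperm : (B' ++ a :: S).Perm (a :: (B' ++ S)) := List.perm_middle
      have heq := ih hB'' (a :: S) ha (by rw [List.length_cons]; omega)
      have hred := (hB B' (a :: S) hB'' ha (by rw [List.length_cons]; omega)).isReduction
        (by rw [List.length_append, List.length_cons]; omega)
      rw [residual, ofList_congr_perm hperm] at heq
      rw [ofList_congr_perm hperm] at hred
      rw [← heq]
      refine (hB B' S hB'' hS (by omega)).residual_eq_of_mul_le_core hI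
        (by rw [List.length_append]; omega) hred ?_ (by rwa [residual, heq])
      exact (hB (b :: B') S hB' hS (by rw [List.length_cons]; omega)).isReduction
        (by rw [List.length_append, List.length_cons]; omega)
  simpa using hexchange B List.suffix_rfl [] List.nil_suffix (by simp [hBlen])

end ReductionPencils

section CoreFormula

variable {R : Type u} [CommRing R] {A : List R} {x : R}

theorem exists_eq_sum_mul_get (hx : x ∈ Ideal.ofList A) :
    ∃ c : Fin A.length → R, x = ∑ i, c i * A.get i := by
  rw [Ideal.ofList, ← Set.range_list_get] at hx
  obtain ⟨c, hc⟩ := Ideal.mem_span_range_iff_exists_fun.1 hx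
  exact ⟨c, hc.symm⟩

theorem sub_mul_get_mem_ofList_eraseIdx {c : Fin A.length → R} (hx : x = ∑ i, c i * A.get i)
    (i : Fin A.length) : x - c i * A.get i ∈ Ideal.ofList (A.eraseIdx i) := by
  rw [hx, ← Finset.add_sum_erase _ _ (Finset.mem_univ i), add_sub_cancel_left]
  refine Ideal.sum_mem _ fun j hj => Ideal.mul_mem_left _ _ (mem_ofList ?_)
  exact List.mem_eraseIdx_iff_getElem.2
    ⟨j, j.2, fun h => (Finset.mem_erase.1 hj).1 (Fin.ext h), rfl⟩

theorem ofList_get_cons_eraseIdx (A : List R) (i : Fin A.length) :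
    Ideal.ofList (A.get i :: A.eraseIdx i) = Ideal.ofList A :=
  ofList_congr_perm (List.getElem_cons_eraseIdx_perm i.2)

variable [IsNoetherianRing R] [IsLocalRing R] [Infinite (ResidueField R)] {I J : Ideal R} {l : ℕ}

theorem core_le_colon_mul (hI : StandingHypotheses I l)
    (hl : fiberDim I = ((l : ℕ∞) : WithBot ℕ∞)) (hJ : IsMinimalReduction J I) :
    core I ≤ J.colon (I : Set R) * J := by
  obtain ⟨A, hA, hlen, rfl⟩ := hJ.exists_eq_ofList hI hl
  intro x hx
  obtain ⟨c, hc⟩ := exists_eq_sum_mul_get (core_le_of_isReduction hJ.1 hx)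
  rw [hc]
  refine Ideal.sum_mem _ fun i _ => Ideal.mul_mem_mul ?_ (mem_ofList (A.get_mem i))
  have hJi := ofList_get_cons_eraseIdx A i
  have hmem := (hA _ (List.eraseIdx_sublist A i)).mem_residual_of_mem_core hI
    ((List.length_eraseIdx_add_one i.2).trans hlen) (hJi ▸ hJ.1) hx
    (sub_mul_get_mem_ofList_eraseIdx hc i)
  rwa [residual, hJi] at hmem

theorem colon_mul_eq_core (hI : StandingHypotheses I l)
    (hl : fiberDim I = ((l : ℕ∞) : WithBot ℕ∞)) (hJ : IsMinimalReduction J I)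
    (hK : J.colon (I : Set R) * I ≤ core I) :
    J.colon (I : Set R) * J = J.colon (I : Set R) * I ∧ J.colon (I : Set R) * I = core I := by
  have hcore := core_le_colon_mul hI hl hJ
  have hmul : J.colon (I : Set R) * J ≤ J.colon (I : Set R) * I := Ideal.mul_mono_right hJ.1.1
  exact ⟨hmul.antisymm (hK.trans hcore), hK.antisymm (hcore.trans hmul)⟩

end CoreFormula

section SocleElimination

variable {R : Type u} [CommRing R] {I K 𝔠 : Ideal R}

theorem GeneratedAt.inf_colon_singleton {J p : Ideal R} {a c : R} {n : ℕ} (hp : p.IsPrime)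
    (h : GeneratedAt K (𝔠 ⊓ K.colon (p : Set R)) p (n + 1)) (hKJ : K ≤ J.colon {a})
    (hc : c ∈ 𝔠 ⊓ K.colon (p : Set R)) (hca : c * a ∉ saturationAt p J) :
    GeneratedAt K (𝔠 ⊓ J.colon {a} ⊓ K.colon (p : Set R)) p n := by
  refine h.pred_of_not_le hp ?_ (inf_le_inf_right _ inf_le_left) fun hcon => hca ?_
  · rw [mul_comm]
    exact Ideal.mul_le.2 fun r hr s hs => mem_colon_iff.1 hr.2 s hs
  · obtain ⟨s, hs, hsc⟩ := (mem_saturationAt hp).1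
      (saturationAt_mono p (sup_le hKJ (inf_le_left.trans inf_le_right)) (hcon hc))
    refine (mem_saturationAt hp).2 ⟨s, hs, ?_⟩
    rw [← mul_assoc]
    exact Submodule.mem_colon_singleton.1 hsc

variable [IsNoetherianRing R]

theorem le_of_forall_inf_colon_le_saturationAt
    (h : ∀ p, K.IsAssociatedPrime p → 𝔠 ⊓ K.colon (p : Set R) ≤ saturationAt p K) : 𝔠 ≤ K := by
  intro c hc
  by_contra hcK
  have h1 : (1 : R) ∉ K.colon {c} := by simpa [Submodule.mem_colon_singleton] using hcK
  obtain ⟨q, hq, -⟩ := exists_isAssociatedPrime_of_notMem h1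
  obtain ⟨r, hqr, -⟩ := exists_eq_colon_singleton hq
  have hqrc : q = K.colon {r * c} := by
    rw [hqr]
    ext z
    simp only [Submodule.mem_colon_singleton, smul_eq_mul, mul_assoc]
  have hsocle : r * c ∈ 𝔠 ⊓ K.colon (q : Set R) := by
    refine ⟨𝔠.mul_mem_left r hc, mem_colon_iff.2 fun y hy => ?_⟩
    rw [hqrc, Submodule.mem_colon_singleton, smul_eq_mul] at hy
    rwa [mul_comm]
  have hsat := h q (Submodule.isAssociatedPrime_iff.2 ⟨hq.1, _, hqrc⟩) hsocle
  exact (not_colon_singleton_le_iff hq.1).2 hsat hqrc.ge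

variable [IsLocalRing R] [Infinite (ResidueField R)] {L : List R} {a : R} {l : ℕ}

namespace IsGenericSequence

theorem exists_isReduction_forall_mul_notMem (hL : IsGenericSequence I l L)
    (hI : StandingHypotheses I l) (hlen : L.length + 1 = l)
    (ha : IsReduction (Ideal.ofList (a :: L)) I) {S : Set (Ideal R)} (hS : S.Finite)
    {c : Ideal R → R} (hSp : ∀ p ∈ S, p.IsPrime)
    (hc : ∀ p ∈ S, c p ∉ saturationAt p (residual I (a :: L))) :
    ∃ J, IsReduction J I ∧ Ideal.ofList L ≤ J ∧ ∀ p ∈ S, c p * a ∉ saturationAt p J := by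
  set J₀ := Ideal.ofList (a :: L)
  obtain ⟨y, hy, hyS⟩ := exists_mem_forall_notMem (J := I)
    (S := (fun p => (saturationAt p J₀).colon {c p}) '' S) (hS.image _) (by
      rintro _ ⟨p, hp, rfl⟩ hle
      refine hc p hp ((mem_saturationAt_colon (hSp p hp)).2 fun y hy => ?_)
      rw [mul_comm]
      exact Submodule.mem_colon_singleton.1 (hle hy))
  have hcy (p) (hp : p ∈ S) : c p * y ∉ saturationAt p J₀ := by
    have := hyS _ ⟨p, hp, rfl⟩
    rwa [Submodule.mem_colon_singleton, smul_eq_mul, mul_comm] at this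
  have hfin := (hS.biUnion fun p hp =>
    (hL.isUnmixedResidual hI (by omega)).finite_setOf_mul_mem_saturationAt ha hy (hSp p hp)
      (hcy p hp)).union (hL.finite_setOf_not_isReduction hlen ha hy)
  obtain ⟨u, hu⟩ := hfin.exists_notMem
  simp only [Set.mem_union, Set.mem_iUnion, Set.mem_ofPred_eq, not_or, not_exists, not_and,
    not_not] at hu
  exact ⟨_, hu.2, ofList_mono (List.subset_cons_self _ _), fun p hp => hu.1 p hp hu.2⟩

/-- Each reduction lowers by one, at every associated prime, the number of generators of the socle
of the remaining submodule of `R / residual I (a :: L)`. -/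
theorem exists_forall_mul_mem_imp_mem_residual (hL : IsGenericSequence I l L)
    (hI : StandingHypotheses I l) (hlen : L.length + 1 = l)
    (ha : IsReduction (Ideal.ofList (a :: L)) I) (hK : residual I (a :: L) * I ≤ core I) (n : ℕ)
    {𝔠 : Ideal R} (h : ∀ p, (residual I (a :: L)).IsAssociatedPrime p →
      GeneratedAt (residual I (a :: L)) (𝔠 ⊓ (residual I (a :: L)).colon (p : Set R)) p n) :
    ∃ F : Fin n → Ideal R, (∀ j, IsReduction (F j) I ∧ Ideal.ofList L ≤ F j) ∧
      ∀ c ∈ 𝔠, (∀ j, c * a ∈ F j) → c ∈ residual I (a :: L) := by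
  set K := residual I (a :: L)
  have haI : a ∈ I := ha.1 (mem_ofList List.mem_cons_self)
  induction n generalizing 𝔠 with
  | zero =>
    exact ⟨Fin.elim0, fun j => j.elim0, fun c hc _ =>
      le_of_forall_inf_colon_le_saturationAt (fun p hp => GeneratedAt.zero_iff.1 (h p hp)) hc⟩
  | succ n ih =>
    let S : Set (Ideal R) :=
      {p | K.IsAssociatedPrime p ∧ ¬ 𝔠 ⊓ K.colon (p : Set R) ≤ saturationAt p K}
    have hex (p : Ideal R) : ∃ c, p ∈ S → c ∈ 𝔠 ⊓ K.colon (p : Set R) ∧ c ∉ saturationAt p K := by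
      by_cases hp : p ∈ S
      · exact (SetLike.not_le_iff_exists.1 hp.2).imp fun c hc _ => hc
      · exact ⟨0, fun h => absurd h hp⟩
    choose c hc using hex
    obtain ⟨J, hJ, hLJ, hcJ⟩ := hL.exists_isReduction_forall_mul_notMem hI hlen ha
      ((finite_setOf_isAssociatedPrime K).subset fun p hp => hp.1) (S := S) (fun p hp => hp.1.1)
      fun p hp => (hc p hp).2
    have hKJ : K ≤ J.colon {a} := fun k hk =>
      Submodule.mem_colon_singleton.2 (core_le_of_isReduction hJ (hK (Ideal.mul_mem_mul hk haI)))
    obtain ⟨F, hF, hFK⟩ := ih (𝔠 := 𝔠 ⊓ J.colon {a}) fun p hp => by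
      by_cases hpS : p ∈ S
      · exact (h p hp).inf_colon_singleton hp.1 hKJ (hc p hpS).1 (hcJ p hpS)
      · have hsat : 𝔠 ⊓ K.colon (p : Set R) ≤ saturationAt p K := not_not.1 fun hn => hpS ⟨hp, hn⟩
        have hle : 𝔠 ⊓ J.colon {a} ⊓ K.colon (p : Set R) ≤ 𝔠 ⊓ K.colon (p : Set R) :=
          inf_le_inf_right _ inf_le_left
        exact (GeneratedAt.zero_iff.2 (hle.trans hsat)).mono le_rfl (Nat.zero_le _)
    exact ⟨Fin.cons J F, Fin.cases ⟨hJ, hLJ⟩ hF, fun d hd hda =>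
      hFK d ⟨hd, Submodule.mem_colon_singleton.2 (hda 0)⟩ fun j => hda j.succ⟩

end IsGenericSequence

end SocleElimination

section NumberOfGenerators

theorem exists_finset_of_muE_le {R : Type u} [CommRing R] {M : Type v} [AddCommGroup M]
    [Module R M] {N : Submodule R M} {t : ℕ} (h : muE N ≤ t) :
    ∃ s : Finset M, s.card ≤ t ∧ Submodule.span R (s : Set M) = N := by
  have hlt : muE N < (t + 1 : ℕ) := h.trans_lt (by exact_mod_cast t.lt_succ_self)
  obtain ⟨_, ⟨s, rfl, hs⟩, hst⟩ := sInf_lt_iff.1 hlt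
  exact ⟨s, Nat.lt_succ_iff.1 (by exact_mod_cast hst), hs⟩

variable {S : Type u} [CommRing S] [IsLocalRing S] {K : Ideal S}

/-- A regular sequence on `S / K` has to be empty, so the type is computed by the socle itself. -/
theorem muE_socle_le_qType [IsNoetherianRing S] (h : K.IsAssociatedPrime (maximalIdeal S)) :
    muE (socle S K) ≤ qType S K := by
  refine le_sInf ?_
  rintro _ ⟨rs, hrs, hreg, -, rfl⟩
  rcases rs with _ | ⟨x, rs⟩
  · rw [Ideal.ofList_nil, sup_bot_eq]
  · have hx := ((RingTheory.Sequence.isWeaklyRegular_cons_iff _ _ _).1 hreg.toIsWeaklyRegular).1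
    exact absurd (hrs x List.mem_cons_self) (notMem_of_isSMulRegular_quotient hx h)

theorem mk_mem_socle_iff {z : S} :
    Ideal.Quotient.mk K z ∈ socle S K ↔ z ∈ K.colon (maximalIdeal S : Set S) := by
  rw [socle, mem_colon_iff, mem_colon_iff]
  simp only [Ideal.mem_map_iff_of_surjective _ Ideal.Quotient.mk_surjective, Ideal.mem_bot,
    forall_exists_index, and_imp, forall_apply_eq_imp_iff₂, ← map_mul,
    Ideal.Quotient.eq_zero_iff_mem]

theorem exists_list_of_muE_socle_le {t : ℕ} (h : muE (socle S K) ≤ t) :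
    ∃ v : List S, (∀ x ∈ v, x ∈ K.colon (maximalIdeal S : Set S)) ∧ v.length ≤ t ∧
      K.colon (maximalIdeal S : Set S) ≤ K ⊔ Ideal.ofList v := by
  obtain ⟨s, hst, hs⟩ := exists_finset_of_muE_le h
  have hmk (x : S ⧸ K) : Ideal.Quotient.mk K x.out = x := Ideal.Quotient.mk_out x
  refine ⟨s.toList.map Quotient.out, ?_, by simpa using hst, fun z hz => ?_⟩
  · simp only [List.mem_map, Finset.mem_toList, forall_exists_index, and_imp,
      forall_apply_eq_imp_iff₂]
    intro x hx
    rw [← mk_mem_socle_iff, hmk, ← hs]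
    exact Submodule.subset_span hx
  · have hle : socle S K ≤
        (Ideal.ofList (s.toList.map Quotient.out)).map (Ideal.Quotient.mk K) := by
      rw [← hs, Submodule.span_le]
      intro x hx
      rw [← hmk x]
      exact Ideal.mem_map_of_mem _ (mem_ofList (List.mem_map_of_mem (Finset.mem_toList.2 hx)))
    rw [sup_comm]
    exact Ideal.mem_quotient_iff_mem_sup.1 (hle (mk_mem_socle_iff.2 hz))

end NumberOfGenerators

section GeneratorsOfLocalization

variable {R : Type u} [CommRing R] {A I K N q : Ideal R} {n t : ℕ}

theorem GeneratedAt.of_localization [hq : q.IsPrime] {v : List (Localization.AtPrime q)}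
    (hv : ∀ x ∈ v, x ∈ I.map (algebraMap R (Localization.AtPrime q))) (hlen : v.length ≤ n)
    (hle : I.map (algebraMap R (Localization.AtPrime q)) ≤
      A.map (algebraMap R (Localization.AtPrime q)) ⊔ Ideal.ofList v) :
    GeneratedAt A I q n := by
  set φ := algebraMap R (Localization.AtPrime q)
  have hnum (x : Localization.AtPrime q) :
      ∃ r, x ∈ I.map φ → r ∈ I ∧ x ∈ Ideal.span {φ r} := by
    by_cases hx : x ∈ I.map φ
    · obtain ⟨⟨r, s⟩, hrs⟩ := (IsLocalization.mem_map_algebraMap_iff q.primeCompl _).1 hx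
      have hs : IsUnit (φ s) := IsLocalization.map_units _ s
      refine ⟨r, fun _ => ⟨r.2, ?_⟩⟩
      rw [← hrs, Ideal.span_singleton_mul_right_unit hs]
      exact Ideal.mem_span_singleton_self x
    · exact ⟨0, fun h => absurd h hx⟩
  choose r hr using hnum
  refine ⟨v.map r, ?_, by simpa using hlen, ?_⟩
  · simp only [List.mem_map, forall_exists_index, and_imp, forall_apply_eq_imp_iff₂]
    exact fun x hx => (hr x (hv x hx)).1
  · rw [le_saturationAt_iff_localization hq, Ideal.map_sup]
    refine hle.trans (sup_le_sup_left (ofList_le_iff.2 fun x hx => ?_) _)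
    refine Ideal.span_singleton_le_iff_mem _ |>.2 ?_ (hr x (hv x hx)).2
    exact Ideal.mem_map_of_mem _ (mem_ofList (List.mem_map_of_mem hx))

theorem generatedAt_of_muE_map_le [hq : q.IsPrime]
    (h : muE (I.map (algebraMap R (Localization.AtPrime q))) ≤ n) : GeneratedAt ⊥ I q n := by
  obtain ⟨s, hsn, hs⟩ := exists_finset_of_muE_le h
  refine GeneratedAt.of_localization (v := s.toList) (fun x hx => ?_) (by simpa using hsn) ?_
  · rw [← hs]
    exact Submodule.subset_span (Finset.mem_toList.1 hx)
  · rw [← hs, Submodule.span_le]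
    exact fun x hx => Ideal.mem_sup_right (mem_ofList (Finset.mem_toList.2 hx))

variable [IsNoetherianRing R]

theorem map_colon_localization [hq : q.IsPrime] (K N : Ideal R) :
    (K.colon (N : Set R)).map (algebraMap R (Localization.AtPrime q)) =
      (K.map (algebraMap R (Localization.AtPrime q))).colon
        (N.map (algebraMap R (Localization.AtPrime q)) : Set (Localization.AtPrime q)) := by
  set φ := algebraMap R (Localization.AtPrime q)
  have hspan : (K.map φ).colon (N.map φ : Set (Localization.AtPrime q)) =
      (K.map φ).colon (φ '' N) := Ideal.colon_span
  ext z
  obtain ⟨r, s, rfl⟩ := IsLocalization.exists_mk'_eq q.primeCompl z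
  rw [IsLocalization.mk'_mem_iff, IsLocalization.mk'_mem_iff,
    ← mem_saturationAt_iff_localization hq, mem_saturationAt_colon hq, hspan, Submodule.mem_colon,
    Set.forall_mem_image]
  simp only [mem_saturationAt_iff_localization hq, map_mul, smul_eq_mul, SetLike.mem_coe, φ]

theorem generatedAt_colon_of_qType_le [q.IsPrime] (hq : K.IsAssociatedPrime q)
    (h : qType (Localization.AtPrime q) (K.map (algebraMap R (Localization.AtPrime q))) ≤ t) :
    GeneratedAt K (K.colon (q : Set R)) q t := by
  have : IsNoetherianRing (Localization.AtPrime q) :=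
    IsLocalization.isNoetherianRing q.primeCompl _ inferInstance
  obtain ⟨v, hv, hlen, hle⟩ := exists_list_of_muE_socle_le
    ((muE_socle_le_qType (isAssociatedPrime_map_localization hq)).trans h)
  rw [← Localization.AtPrime.map_eq_maximalIdeal, ← map_colon_localization] at hv hle
  exact GeneratedAt.of_localization hv hlen hle

end GeneratorsOfLocalization
section FittingIdeals

variable {R : Type u} [CommRing R]

theorem map_eq_sum_mul_single {ι : Type*} [Fintype ι] [DecidableEq ι] (π : (ι → R) →ₗ[R] R)
    (w : ι → R) : π w = ∑ j, w j * π (Pi.single j 1) := by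
  conv_lhs => rw [pi_eq_sum_univ' w, map_sum]
  simp only [map_smul, smul_eq_mul]

/-- Cramer's rule: modulo the generators outside the image of `r`, the columns `v k` are relations
among the generators `π (Pi.single (r i) 1)`. -/
theorem det_mul_single_mem_span {ι κ : Type*} [Finite ι] [DecidableEq ι] [Fintype κ]
    [DecidableEq κ] {π : (ι → R) →ₗ[R] R} {v : κ → ι → R} {r : κ → ι} (hr : Function.Injective r)
    (hv : ∀ k, π (v k) = 0) (i : κ) :
    (Matrix.of fun i k => v k (r i)).det * π (Pi.single (r i) 1) ∈
      Ideal.span ((fun j => π (Pi.single j 1)) '' (Set.range r)ᶜ) := by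
  have := Fintype.ofFinite ι
  set M : Matrix κ κ R := Matrix.of fun i k => v k (r i)
  set N := Ideal.span ((fun j => π (Pi.single j 1)) '' (Set.range r)ᶜ)
  let E (i : κ) : R := π (Pi.single (r i) 1)
  have hrel (k : κ) : (M.transpose.mulVec E) k ∈ N := by
    have hsum := Finset.sum_add_sum_compl (Finset.univ.image r) fun j => v k j * π (Pi.single j 1)
    rw [← map_eq_sum_mul_single, hv, Finset.sum_image hr.injOn] at hsum
    change ∑ i, v k (r i) * π (Pi.single (r i) 1) ∈ N
    rw [eq_neg_of_add_eq_zero_left hsum, neg_mem_iff]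
    refine Ideal.sum_mem _ fun j hj => Ideal.mul_mem_left _ _ (Ideal.subset_span ⟨j, ?_, rfl⟩)
    simpa using hj
  have hcramer : M.det * E i = (M.transpose.adjugate.mulVec (M.transpose.mulVec E)) i := by
    rw [Matrix.mulVec_mulVec, Matrix.adjugate_mul, Matrix.smul_mulVec, Matrix.one_mulVec,
      Matrix.det_transpose, Pi.smul_apply, smul_eq_mul]
  rw [hcramer]
  exact Ideal.sum_mem _ fun k _ => Ideal.mul_mem_left _ _ (hrel k)

theorem generatedAt_of_not_fittingIdeal_le {I p : Ideal R} (hp : p.IsPrime) {l : ℕ}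
    (h : ¬ fittingIdeal I l ≤ p) : GeneratedAt ⊥ I p l := by
  simp only [fittingIdeal, iSup_le_iff, not_forall, Ideal.span_le, Set.not_subset] at h
  obtain ⟨n, π, rfl, _, ⟨v, r, hv, rfl⟩, hdp⟩ := h
  have hr : Function.Injective r := by
    intro i i' hii
    by_contra hne
    have hdet : (Matrix.of fun i k => v k (r i)).det = 0 :=
      Matrix.det_zero_of_row_eq hne (funext fun k => by rw [Matrix.of_apply, Matrix.of_apply, hii])
    exact hdp (hdet ▸ p.zero_mem)
  let F : Finset (Fin n) := (Finset.univ.image r)ᶜ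
  have hF : Ideal.ofList (F.toList.map fun j => π (Pi.single j 1)) =
      Ideal.span ((fun j => π (Pi.single j 1)) '' (Set.range r)ᶜ) := by
    rw [Ideal.ofList]
    congr 1
    ext x
    simp [F]
  refine ⟨F.toList.map fun j => π (Pi.single j 1), ?_, ?_, ?_⟩
  · rintro _ hx
    obtain ⟨j, -, rfl⟩ := List.mem_map.1 hx
    exact ⟨_, rfl⟩
  · rw [List.length_map, Finset.length_toList, Finset.card_compl,
      Finset.card_image_of_injective _ hr, Finset.card_univ, Fintype.card_fin, Fintype.card_fin]
    omega
  · rintro _ ⟨w, rfl⟩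
    rw [map_eq_sum_mul_single, bot_sup_eq, hF]
    refine Ideal.sum_mem _ fun j _ => Ideal.mul_mem_left _ _ ?_
    by_cases hj : j ∈ Set.range r
    · obtain ⟨i, rfl⟩ := hj
      exact (mem_saturationAt hp).2 ⟨_, hdp, det_mul_single_mem_span hr hv i⟩
    · exact le_saturationAt _ _ (Ideal.subset_span ⟨j, hj, rfl⟩)

end FittingIdeals

section ReductionsBoundingGamma

variable {R : Type u} [CommRing R] [IsNoetherianRing R] [IsLocalRing R] {I J p : Ideal R}
  {L : List R} {a : R} {l t : ℕ}

theorem IsUnmixedResidual.natHeight_le_of_residual_cons (hL : IsUnmixedResidual I L)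
    (ha : IsReduction (Ideal.ofList (a :: L)) I) (hp : (residual I (a :: L)).IsAssociatedPrime p) :
    natHeight p ≤ L.length + 1 := by
  have haI : a ∈ I := ha.1 (mem_ofList List.mem_cons_self)
  rw [residual, colon_eq_colon_of_inf_le (ofList_cons_le_residual_sup I a L)
    (hL.sup_inf_le haI)] at hp
  exact hL.natHeight_le_of_sup a p (hL.isSMulRegular_of_isReduction ha)
    (isAssociatedPrime_of_colon hp)

theorem gamma_le_card {ι : Type*} [Fintype ι] {F : ι → Ideal R} (hF : ∀ i, IsReduction (F i) I)
    (h : ⨅ i, F i ≤ core I) : gamma I ≤ (Fintype.card ι : ℕ∞) := by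
  choose G hGF hG using fun i => exists_isMinimalReduction_le (hF i)
  let e := (Fintype.equivFin ι).symm
  refine sInf_le ⟨Fintype.card ι, rfl, fun j => G (e j), fun j => hG _, le_antisymm ?_ ?_⟩
  · exact le_iInf fun j => core_le_of_isReduction (hG _).1
  · rw [e.iInf_comp]
    exact (iInf_mono hGF).trans h

variable [Infinite (ResidueField R)]

/-- If the special fiber of `I` drops dimension at `p`, then already fewer than `l` generic elements
of `J` generate a reduction of `I` locally at `p`. -/
theorem StandingHypotheses.not_colon_le_of_fiberDim_map_le [hp : p.IsPrime]
    (hI : StandingHypotheses I l) (hJ : IsReduction J I) {e : ℕ} (hel : e < l)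
    (he : fiberDim (I.map (algebraMap R (Localization.AtPrime p))) ≤ ((e : ℕ∞) : WithBot ℕ∞)) :
    ¬ J.colon (I : Set R) ≤ p := by
  set φ := algebraMap R (Localization.AtPrime p)
  have : IsNoetherianRing (Localization.AtPrime p) :=
    IsLocalization.isNoetherianRing p.primeCompl _ inferInstance
  obtain ⟨T, ⟨hT, hfib⟩, hlen, hTJ⟩ := exists_list_of_generic (J := J) e
    (fun T => IsResidualSequence I l T ∧ IsFiberGeneric φ (I.map φ) T e)
    ⟨hI.isResidualSequence_nil le_rfl, isFiberGeneric_nil φ he⟩ fun T hT hlt _ =>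
      (hT.1.generic_cons hI le_rfl hJ (fun q hq hIq hql =>
        hI.not_colon_le hJ hql.le hq hIq rfl (hI.generatedAt q hq hIq hql)) (by omega)).and
      (hT.2.generic_cons hT.1.isPartialResidual.mem hJ)
  obtain ⟨-, r, hr⟩ := hfib.isReduction hT.isPartialResidual.mem hlen.ge
  have hpow : I ^ (r + 1) ≤ saturationAt p (Ideal.ofList T) := by
    rw [le_saturationAt_iff_localization hp, Ideal.map_pow, hr]
    exact Ideal.mul_le_left
  refine mt (Submodule.colon_mono (ofList_le_iff.2 hTJ) le_rfl).trans ?_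
  exact (hT.isUnmixedResidual hI le_rfl (hlen ▸ hel)).not_residual_le hp
    (hpow.trans (saturationAt_mono _ (le_colon _ I)))

theorem IsMinimalReduction.natHeight_eq_of_isAssociatedPrime_colon (hJ : IsMinimalReduction J I)
    (hI : StandingHypotheses I l) (hl : fiberDim I = ((l : ℕ∞) : WithBot ℕ∞)) (hl0 : 0 < l)
    (hp : (J.colon (I : Set R)).IsAssociatedPrime p) : natHeight p = l := by
  have hJp : J.colon (I : Set R) ≤ p := le_of_isAssociatedPrime hp
  have hIp : I ≤ p := le_of_isReduction hp.1 hJ.1 ((le_colon J I).trans hJp)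
  refine le_antisymm ?_ (not_lt.1 fun hlt =>
    hI.not_colon_le hJ.1 hlt.le hp.1 hIp rfl (hI.generatedAt p hp.1 hIp hlt) hJp)
  obtain ⟨A, hA, hlen, rfl⟩ := hJ.exists_eq_ofList hI hl
  rcases A with _ | ⟨a, L⟩
  · exact absurd hlen hl0.ne
  · rw [← hlen]
    exact ((hA L (List.sublist_cons_self a L)).isUnmixedResidual hI
      (by simp [← hlen])).natHeight_le_of_residual_cons hJ.1 hp

theorem IsMinimalReduction.mem_QSet (hJ : IsMinimalReduction J I)
    (hI : StandingHypotheses I l) (hl : fiberDim I = ((l : ℕ∞) : WithBot ℕ∞)) (hl0 : 0 < l)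
    (hp : (J.colon (I : Set R)).IsAssociatedPrime p) :
    (⟨p, hp.1⟩ : PrimeSpectrum R) ∈ QSet I l := by
  have := hp.1
  have hJp : J.colon (I : Set R) ≤ p := le_of_isAssociatedPrime hp
  have hIp : I ≤ p := le_of_isReduction hp.1 hJ.1 ((le_colon J I).trans hJp)
  have hheight := hJ.natHeight_eq_of_isAssociatedPrime_colon hI hl hl0 hp
  refine ⟨?_, ?_, le_antisymm ?_ ?_⟩
  · by_contra hfit
    exact hI.not_colon_le hJ.1 le_rfl hp.1 hIp hheight
      (generatedAt_of_not_fittingIdeal_le hp.1 hfit) hJp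
  · exact (rDim_localization hp.1).trans (by rw [hheight])
  · obtain ⟨A, -, hlen, rfl⟩ := hJ.exists_eq_ofList hI hl
    have hred := hJ.1.map (algebraMap R (Localization.AtPrime p))
    rw [Ideal.map_ofList] at hred
    have hle := fiberDim_le hred
    rwa [List.length_map, hlen] at hle
  · obtain ⟨e, rfl⟩ := Nat.exists_eq_add_one.2 hl0
    refine not_lt.1 fun hlt => hI.not_colon_le_of_fiberDim_map_le hJ.1 e.lt_succ_self ?_ hJp
    exact ENat.WithBot.lt_add_one_iff.1 (by exact_mod_cast hlt)

theorem gamma_le_of_forall_generatedAt (hI : StandingHypotheses I l)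
    (hl : fiberDim I = ((l : ℕ∞) : WithBot ℕ∞)) (hJ : IsMinimalReduction J I)
    (hK : J.colon (I : Set R) * I ≤ core I)
    (h : ∀ p, (J.colon (I : Set R)).IsAssociatedPrime p →
      GeneratedAt (J.colon (I : Set R)) ((J.colon (I : Set R)).colon (p : Set R)) p t) :
    gamma I ≤ l * t + 1 := by
  obtain ⟨A, hA, hlen, rfl⟩ := hJ.exists_eq_ofList hI hl
  have hex (i : Fin A.length) : ∃ F : Fin t → Ideal R,
      (∀ j, IsReduction (F j) I ∧ Ideal.ofList (A.eraseIdx i) ≤ F j) ∧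
      ∀ c, (∀ j, c * A.get i ∈ F j) → c ∈ residual I A := by
    have hAi := ofList_get_cons_eraseIdx A i
    have hres : residual I (A.get i :: A.eraseIdx i) = residual I A := by rw [residual, hAi]
    obtain ⟨F, hF, hFK⟩ := (hA _ (List.eraseIdx_sublist A i)).exists_forall_mul_mem_imp_mem_residual
      hI ((List.length_eraseIdx_add_one i.2).trans hlen) (hAi ▸ hJ.1) (hres ▸ hK) t (𝔠 := ⊤)
      (by simpa only [hres, top_inf_eq] using h)
    exact ⟨F, hF, fun c hc => hres ▸ hFK c trivial hc⟩
  choose F hF hFK using hex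
  have hcard := gamma_le_card (I := I) (F := fun o : Option (Fin A.length × Fin t) =>
    o.elim (Ideal.ofList A) fun x => F x.1 x.2)
    (by rintro (_ | x); exacts [hJ.1, (hF x.1 x.2).1]) fun x hx => by
      rw [Ideal.mem_iInf] at hx
      obtain ⟨c, hc⟩ := exists_eq_sum_mul_get (hx none)
      rw [hc]
      refine Ideal.sum_mem _ fun i _ => hK (Ideal.mul_mem_mul (hFK i _ fun j => ?_)
        (hJ.1.1 (mem_ofList (A.get_mem i))))
      have hsub := (hF i j).2 (sub_mul_get_mem_ofList_eraseIdx hc i)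
      simpa using (F i j).sub_mem (hx (some (i, j))) hsub
  simpa [hlen] using hcard

theorem gamma_le_mul_sSup_qType_add_one (hI : StandingHypotheses I l)
    (hl : fiberDim I = ((l : ℕ∞) : WithBot ℕ∞)) (hJ : IsMinimalReduction J I)
    (hK : J.colon (I : Set R) * I ≤ core I) :
    gamma I ≤ (l : ℕ∞) * sSup ({t : ℕ∞ | ∃ p ∈ QSet I l,
      t = qType (Localization.AtPrime p.asIdeal) ((J.colon (I : Set R)).map
        (algebraMap R (Localization.AtPrime p.asIdeal)))} ∪ {0}) + 1 := by
  set s := sSup ({t : ℕ∞ | ∃ p ∈ QSet I l,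
      t = qType (Localization.AtPrime p.asIdeal) ((J.colon (I : Set R)).map
        (algebraMap R (Localization.AtPrime p.asIdeal)))} ∪ {0}) with hs
  rcases Nat.eq_zero_or_pos l with rfl | hl0
  · obtain ⟨A, -, hlen, rfl⟩ := hJ.exists_eq_ofList hI hl
    obtain rfl := List.length_eq_zero_iff.1 hlen
    simpa using gamma_le_card (F := fun _ : Unit => Ideal.ofList []) (fun _ => hJ.1) (by simp)
  rcases eq_or_ne s ⊤ with htop | htop
  · rw [htop, ENat.mul_top (by exact_mod_cast hl0.ne'), top_add]
    exact le_top
  obtain ⟨t, ht⟩ := ENat.ne_top_iff_exists.1 htop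
  rw [← ht]
  refine gamma_le_of_forall_generatedAt hI hl hJ hK fun p hp => ?_
  have := hp.1
  refine generatedAt_colon_of_qType_le hp ?_
  rw [ht]
  exact le_sSup (Or.inl ⟨⟨p, hp.1⟩, hJ.mem_QSet hI hl hl0 hp, rfl⟩)

end ReductionsBoundingGamma

section RingEquivInvariance

variable {R S : Type u} [CommRing R] [CommRing S] {I K : Ideal R} {s : ℕ} (e : R ≃+* S)

theorem map_colon_ringEquiv (A I : Ideal R) :
    (A.colon (I : Set R)).map e = (A.map e).colon ((I.map e : Ideal S) : Set S) := by
  ext y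
  simp only [← Ideal.comap_symm, Ideal.mem_comap, mem_colon_iff, e.symm.surjective.forall, map_mul]

theorem ht_map_ringEquiv (I : Ideal R) : ht (I.map e) = ht I := by
  refine Equiv.iInf_congr (PrimeSpectrum.comapEquiv e).symm.toEquiv fun p =>
    iInf_congr_Prop Ideal.map_le_iff_le_comap.symm fun _ => ?_
  exact ringKrullDim_eq_of_ringEquiv
    (Localization.localRingEquiv (p.asIdeal.comap e) p.asIdeal e rfl)

theorem IsGeometricRI.map_ringEquiv (h : IsGeometricRI I K s) :
    IsGeometricRI (I.map e) (K.map e) s := by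
  classical
  obtain ⟨⟨hne, hIs, hsK, A, hAI, ⟨F, hF, rfl⟩, rfl⟩, hIK⟩ := h
  refine ⟨⟨?_, ?_, ?_, _, Ideal.map_mono hAI, ⟨F.image e, Finset.card_image_le.trans hF, ?_⟩,
    map_colon_ringEquiv e _ _⟩, ?_⟩
  · rwa [Ne, Ideal.eq_top_iff_one, ← map_one e, Ideal.apply_mem_of_equiv_iff,
      ← Ideal.eq_top_iff_one]
  · rwa [ht_map_ringEquiv]
  · rwa [ht_map_ringEquiv]
  · rw [Finset.coe_image, Ideal.map_span]
  · rwa [← Ideal.map_sup, ht_map_ringEquiv]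

theorem qDepth_le_qDepth_map_ringEquiv [IsLocalRing R] [IsLocalRing S] (K : Ideal R) :
    qDepth R K ≤ qDepth S (K.map e) := by
  refine sSup_le_sSup ?_
  rintro n ⟨rs, hmem, hreg, rfl⟩
  refine ⟨rs.map e, ?_, ?_, by simp⟩
  · intro y hy
    obtain ⟨x, hx, rfl⟩ := List.mem_map.1 hy
    rw [mem_maximalIdeal, mem_nonunits_iff, MulEquiv.isUnit_map]
    exact hmem x hx
  · refine (AddEquiv.isRegular_congr (e := (Ideal.quotientEquiv K (K.map e) e rfl).toAddEquiv)
      ?_).1 hreg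
    refine List.forall₂_map_right_iff.2 (List.forall₂_same.2 fun x _ y => ?_)
    obtain ⟨y, rfl⟩ := Ideal.Quotient.mk_surjective y
    exact congrArg (Ideal.Quotient.mk _) (map_mul e x y)

theorem QuotS2.map_ringEquiv (h : QuotS2 K) : QuotS2 (K.map e) := by
  intro q hq hKq
  have hS2 := h (q.comap e) inferInstance (Ideal.map_le_iff_le_comap.1 hKq)
  let eLoc := Localization.localRingEquiv (q.comap e) q e rfl
  have hmap : ((K.map (algebraMap R (Localization.AtPrime (q.comap e)))).map eLoc) =
      (K.map e).map (algebraMap S (Localization.AtPrime q)) := by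
    change (K.map (algebraMap R _)).map
      (Localization.localRingHom (q.comap e) q (e : R →+* S) rfl) = (K.map (e : R →+* S)).map _
    rw [Ideal.map_map, Ideal.map_map]
    congr 1
    ext x
    exact Localization.localRingHom_to_map _ _ _ rfl x
  rw [← hmap]
  refine le_trans (min_le_min_left _ ?_) (hS2.trans (WithBot.coe_le_coe.2
    (qDepth_le_qDepth_map_ringEquiv eLoc _)))
  exact (ringKrullDim_eq_of_ringEquiv (Ideal.quotientEquiv _ _ eLoc rfl)).ge

theorem WeaklyResS2.map_ringEquiv (h : WeaklyResS2 I s) : WeaklyResS2 (I.map e) s := by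
  intro i hi K hK
  have hK' := hK.map_ringEquiv e.symm
  rw [Ideal.map_symm, Ideal.map_symm, Ideal.comap_map_of_bijective e e.bijective] at hK'
  have := (h i hi _ hK').map_ringEquiv e
  rwa [Ideal.map_comap_of_surjective e e.surjective] at this

end RingEquivInvariance

section StandingHypotheses

variable {R : Type u} [CommRing R] {I : Ideal R} {g l s : ℕ}

theorem ne_top_of_ht_eq_natCast (h : ht I = (g : WithBot ℕ∞)) : I ≠ ⊤ := by
  rintro rfl
  have htop : ht (⊤ : Ideal R) = ⊤ :=
    iInf₂_eq_top.2 fun p hp => absurd (top_le_iff.1 hp) p.2.ne_top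
  exact ENat.natCast_ne_top g (WithBot.coe_inj.1 (h.symm.trans htop))

theorem bijective_algebraMap_comp_C [IsLocalRing R] {σ : Type v} [IsEmpty σ]
    [((maximalIdeal R).map (MvPolynomial.C (σ := σ))).IsPrime] :
    Function.Bijective ((algebraMap (MvPolynomial σ R) (Localization.AtPrime
      ((maximalIdeal R).map (MvPolynomial.C (σ := σ))))).comp MvPolynomial.C) := by
  set P := (maximalIdeal R).map (MvPolynomial.C (σ := σ))
  have hC : Function.Bijective (MvPolynomial.C (σ := σ) (R := R)) :=
    ⟨MvPolynomial.C_injective _ _, MvPolynomial.C_surjective _⟩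
  have hunit : P.primeCompl ≤ IsUnit.submonoid (MvPolynomial σ R) := fun x hx => by
    obtain ⟨r, rfl⟩ := hC.2 x
    refine IsUnit.map _ (of_not_not fun hr => hx (Ideal.mem_map_of_mem _ hr))
  have hloc : Function.Bijective (algebraMap (MvPolynomial σ R) (Localization.AtPrime P)) := by
    convert (IsLocalization.atUnits _ P.primeCompl hunit (S := Localization.AtPrime P)).bijective
    ext x
    exact (AlgEquiv.commutes _ x).symm
  exact hloc.comp hC

theorem UnivWeaklyResS2.weaklyResS2 [IsLocalRing R] (h : UnivWeaklyResS2 I s) :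
    WeaklyResS2 I s := by
  have : ((maximalIdeal R).map (MvPolynomial.C (σ := Fin 0))).IsPrime :=
    Ideal.map_isPrime_of_equiv (MvPolynomial.isEmptyRingEquiv R (Fin 0)).symm
  let e := RingEquiv.ofBijective _ (bijective_algebraMap_comp_C (R := R) (σ := Fin 0))
  have hS2 := WeaklyResS2.map_ringEquiv e.symm (h 0 this)
  rw [Ideal.map_symm] at hS2
  exact (Ideal.comap_map_of_bijective e e.bijective (I := I)) ▸ hS2

theorem Gcond.generatedAt [IsNoetherianRing R] (hG : Gcond I l) (q : Ideal R) (hq : q.IsPrime)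
    (hI : I ≤ q) (hlt : natHeight q < l) : GeneratedAt ⊥ I q (natHeight q) := by
  have hmu := hG ⟨q, hq⟩ hI ((rDim_localization hq).trans_lt (by exact_mod_cast hlt))
  exact generatedAt_of_muE_map_le (by exact_mod_cast hmu.trans_eq (rDim_localization hq))

theorem standingHypotheses_of_isCMLocalRing [IsNoetherianRing R] [IsLocalRing R]
    (hCM : IsCMLocalRing R) (hI : I ≠ ⊤) (hG : Gcond I l) (hS2 : WeaklyResS2 I (l - 1)) :
    StandingHypotheses I l where
  depthGE := .of_isCMLocalRing hCM
  ne_top := hI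
  generatedAt := hG.generatedAt
  weaklyResS2 := hS2

end StandingHypotheses

theorem statement5_general {R : Type u} [CommRing R] [IsNoetherianRing R] [IsLocalRing R]
    [Infinite (ResidueField R)] (hCM : IsCMLocalRing R) (I : Ideal R) (hI : I ≠ ⊤) (l : ℕ)
    (hl : fiberDim I = (l : WithBot ℕ∞)) (hG : Gcond I l) (hS2 : WeaklyResS2 I (l - 1)) :
    ((∃ J, IsMinimalReduction J I ∧ Submodule.colon J I * I ≤ core I) ↔
      (∀ J, IsMinimalReduction J I →
        Submodule.colon J I * J = Submodule.colon J I * I ∧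
        Submodule.colon J I * I = core I)) ∧
    ((∃ J, IsMinimalReduction J I ∧ Submodule.colon J I * I ≤ core I) ↔
      (∀ J₁ J₂, IsMinimalReduction J₁ I → IsMinimalReduction J₂ I →
        Submodule.colon J₁ I = Submodule.colon J₂ I)) ∧
    ((∃ J, IsMinimalReduction J I ∧ Submodule.colon J I * I ≤ core I) →
      ∀ J, IsMinimalReduction J I →
        gamma I ≤ (l : ℕ∞) *
          sSup ({t : ℕ∞ | ∃ p ∈ QSet I l,
            t = qType (Localization.AtPrime p.asIdeal)
              (Ideal.map (algebraMap R (Localization.AtPrime p.asIdeal))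
                (Submodule.colon J I))} ∪ {0}) + 1) := by
  have hI : StandingHypotheses I l := standingHypotheses_of_isCMLocalRing hCM hI hG hS2
  have hl : fiberDim I = ((l : ℕ∞) : WithBot ℕ∞) := hl
  obtain ⟨J₀, -, hJ₀⟩ := exists_isMinimalReduction_le (isReduction_self I)
  have hcore : (∃ J, IsMinimalReduction J I ∧ Submodule.colon J I * I ≤ core I) →
      ∀ J, IsMinimalReduction J I → Submodule.colon J I * I ≤ core I := by
    rintro ⟨J, hJ, hK⟩ J' hJ'
    rwa [colon_eq_of_mul_le_core hI hl hJ hJ' hK]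
  refine ⟨⟨fun h J hJ => ?_, fun h => ?_⟩, ⟨fun h J₁ J₂ hJ₁ hJ₂ => ?_, fun h => ?_⟩,
    fun h J hJ => ?_⟩
  · exact colon_mul_eq_core hI hl hJ (hcore h J hJ)
  · exact ⟨J₀, hJ₀, (h J₀ hJ₀).2.le⟩
  · exact colon_eq_of_mul_le_core hI hl hJ₂ hJ₁ (hcore h J₂ hJ₂)
  · refine ⟨J₀, hJ₀, le_sInf fun J hJ => ?_⟩
    rw [h J₀ J hJ₀ hJ, Ideal.mul_le]
    exact fun x hx y hy => mem_colon_iff.1 hx y hy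
  · exact gamma_le_mul_sSup_qType_add_one hI hl hJ (hcore h J hJ)

/-- Theorem 2.6(1): for a `G_ℓ`, universally weakly `(ℓ-1)`-residually `S₂` ideal in
a local Cohen–Macaulay ring with infinite residue field, conditions (a), (b), (c)
are equivalent, and they imply the stated bound on `γ(I)`. -/
theorem statement5 {R : Type u} [CommRing R] [IsNoetherianRing R] [IsLocalRing R]
    (hCM : IsCMLocalRing R) (hres : Infinite (ResidueField R))
    (I : Ideal R) (g l : ℕ)
    (hg : ht I = (g : WithBot ℕ∞)) (hl : fiberDim I = (l : WithBot ℕ∞))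
    (hG : Gcond I l) (hS2 : UnivWeaklyResS2 I (l - 1)) :
    ((∃ J, IsMinimalReduction J I ∧ Submodule.colon J I * I ≤ core I) ↔
      (∀ J, IsMinimalReduction J I →
        Submodule.colon J I * J = Submodule.colon J I * I ∧
        Submodule.colon J I * I = core I)) ∧
    ((∃ J, IsMinimalReduction J I ∧ Submodule.colon J I * I ≤ core I) ↔
      (∀ J₁ J₂, IsMinimalReduction J₁ I → IsMinimalReduction J₂ I →
        Submodule.colon J₁ I = Submodule.colon J₂ I)) ∧
    ((∃ J, IsMinimalReduction J I ∧ Submodule.colon J I * I ≤ core I) →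
      ∀ J, IsMinimalReduction J I →
        gamma I ≤ (l : ℕ∞) *
          sSup ({t : ℕ∞ | ∃ p ∈ QSet I l,
            t = qType (Localization.AtPrime p.asIdeal)
              (Ideal.map (algebraMap R (Localization.AtPrime p.asIdeal))
                (Submodule.colon J I))} ∪ {0}) + 1) := by
  exact statement5_general hCM I (ne_top_of_ht_eq_natCast hg) l hl hG hS2.weaklyResS2

end CPU
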